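/- Let d ≥ 2, 0 < γ < 1, and let D₀ ⊂ ℝ^d be a bounded C^{1+γ} domain. Then there exist a map X : ℝ^d × [0,1) → ℝ^d and, for each t ∈ [0,1), a bounded C^{1+γ} domain D_t := X(D₀,t), such that: X(α,0) = α for all α ∈ ℝ^d; for each t ∈ [0,1) the map X(·,t) is a homeomorphism of ℝ^d onto itself; and for every α ∈ ℝ^d the curve t ↦ X(α,t) is differentiable on [0,1) with ∂_t X(α,t) = v(X(α,t),t), where v(x,t) = -(1/(1-t)) ∫_{D_t} ∇N(x-y) dy. In particular, the aggregation patch ρ(x,t) = (1/(1-t)) χ_{D_t}(x) evolving from ρ(·,0) = χ_{D₀} has a boundary ∂D_t that remains of class C^{1+γ} for all 0 ≤ t < 1. -/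

import Mathlib

open MeasureTheory Metric Set
open scoped RealInnerProductSpace

noncomputable def sphereVol (d : ℕ) : ℝ :=
  d * (volume (Metric.ball (0 : EuclideanSpace ℝ (Fin d)) 1)).toReal

noncomputable def gradN (d : ℕ) (y : EuclideanSpace ℝ (Fin d)) : EuclideanSpace ℝ (Fin d) :=
  (sphereVol d * ‖y‖ ^ d)⁻¹ • y

noncomputable def hessN (d : ℕ) (z w : EuclideanSpace ℝ (Fin d)) : EuclideanSpace ℝ (Fin d) :=
  (sphereVol d)⁻¹ • ((‖z‖ ^ d)⁻¹ • w - ((d : ℝ) * (‖z‖ ^ (d + 2))⁻¹ * ⟪z, w⟫) • z)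

/-- `Φ` is a defining function of class `C^{1+γ}` for the set `D`. -/
def IsDefining (d : ℕ) (γ : ℝ) (D : Set (EuclideanSpace ℝ (Fin d)))
    (Φ : EuclideanSpace ℝ (Fin d) → ℝ) : Prop :=
  ContDiff ℝ 1 Φ ∧
  (∃ K : ℝ, ∀ x y, ‖gradient Φ x - gradient Φ y‖ ≤ K * ‖x - y‖ ^ γ) ∧
  D = {x | Φ x < 0} ∧
  frontier D = {x | Φ x = 0} ∧
  ∀ x ∈ frontier D, gradient Φ x ≠ 0

/-- `D` is a bounded domain of class `C^{1+γ}`. -/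
def IsC1Domain (d : ℕ) (γ : ℝ) (D : Set (EuclideanSpace ℝ (Fin d))) : Prop :=
  IsOpen D ∧ Bornology.IsBounded D ∧ ∃ Φ, IsDefining d γ D Φ

/-!
Measured in the time `s = -log (1 - t) / σ`, where `σ` is the area of the unit sphere, the flow
solves `dX/ds = -∫_D K (X - y) dy` with `K z = z / ‖z‖ ^ d`.

The kernel is regularised to `K_ε`, the patch is replaced by a smooth density `ρ = θ (Φ)` with
potential `F = Θ (Φ)`, so that `∇F = ρ ∇Φ`, and the flow by explicit Euler steps `Y = id - τ v`.
Writing `S = ∇v` and `g = ∇Φ`, the gradient `g'` of the new defining function satisfies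
`g' ∘ Y - g = τ (S g - ∇K_ε * (ρ g)) + τ S (g' ∘ Y - g)`, because `ρ g = ∇F` and the derivatives of
`K_ε` are symmetric. The commutator
`S g (x) - (∇K_ε * (ρ g)) (x) = ∫ ρ(y) ∇K_ε (x - y) (g x - g y) dy` is bounded in `C^γ` by
`(1 + ‖S‖_∞) [g]_γ`, and `‖S‖_∞` grows only like the logarithm of `[g]_γ`: at distances below
`δ ~ [g]_γ^(-1/γ)` either `‖g x‖` is large, and then the commutator bound at `x` and the trace
control `S x`, or `ρ` is constant near `x`, and then isotropy of the kernel cancels the near part.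
A Gronwall inequality `u' ≤ C u (1 + log u)` keeps `[g]_γ` finite, and `‖g‖` away from zero near the
boundary, for all `s`, uniformly in `ε` and `τ`; a diagonal limit gives the flow.
-/

namespace AggregationPatch

/-! ### The regularised kernel -/

lemma inv_pow_sub_inv_pow_le (n : ℕ) {a b t q : ℝ} (ht : 0 < t) (hta : t ≤ a) (hab : a ≤ b)
    (hq : b ^ 2 - a ^ 2 ≤ q) : (a ^ n)⁻¹ - (b ^ n)⁻¹ ≤ n * q * (t ^ (n + 2))⁻¹ := by
  have ha : 0 < a := ht.trans_le hta
  have hb : 0 < b := ha.trans_le hab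
  have hratio : 0 ≤ a / b := by positivity
  have hratio' : a / b ≤ 1 := (div_le_one hb).2 hab
  have hbernoulli : 1 - (a / b) ^ n ≤ n * (1 - a / b) := by
    linarith [one_add_mul_sub_le_pow (by linarith : -1 ≤ a / b) n]
  have hdefect : 1 - a / b ≤ q / t ^ 2 := by
    rw [le_div_iff₀ (by positivity)]
    calc (1 - a / b) * t ^ 2 ≤ (1 - a / b) * (b * (a + b)) := by
          rw [sq]
          gcongr <;> linarith
      _ = b ^ 2 - a ^ 2 := by field_simp; ring
      _ ≤ q := hq
  calc (a ^ n)⁻¹ - (b ^ n)⁻¹ = (a ^ n)⁻¹ * (1 - (a / b) ^ n) := by rw [div_pow]; field_simp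
    _ ≤ (t ^ n)⁻¹ * (n * (q / t ^ 2)) := by
        gcongr
        · exact sub_nonneg.2 (pow_le_one₀ hratio hratio')
        · exact hbernoulli.trans (by gcongr)
    _ = n * q * (t ^ (n + 2))⁻¹ := by field_simp; ring

section Kernel

variable {E : Type*} [NormedAddCommGroup E]

/-- The regularised norm `√(‖z‖² + r²)`, equal to the norm for `r = 0`. -/
noncomputable def regNorm (r : ℝ) (z : E) : ℝ := √(‖z‖ ^ 2 + r ^ 2)

lemma regNorm_nonneg (r : ℝ) (z : E) : 0 ≤ regNorm r z := Real.sqrt_nonneg _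

lemma sq_regNorm (r : ℝ) (z : E) : regNorm r z ^ 2 = ‖z‖ ^ 2 + r ^ 2 :=
  Real.sq_sqrt (by positivity)

lemma regNorm_pos {r : ℝ} (hr : 0 < r) (z : E) : 0 < regNorm r z :=
  Real.sqrt_pos.2 (by positivity)

lemma norm_le_regNorm (r : ℝ) (z : E) : ‖z‖ ≤ regNorm r z :=
  Real.le_sqrt_of_sq_le (by nlinarith [sq_nonneg r])

lemma le_regNorm (r : ℝ) (z : E) : r ≤ regNorm r z :=
  Real.le_sqrt_of_sq_le (by nlinarith [sq_nonneg ‖z‖])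

lemma regNorm_zero (z : E) : regNorm 0 z = ‖z‖ := by
  simp [regNorm]

lemma regNorm_le_regNorm {r s : ℝ} (hr : 0 ≤ r) (hrs : r ≤ s) (z : E) :
    regNorm r z ≤ regNorm s z :=
  Real.sqrt_le_sqrt (add_le_add_right (pow_le_pow_left₀ hr hrs 2) _)

lemma regNorm_le_two_mul {r : ℝ} {z z' : E} (h : ‖z - z'‖ ≤ r) :
    regNorm r z' ≤ 2 * regNorm r z := by
  have hz' : ‖z'‖ ≤ ‖z‖ + r := (norm_le_norm_add_norm_sub z z').trans (by gcongr)
  refine le_of_sq_le_sq ?_ (mul_nonneg zero_le_two (regNorm_nonneg r z))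
  rw [mul_pow, sq_regNorm, sq_regNorm]
  nlinarith [sq_nonneg (‖z‖ - r), norm_nonneg z', norm_nonneg z]

lemma continuous_regNorm : Continuous fun p : ℝ × E => regNorm p.1 p.2 := by
  unfold regNorm
  fun_prop

lemma continuous_inv_regNorm_pow {r : ℝ} (hr : 0 < r) (n : ℕ) :
    Continuous fun z : E => (regNorm r z ^ n)⁻¹ :=
  ((continuous_regNorm.comp (Continuous.prodMk_right r)).pow n).inv₀ fun z =>
    (pow_pos (regNorm_pos hr z) n).ne'

/-- The divergence of the regularised kernel in dimension `n`, an approximate identity as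
`r → 0`. -/
noncomputable def regKernelDiv (n : ℕ) (r : ℝ) (z : E) : ℝ :=
  n * r ^ 2 * (regNorm r z ^ (n + 2))⁻¹

lemma regKernelDiv_nonneg (n : ℕ) (r : ℝ) (z : E) : 0 ≤ regKernelDiv n r z := by
  have := regNorm_nonneg r z
  unfold regKernelDiv
  positivity

lemma continuous_regKernelDiv (n : ℕ) {r : ℝ} (hr : 0 < r) :
    Continuous (regKernelDiv n r : E → ℝ) :=
  continuous_const.mul (continuous_inv_regNorm_pow hr (n + 2))

variable [InnerProductSpace ℝ E]

/-- The regularised Newtonian kernel `z / (‖z‖² + r²)^(n/2)`, without the normalising constant; in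
dimension `n` its value at `r = 0` is a multiple of `∇N`. -/
noncomputable def regKernel (n : ℕ) (r : ℝ) (z : E) : E := (regNorm r z ^ n)⁻¹ • z

/-- The derivative of the regularised kernel. -/
noncomputable def regKernelDeriv (n : ℕ) (r : ℝ) (z : E) : E →L[ℝ] E :=
  (regNorm r z ^ n)⁻¹ • ContinuousLinearMap.id ℝ E -
    ((n : ℝ) * (regNorm r z ^ (n + 2))⁻¹) • (innerSL ℝ z).smulRight z

/-- The derivative of `z ↦ ⟪regKernelDeriv n r z u, w⟫`: the third derivative of the regularised
potential. -/
noncomputable def regKernelDeriv₂ (n : ℕ) (r : ℝ) (z u w : E) : E →L[ℝ] ℝ :=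
  (-(n : ℝ) * (regNorm r z ^ (n + 2))⁻¹) •
      (⟪u, w⟫ • innerSL ℝ z + ⟪z, w⟫ • innerSL ℝ u + ⟪z, u⟫ • innerSL ℝ w) +
    ((n : ℝ) * (n + 2) * (regNorm r z ^ (n + 4))⁻¹ * ⟪z, u⟫ * ⟪z, w⟫) • innerSL ℝ z

variable (n : ℕ)

lemma norm_regKernel_eq (r : ℝ) (z : E) : ‖regKernel n r z‖ = (regNorm r z ^ n)⁻¹ * ‖z‖ := by
  have := regNorm_nonneg r z
  rw [regKernel, norm_smul, Real.norm_of_nonneg (by positivity)]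

lemma regKernelDeriv_apply (r : ℝ) (z u : E) :
    regKernelDeriv n r z u =
      (regNorm r z ^ n)⁻¹ • u - ((n : ℝ) * (regNorm r z ^ (n + 2))⁻¹) • ⟪z, u⟫ • z := rfl

lemma inner_regKernelDeriv (r : ℝ) (z u w : E) :
    ⟪regKernelDeriv n r z u, w⟫ = (regNorm r z ^ n)⁻¹ * ⟪u, w⟫ -
      (n : ℝ) * (regNorm r z ^ (n + 2))⁻¹ * ⟪z, u⟫ * ⟪z, w⟫ := by
  simp only [regKernelDeriv_apply, inner_sub_left, real_inner_smul_left]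
  ring

lemma inner_regKernelDeriv_symm (r : ℝ) (z u w : E) :
    ⟪regKernelDeriv n r z u, w⟫ = ⟪u, regKernelDeriv n r z w⟫ := by
  rw [real_inner_comm (regKernelDeriv n r z w), inner_regKernelDeriv, inner_regKernelDeriv,
    real_inner_comm u w]
  ring

lemma norm_regKernelDeriv_le {r : ℝ} {z : E} (hz : 0 < regNorm r z) :
    ‖regKernelDeriv n r z‖ ≤ (1 + n) * (regNorm r z ^ n)⁻¹ := by
  refine ContinuousLinearMap.opNorm_le_bound _ (by positivity) fun u => ?_
  have hscalar : ‖(regNorm r z ^ n)⁻¹ • u‖ = (regNorm r z ^ n)⁻¹ * ‖u‖ := by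
    rw [norm_smul, Real.norm_of_nonneg (by positivity)]
  have hrankOne : ‖((n : ℝ) * (regNorm r z ^ (n + 2))⁻¹) • ⟪z, u⟫ • z‖
      ≤ n * (regNorm r z ^ n)⁻¹ * ‖u‖ := by
    have hzR := norm_le_regNorm r z
    rw [norm_smul, norm_smul, Real.norm_of_nonneg (by positivity)]
    calc (n : ℝ) * (regNorm r z ^ (n + 2))⁻¹ * (‖⟪z, u⟫‖ * ‖z‖)
        ≤ n * (regNorm r z ^ (n + 2))⁻¹ * ((regNorm r z * ‖u‖) * regNorm r z) := by
          gcongr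
          exact (norm_inner_le_norm z u).trans (by gcongr)
      _ = n * (regNorm r z ^ n)⁻¹ * ‖u‖ := by field_simp; ring
  rw [regKernelDeriv_apply]
  linarith [norm_sub_le ((regNorm r z ^ n)⁻¹ • u)
    (((n : ℝ) * (regNorm r z ^ (n + 2))⁻¹) • ⟪z, u⟫ • z)]

lemma trace_regKernelDeriv {r : ℝ} (hr : 0 < r) (z : E) {n : ℕ}
    (b : OrthonormalBasis (Fin n) ℝ E) :
    ∑ i, ⟪regKernelDeriv n r z (b i), b i⟫ = regKernelDiv n r z := by
  have hR := regNorm_pos hr z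
  have hsum : ∑ i, ⟪z, b i⟫ * ⟪z, b i⟫ = regNorm r z ^ 2 - r ^ 2 := by
    rw [sq_regNorm, add_sub_cancel_right, ← b.sum_sq_inner_left z]
    simp only [sq]
  simp only [inner_regKernelDeriv, real_inner_self_eq_norm_sq, b.norm_eq_one, mul_assoc,
    Finset.sum_sub_distrib, ← Finset.mul_sum, hsum, regKernelDiv]
  simp only [one_pow, mul_one, Finset.sum_const, Finset.card_univ, Fintype.card_fin, nsmul_eq_mul]
  field_simp
  ring

lemma hasFDerivAt_regNorm {r : ℝ} (hr : 0 < r) (z : E) :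
    HasFDerivAt (regNorm r) ((regNorm r z)⁻¹ • innerSL ℝ z) z := by
  have hsq : HasFDerivAt (fun z : E => ‖z‖ ^ 2 + r ^ 2) (2 • innerSL ℝ z) z :=
    (hasStrictFDerivAt_norm_sq z).hasFDerivAt.add_const (r ^ 2)
  refine (hsq.sqrt (by positivity)).congr_fderiv ?_
  have : √(‖z‖ ^ 2 + r ^ 2) ≠ 0 := (regNorm_pos hr z).ne'
  ext u
  simp [regNorm]
  field_simp

lemma hasFDerivAt_inv_regNorm_pow {r : ℝ} (hr : 0 < r) (z : E) :
    HasFDerivAt (fun z : E => (regNorm r z ^ n)⁻¹)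
      ((-(n : ℝ) * (regNorm r z ^ (n + 2))⁻¹) • innerSL ℝ z) z := by
  have hR := regNorm_pos hr z
  have hpow : HasDerivAt (fun t : ℝ => (t ^ n)⁻¹)
      (-(n * regNorm r z ^ (n - 1)) / (regNorm r z ^ n) ^ 2) (regNorm r z) :=
    (hasDerivAt_pow n (regNorm r z)).fun_inv (by positivity)
  refine (hpow.comp_hasFDerivAt z (hasFDerivAt_regNorm hr z)).congr_fderiv ?_
  rw [smul_smul]
  congr 1
  rcases n with _ | n
  · simp
  · rw [Nat.add_sub_cancel]
    field_simp
    ring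

lemma hasFDerivAt_regKernel {r : ℝ} (hr : 0 < r) (z : E) :
    HasFDerivAt (regKernel n r) (regKernelDeriv n r z) z := by
  refine ((hasFDerivAt_inv_regNorm_pow n hr z).smul (hasFDerivAt_id z)).congr_fderiv ?_
  ext1 u
  rw [regKernelDeriv_apply]
  simp
  module

lemma continuous_regKernel {r : ℝ} (hr : 0 < r) : Continuous (regKernel n r : E → E) :=
  (continuous_inv_regNorm_pow hr n).smul continuous_id

lemma continuous_regKernelDeriv {r : ℝ} (hr : 0 < r) :
    Continuous (regKernelDeriv n r : E → E →L[ℝ] E) := by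
  have hrankOne : Continuous fun z : E => (innerSL ℝ z).smulRight z :=
    ((ContinuousLinearMap.smulRightL ℝ E E).continuous.comp (innerSL ℝ).continuous).clm_apply
      continuous_id
  exact ((continuous_inv_regNorm_pow hr n).smul continuous_const).sub
    ((continuous_const.mul (continuous_inv_regNorm_pow hr (n + 2))).smul hrankOne)

/-- The derivative of `regKernelDiv`. -/
noncomputable def regKernelDivDeriv (n : ℕ) (r : ℝ) (z : E) : E →L[ℝ] ℝ :=
  (n * r ^ 2 * (-((n + 2 : ℕ) : ℝ) * (regNorm r z ^ (n + 2 + 2))⁻¹)) • innerSL ℝ z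

lemma hasFDerivAt_regKernelDiv {r : ℝ} (hr : 0 < r) (z : E) :
    HasFDerivAt (regKernelDiv n r) (regKernelDivDeriv n r z) z :=
  ((hasFDerivAt_inv_regNorm_pow (n + 2) hr z).const_mul (n * r ^ 2)).congr_fderiv (smul_smul ..)

lemma continuous_regKernelDivDeriv {r : ℝ} (hr : 0 < r) :
    Continuous (regKernelDivDeriv n r : E → E →L[ℝ] ℝ) :=
  (continuous_const.mul (continuous_const.mul (continuous_inv_regNorm_pow hr (n + 2 + 2)))).smul
    (innerSL ℝ).continuous

lemma norm_regKernelDivDeriv_le {r : ℝ} (hr : 0 < r) (z : E) :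
    ‖regKernelDivDeriv n r z‖ ≤ n * r ^ 2 * ((n + 2 : ℕ) * (r ^ (n + 3))⁻¹) := by
  have hR := regNorm_pos hr z
  rw [regKernelDivDeriv, norm_smul, innerSL_apply_norm, neg_mul, mul_neg, norm_neg,
    Real.norm_of_nonneg (by positivity)]
  have hdecay : (regNorm r z ^ (n + 2 + 2))⁻¹ * ‖z‖ ≤ (r ^ (n + 3))⁻¹ :=
    calc (regNorm r z ^ (n + 2 + 2))⁻¹ * ‖z‖
        ≤ (regNorm r z ^ (n + 2 + 2))⁻¹ * regNorm r z := by gcongr; exact norm_le_regNorm r z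
      _ = (regNorm r z ^ (n + 3))⁻¹ := by field_simp; ring
      _ ≤ (r ^ (n + 3))⁻¹ := by gcongr; exact le_regNorm r z
  calc _ = n * r ^ 2 * ((n + 2 : ℕ) * ((regNorm r z ^ (n + 2 + 2))⁻¹ * ‖z‖)) := by ring
    _ ≤ _ := by gcongr

lemma hasFDerivAt_inner_regKernelDeriv {r : ℝ} (hr : 0 < r) (z u w : E) :
    HasFDerivAt (fun z => ⟪regKernelDeriv n r z u, w⟫) (regKernelDeriv₂ n r z u w) z := by
  have hinner (v : E) : HasFDerivAt (fun z => ⟪z, v⟫) (innerSL ℝ v) z := by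
    refine (innerSL ℝ v).hasFDerivAt.congr_of_eventuallyEq (.of_forall fun y => ?_)
    rw [innerSL_apply_apply, real_inner_comm]
  simp only [inner_regKernelDeriv]
  refine (((hasFDerivAt_inv_regNorm_pow n hr z).mul_const ⟪u, w⟫).sub
    ((((hasFDerivAt_inv_regNorm_pow (n + 2) hr z).const_mul (n : ℝ)).mul (hinner u)).mul
      (hinner w))).congr_fderiv ?_
  ext p
  simp [regKernelDeriv₂]
  ring

lemma regKernelDeriv₂_symm (r : ℝ) (z u w p : E) :
    regKernelDeriv₂ n r z u w p = regKernelDeriv₂ n r z u p w := by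
  simp only [regKernelDeriv₂, add_apply, smul_apply, innerSL_apply_apply, smul_eq_mul]
  rw [real_inner_comm w p]
  ring

lemma continuous_regKernelDeriv₂ {r : ℝ} (hr : 0 < r) (u w p : E) :
    Continuous fun z => regKernelDeriv₂ n r z u w p := by
  have h₂ := continuous_inv_regNorm_pow (E := E) hr (n + 2)
  have h₄ := continuous_inv_regNorm_pow (E := E) hr (n + 4)
  simp only [regKernelDeriv₂, add_apply, smul_apply, innerSL_apply_apply]
  fun_prop

lemma norm_regKernelDeriv₂_le {r : ℝ} (hr : 0 < r) (z u w : E) :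
    ‖regKernelDeriv₂ n r z u w‖ ≤
      (n * (n + 5)) * (regNorm r z ^ (n + 1))⁻¹ * (‖u‖ * ‖w‖) := by
  have hR := regNorm_pos hr z
  refine ContinuousLinearMap.opNorm_le_bound _ (by positivity) fun p => ?_
  have hz (v : E) : |⟪z, v⟫| ≤ regNorm r z * ‖v‖ :=
    (abs_real_inner_le_norm z v).trans (by gcongr; exact norm_le_regNorm r z)
  have hcyclic : |⟪u, w⟫ * ⟪z, p⟫ + ⟪z, w⟫ * ⟪u, p⟫ + ⟪z, u⟫ * ⟪w, p⟫| ≤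
      3 * (regNorm r z * (‖u‖ * ‖w‖ * ‖p‖)) :=
    calc _ ≤ |⟪u, w⟫ * ⟪z, p⟫| + |⟪z, w⟫ * ⟪u, p⟫| + |⟪z, u⟫ * ⟪w, p⟫| := abs_add_three _ _ _
      _ ≤ (‖u‖ * ‖w‖) * (regNorm r z * ‖p‖) + (regNorm r z * ‖w‖) * (‖u‖ * ‖p‖)
          + (regNorm r z * ‖u‖) * (‖w‖ * ‖p‖) := by
        simp only [abs_mul]
        gcongr <;> first | exact hz _ | exact abs_real_inner_le_norm _ _
      _ = _ := by ring
  simp only [regKernelDeriv₂, add_apply, smul_apply, innerSL_apply_apply, smul_eq_mul]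
  rw [Real.norm_eq_abs]
  calc _ ≤ |(-(n : ℝ) * (regNorm r z ^ (n + 2))⁻¹) *
            (⟪u, w⟫ * ⟪z, p⟫ + ⟪z, w⟫ * ⟪u, p⟫ + ⟪z, u⟫ * ⟪w, p⟫)|
        + |(n : ℝ) * (n + 2) * (regNorm r z ^ (n + 4))⁻¹ * ⟪z, u⟫ * ⟪z, w⟫ * ⟪z, p⟫| :=
        abs_add_le _ _
    _ ≤ (n * (regNorm r z ^ (n + 2))⁻¹) * (3 * (regNorm r z * (‖u‖ * ‖w‖ * ‖p‖)))
        + (n : ℝ) * (n + 2) * (regNorm r z ^ (n + 4))⁻¹ * (regNorm r z * ‖u‖) *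
          (regNorm r z * ‖w‖) * (regNorm r z * ‖p‖) := by
        simp only [abs_mul, abs_neg, abs_inv, abs_pow, abs_of_pos hR, Nat.abs_cast]
        rw [abs_of_nonneg (by positivity : (0 : ℝ) ≤ (n : ℝ) + 2)]
        gcongr <;> exact hz _
    _ = _ := by field_simp; ring

lemma opNorm_le_of_abs_inner_le {B : E →L[ℝ] E} {C : ℝ} (hC : 0 ≤ C)
    (h : ∀ u w, |⟪B u, w⟫| ≤ C * (‖u‖ * ‖w‖)) : ‖B‖ ≤ C :=
  ContinuousLinearMap.opNorm_le_of_re_inner_le hC fun u w hu hw =>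
    (le_abs_self _).trans ((h u w).trans_eq (by rw [hu, hw, one_mul, mul_one]))

lemma norm_regKernelDeriv_sub_le {r : ℝ} (hr : 0 < r) {z z' : E} (h : ‖z - z'‖ ≤ r) :
    ‖regKernelDeriv n r z - regKernelDeriv n r z'‖ ≤
      (n * (n + 5) * 2 ^ (n + 1)) * (regNorm r z' ^ (n + 1))⁻¹ * ‖z - z'‖ := by
  have hR := regNorm_pos hr z'
  refine opNorm_le_of_abs_inner_le (by positivity) fun u w => ?_
  have hsegment : ∀ x ∈ segment ℝ z' z, ‖regKernelDeriv₂ n r x u w‖ ≤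
      (n * (n + 5)) * (2 ^ (n + 1) * (regNorm r z' ^ (n + 1))⁻¹) * (‖u‖ * ‖w‖) := by
    intro x hx
    have hRx := regNorm_pos hr x
    have hcompare : (regNorm r x ^ (n + 1))⁻¹ ≤ 2 ^ (n + 1) * (regNorm r z' ^ (n + 1))⁻¹ := by
      have := pow_le_pow_left₀ hR.le
        (regNorm_le_two_mul ((norm_sub_le_of_mem_segment hx).trans h)) (n + 1)
      rw [mul_pow] at this
      rwa [← div_eq_mul_inv, le_div_iff₀ (by positivity), inv_mul_le_iff₀ (by positivity),
        mul_comm]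
    exact (norm_regKernelDeriv₂_le n hr x u w).trans (by gcongr)
  have hmvt := (convex_segment z' z).norm_image_sub_le_of_norm_hasFDerivWithin_le
    (fun x _ => (hasFDerivAt_inner_regKernelDeriv n hr x u w).hasFDerivWithinAt) hsegment
    (left_mem_segment ℝ z' z) (right_mem_segment ℝ z' z)
  rw [Real.norm_eq_abs] at hmvt
  rw [sub_apply, inner_sub_left]
  exact hmvt.trans_eq (by ring)

lemma norm_regKernelDeriv_sub_le_of_le {r δ : ℝ} (hr : 0 ≤ r) (hrδ : r ≤ δ) {z : E} (hz : z ≠ 0) :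
    ‖regKernelDeriv n r z - regKernelDeriv n δ z‖ ≤
      (n * (n + 3)) * (δ ^ 2 * (‖z‖ ^ (n + 2))⁻¹) := by
  have hz0 : 0 < ‖z‖ := norm_pos_iff.2 hz
  have hmono := regNorm_le_regNorm hr hrδ z
  have hpos : 0 < regNorm r z := hz0.trans_le (norm_le_regNorm r z)
  have hdiff (m : ℕ) : |(regNorm r z ^ m)⁻¹ - (regNorm δ z ^ m)⁻¹| ≤
      m * δ ^ 2 * (‖z‖ ^ (m + 2))⁻¹ := by
    rw [abs_of_nonneg (sub_nonneg.2 (by gcongr))]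
    refine inv_pow_sub_inv_pow_le m hz0 (norm_le_regNorm r z) hmono ?_
    rw [sq_regNorm, sq_regNorm]
    nlinarith
  refine opNorm_le_of_abs_inner_le (by positivity) fun u w => ?_
  rw [sub_apply, inner_sub_left, inner_regKernelDeriv, inner_regKernelDeriv]
  calc _ = |((regNorm r z ^ n)⁻¹ - (regNorm δ z ^ n)⁻¹) * ⟪u, w⟫ -
          n * ((regNorm r z ^ (n + 2))⁻¹ - (regNorm δ z ^ (n + 2))⁻¹) * (⟪z, u⟫ * ⟪z, w⟫)| := by
        congr 1
        ring
    _ ≤ |((regNorm r z ^ n)⁻¹ - (regNorm δ z ^ n)⁻¹) * ⟪u, w⟫| +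
          |n * ((regNorm r z ^ (n + 2))⁻¹ - (regNorm δ z ^ (n + 2))⁻¹) * (⟪z, u⟫ * ⟪z, w⟫)| :=
        abs_sub _ _
    _ ≤ (n * δ ^ 2 * (‖z‖ ^ (n + 2))⁻¹) * (‖u‖ * ‖w‖) +
          n * ((n + 2 : ℕ) * δ ^ 2 * (‖z‖ ^ (n + 2 + 2))⁻¹) *
            ((‖z‖ * ‖u‖) * (‖z‖ * ‖w‖)) := by
        simp only [abs_mul, Nat.abs_cast]
        gcongr <;> first | exact hdiff _ | exact abs_real_inner_le_norm _ _
    _ = _ := by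
        push_cast
        field_simp
        ring

end Kernel

variable {d : ℕ}

local notation "ℝᵈ" => EuclideanSpace ℝ (Fin d)

section Weights

/-- The radial profile of the weights: `s ^ (p - d) / l ^ p` for `s ≤ l` and `l ^ q / s ^ (d + q)`
beyond, so that the integral over `ℝᵈ` does not depend on the length scale `l`. -/
noncomputable def radialProfile (d : ℕ) (p q l s : ℝ) : ℝ :=
  if s ≤ l then s ^ (p - d) * l ^ (-p) else s ^ (-(d : ℝ) - q) * l ^ q

/-- The radial weight with profile `radialProfile`; all singular integrals of the proof are
dominated by such weights. -/
noncomputable def scaleWeight (p q l : ℝ) (z : ℝᵈ) : ℝ := radialProfile d p q l ‖z‖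

lemma sphereVol_nonneg (d : ℕ) : 0 ≤ sphereVol d := by
  unfold sphereVol
  positivity

lemma pow_mul_radialProfile_of_le [NeZero d] {p q l s : ℝ} (hs : 0 < s) (hsl : s ≤ l) :
    s ^ (d - 1) * radialProfile d p q l s = s ^ (p - 1) * l ^ (-p) := by
  rw [radialProfile, if_pos hsl, ← mul_assoc, ← Real.rpow_natCast, ← Real.rpow_add hs,
    Nat.cast_pred (Nat.pos_of_neZero d)]
  ring_nf

lemma pow_mul_radialProfile_of_lt [NeZero d] {p q l s : ℝ} (hl : 0 < l) (hls : l < s) :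
    s ^ (d - 1) * radialProfile d p q l s = s ^ (-q - 1) * l ^ q := by
  rw [radialProfile, if_neg hls.not_ge, ← mul_assoc, ← Real.rpow_natCast,
    ← Real.rpow_add (hl.trans hls), Nat.cast_pred (Nat.pos_of_neZero d)]
  ring_nf

lemma integral_pow_mul_radialProfile_Ioc [NeZero d] {p l : ℝ} (q : ℝ) (hp : 0 < p) (hl : 0 < l) :
    IntegrableOn (fun s : ℝ => s ^ (d - 1) * radialProfile d p q l s) (Ioc 0 l) ∧
      ∫ s in Ioc 0 l, s ^ (d - 1) * radialProfile d p q l s = 1 / p := by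
  have heq : EqOn (fun s : ℝ => s ^ (p - 1) * l ^ (-p))
      (fun s => s ^ (d - 1) * radialProfile d p q l s) (Ioc 0 l) :=
    fun s hs => (pow_mul_radialProfile_of_le hs.1 hs.2).symm
  have hint := intervalIntegral.intervalIntegrable_rpow' (a := 0) (b := l) (r := p - 1)
    (by linarith)
  rw [intervalIntegrable_iff_integrableOn_Ioc_of_le hl.le] at hint
  refine ⟨IntegrableOn.congr_fun (hint.mul_const _) heq measurableSet_Ioc, ?_⟩
  rw [← setIntegral_congr_fun measurableSet_Ioc heq, integral_mul_const,
    ← intervalIntegral.integral_of_le hl.le, integral_rpow (Or.inl (by linarith)),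
    sub_add_cancel, Real.zero_rpow hp.ne', sub_zero, div_mul_eq_mul_div, ← Real.rpow_add hl,
    add_neg_cancel, Real.rpow_zero]

lemma integral_pow_mul_radialProfile_Ioi [NeZero d] {q l : ℝ} (p : ℝ) (hq : 0 < q) (hl : 0 < l) :
    IntegrableOn (fun s : ℝ => s ^ (d - 1) * radialProfile d p q l s) (Ioi l) ∧
      ∫ s in Ioi l, s ^ (d - 1) * radialProfile d p q l s = 1 / q := by
  have heq : EqOn (fun s : ℝ => s ^ (-q - 1) * l ^ q)
      (fun s => s ^ (d - 1) * radialProfile d p q l s) (Ioi l) :=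
    fun s hs => (pow_mul_radialProfile_of_lt hl hs).symm
  refine ⟨IntegrableOn.congr_fun ((integrableOn_Ioi_rpow_of_lt (by linarith) hl).mul_const _) heq
    measurableSet_Ioi, ?_⟩
  rw [← setIntegral_congr_fun measurableSet_Ioi heq, integral_mul_const,
    integral_Ioi_rpow_of_lt (by linarith) hl, sub_add_cancel, div_mul_eq_mul_div, neg_mul,
    ← Real.rpow_add hl, neg_add_cancel, Real.rpow_zero, neg_div_neg_eq]

lemma integral_pow_mul_radialProfile [NeZero d] {p q l : ℝ} (hp : 0 < p) (hq : 0 < q)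
    (hl : 0 < l) :
    IntegrableOn (fun s : ℝ => s ^ (d - 1) * radialProfile d p q l s) (Ioi 0) ∧
      ∫ s in Ioi (0 : ℝ), s ^ (d - 1) * radialProfile d p q l s = 1 / p + 1 / q := by
  obtain ⟨hnear, hnear_eq⟩ := integral_pow_mul_radialProfile_Ioc (d := d) q hp hl
  obtain ⟨hfar, hfar_eq⟩ := integral_pow_mul_radialProfile_Ioi (d := d) p hq hl
  rw [← Ioc_union_Ioi_eq_Ioi hl.le]
  exact ⟨hnear.union hfar, by
    rw [setIntegral_union (Ioc_disjoint_Ioi le_rfl) measurableSet_Ioi hnear hfar, hnear_eq,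
      hfar_eq]⟩

lemma integrable_scaleWeight [NeZero d] {p q l : ℝ} (hp : 0 < p) (hq : 0 < q) (hl : 0 < l) :
    Integrable (scaleWeight p q l : ℝᵈ → ℝ) := by
  refine (integrable_fun_norm_addHaar volume).2 ?_
  simpa only [finrank_euclideanSpace_fin, smul_eq_mul] using
    (integral_pow_mul_radialProfile (d := d) hp hq hl).1

lemma integral_scaleWeight [NeZero d] {p q l : ℝ} (hp : 0 < p) (hq : 0 < q) (hl : 0 < l) :
    ∫ z : ℝᵈ, scaleWeight p q l z = sphereVol d * (1 / p + 1 / q) := by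
  simp only [scaleWeight, integral_fun_norm_addHaar, finrank_euclideanSpace_fin, smul_eq_mul,
    nsmul_eq_mul, (integral_pow_mul_radialProfile (d := d) hp hq hl).2, sphereVol, Measure.real,
    mul_assoc]

lemma scaleWeight_nonneg {l : ℝ} (p q : ℝ) (hl : 0 < l) (z : ℝᵈ) : 0 ≤ scaleWeight p q l z := by
  unfold scaleWeight radialProfile
  split_ifs <;> positivity

lemma scaleWeight_mul_rpow {l : ℝ} (p q b : ℝ) (hl : 0 < l) {z : ℝᵈ} (hz : z ≠ 0) :
    scaleWeight p q l z * ‖z‖ ^ b = l ^ b * scaleWeight (p + b) (q - b) l z := by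
  have hz0 : 0 < ‖z‖ := norm_pos_iff.2 hz
  unfold scaleWeight radialProfile
  split_ifs
  · have hz_pow : ‖z‖ ^ (p + b - d) = ‖z‖ ^ (p - d) * ‖z‖ ^ b := by
      rw [← Real.rpow_add hz0]
      ring_nf
    have hl_pow : l ^ (-p) = l ^ b * l ^ (-(p + b)) := by
      rw [← Real.rpow_add hl]
      ring_nf
    rw [hz_pow, hl_pow]
    ring
  · have hz_pow : ‖z‖ ^ (-(d : ℝ) - (q - b)) = ‖z‖ ^ (-(d : ℝ) - q) * ‖z‖ ^ b := by
      rw [← Real.rpow_add hz0]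
      ring_nf
    have hl_pow : l ^ q = l ^ b * l ^ (q - b) := by
      rw [← Real.rpow_add hl]
      ring_nf
    rw [hz_pow, hl_pow]
    ring

section Domination

variable [NeZero d] {V : Type*} [NormedAddCommGroup V] [NormedSpace ℝ V]

lemma norm_integral_le_of_norm_le_scaleWeight {p q l C : ℝ} (hp : 0 < p) (hq : 0 < q) (hl : 0 < l)
    (x : ℝᵈ) {F : ℝᵈ → V} (h : ∀ y, y ≠ x → ‖F y‖ ≤ C * scaleWeight p q l (x - y)) :
    ‖∫ y, F y‖ ≤ C * (sphereVol d * (1 / p + 1 / q)) := by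
  have hint : Integrable fun y => C * scaleWeight p q l (x - y) :=
    ((integrable_scaleWeight hp hq hl).comp_sub_left x).const_mul C
  refine (norm_integral_le_of_norm_le hint ((volume.ae_ne x).mono h)).trans_eq ?_
  rw [integral_const_mul, integral_sub_left_eq_self (fun z => scaleWeight p q l z),
    integral_scaleWeight hp hq hl]

omit [NeZero d] in
lemma rpow_sub_le_scaleWeight_add {b l : ℝ} (hbd : b ≤ d) (hl : 0 < l) {z : ℝᵈ} :
    ‖z‖ ^ (b - d) ≤ l ^ b * scaleWeight b 1 l z + l ^ (b - d) := by
  rcases le_or_gt ‖z‖ l with h | h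
  · have hnear : l ^ b * scaleWeight b 1 l z = ‖z‖ ^ (b - d) := by
      rw [scaleWeight, radialProfile, if_pos h, mul_left_comm, ← Real.rpow_add hl,
        add_neg_cancel, Real.rpow_zero, mul_one]
    linarith [Real.rpow_nonneg hl.le (b - d)]
  · have hfar : ‖z‖ ^ (b - d) ≤ l ^ (b - d) :=
      Real.rpow_le_rpow_of_nonpos hl h.le (sub_nonpos.2 hbd)
    linarith [mul_nonneg (Real.rpow_nonneg hl.le b) (scaleWeight_nonneg b 1 hl z)]

lemma norm_integral_le_of_norm_le_rpow {b l C R : ℝ} (hb : 0 < b) (hbd : b ≤ d) (hl : 0 < l)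
    (hC : 0 ≤ C) (x : ℝᵈ) {F : ℝᵈ → V} (h : ∀ y, y ≠ x → ‖F y‖ ≤ C * ‖x - y‖ ^ (b - d))
    (hsupp : ∀ y, y ∉ closedBall (0 : ℝᵈ) R → F y = 0) :
    ‖∫ y, F y‖ ≤ C * (l ^ b * (sphereVol d * (1 / b + 1)) +
      l ^ (b - d) * volume.real (closedBall (0 : ℝᵈ) R)) := by
  have hweight : Integrable fun y => l ^ b * scaleWeight b 1 l (x - y) :=
    ((integrable_scaleWeight hb one_pos hl).comp_sub_left x).const_mul _
  have hball : Integrable (indicator (closedBall (0 : ℝᵈ) R) fun _ => l ^ (b - d)) :=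
    (integrable_indicator_iff measurableSet_closedBall).2
      (integrableOn_const measure_closedBall_lt_top.ne)
  refine (norm_integral_le_of_norm_le ((hweight.add hball).const_mul C)
    ((volume.ae_ne x).mono fun y hy => ?_)).trans_eq ?_
  · simp only [Pi.add_apply]
    by_cases hR : y ∈ closedBall (0 : ℝᵈ) R
    · rw [indicator_of_mem hR]
      exact (h y hy).trans (by gcongr; exact rpow_sub_le_scaleWeight_add hbd hl)
    · rw [hsupp y hR, indicator_of_notMem hR, norm_zero]
      have := scaleWeight_nonneg b 1 hl (x - y)
      positivity
  · simp only [Pi.add_apply]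
    rw [integral_const_mul, integral_add hweight hball, integral_const_mul,
      integral_sub_left_eq_self (fun z => scaleWeight b 1 l z),
      integral_scaleWeight hb one_pos hl, integral_indicator measurableSet_closedBall,
      setIntegral_const, smul_eq_mul, div_one, mul_comm (volume.real _)]

end Domination

lemma inv_regNorm_pow_le_scaleWeight {r : ℝ} (hr : 0 < r) {z : ℝᵈ} (hz : z ≠ 0) (n : ℕ) :
    (regNorm r z ^ (d + n))⁻¹ ≤ r ^ (-(n : ℝ)) * scaleWeight d n r z := by
  have hz0 : 0 < ‖z‖ := norm_pos_iff.2 hz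
  unfold scaleWeight radialProfile
  split_ifs
  · calc (regNorm r z ^ (d + n))⁻¹ ≤ (r ^ (d + n))⁻¹ := by gcongr; exact le_regNorm r z
      _ = r ^ (-(n : ℝ)) * (‖z‖ ^ ((d : ℝ) - d) * r ^ (-(d : ℝ))) := by
        rw [sub_self, Real.rpow_zero, one_mul, ← Real.rpow_add hr, ← Real.rpow_natCast,
          ← Real.rpow_neg hr.le]
        push_cast
        ring_nf
  · calc (regNorm r z ^ (d + n))⁻¹ ≤ (‖z‖ ^ (d + n))⁻¹ := by gcongr; exact norm_le_regNorm r z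
      _ = r ^ (-(n : ℝ)) * (‖z‖ ^ (-(d : ℝ) - n) * r ^ (n : ℝ)) := by
        rw [mul_left_comm, ← Real.rpow_add hr, neg_add_cancel, Real.rpow_zero, mul_one,
          ← Real.rpow_natCast, ← Real.rpow_neg hz0.le]
        push_cast
        ring_nf

lemma regKernelDiv_le_scaleWeight {r : ℝ} (hr : 0 < r) {z : ℝᵈ} (hz : z ≠ 0) :
    regKernelDiv d r z ≤ d * scaleWeight d 2 r z :=
  calc (d : ℝ) * r ^ 2 * (regNorm r z ^ (d + 2))⁻¹
      ≤ d * r ^ 2 * (r ^ (-((2 : ℕ) : ℝ)) * scaleWeight d (2 : ℕ) r z) := by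
        gcongr
        exact inv_regNorm_pow_le_scaleWeight hr hz 2
    _ = d * scaleWeight d 2 r z := by
        rw [Real.rpow_neg hr.le, Real.rpow_natCast]
        push_cast
        field_simp

lemma norm_regKernelDeriv_sub_le_scaleWeight {r δ : ℝ} (hr : 0 ≤ r) (hrδ : r ≤ δ) {z : ℝᵈ}
    (hz : z ≠ 0) :
    ‖regKernelDeriv d r z - regKernelDeriv d δ z‖ ≤
      (2 + 2 * d + d * (d + 3)) * scaleWeight 0 2 δ z := by
  have hz0 : 0 < ‖z‖ := norm_pos_iff.2 hz
  rcases le_or_gt ‖z‖ δ with hzδ | hzδ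
  · have hnear : scaleWeight 0 2 δ z = (‖z‖ ^ d)⁻¹ := by
      rw [scaleWeight, radialProfile, if_pos hzδ, zero_sub, Real.rpow_neg hz0.le,
        Real.rpow_natCast, neg_zero, Real.rpow_zero, mul_one]
    have hbound (s : ℝ) : ‖regKernelDeriv d s z‖ ≤ (1 + d) * (‖z‖ ^ d)⁻¹ :=
      (norm_regKernelDeriv_le d (hz0.trans_le (norm_le_regNorm s z))).trans
        (by gcongr; exact norm_le_regNorm s z)
    have : 0 ≤ (d : ℝ) * (d + 3) * (‖z‖ ^ d)⁻¹ := by positivity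
    rw [hnear]
    linarith [norm_sub_le (regKernelDeriv d r z) (regKernelDeriv d δ z), hbound r, hbound δ]
  · have hfar : scaleWeight 0 2 δ z = δ ^ 2 * (‖z‖ ^ (d + 2))⁻¹ := by
      rw [scaleWeight, radialProfile, if_neg hzδ.not_ge, mul_comm, ← Real.rpow_natCast,
        ← Real.rpow_natCast, ← Real.rpow_neg hz0.le]
      push_cast
      ring_nf
    rw [hfar]
    refine (norm_regKernelDeriv_sub_le_of_le d hr hrδ hz).trans ?_
    gcongr
    linarith [d.cast_nonneg (α := ℝ)]

end Weights

/-! ### Patch potentials -/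

section Potentials

/-- A density: a continuous function with values in `[0, 1]`, vanishing outside the closed ball of
radius `R`. -/
structure IsDensity (R : ℝ) (ρ : ℝᵈ → ℝ) : Prop where
  continuous : Continuous ρ
  nonneg : ∀ x, 0 ≤ ρ x
  le_one : ∀ x, ρ x ≤ 1
  eq_zero : ∀ x, x ∉ closedBall (0 : ℝᵈ) R → ρ x = 0

/-- A density `ρ` such that the vector field `ρ g` is the gradient of a nonpositive compactly
supported function `f`, where `g` is `γ`-Hölder continuous with constant `y`. It arises from a
defining function `Φ` with gradient `g` as `ρ = θ(Φ)`, `f = Θ(Φ)` with `Θ' = θ`, a smooth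
approximation of the indicator function of a patch. -/
structure IsSmoothPatch (γ y R : ℝ) (ρ f : ℝᵈ → ℝ) (g : ℝᵈ → ℝᵈ) : Prop extends IsDensity R ρ where
  primitive_eq_zero : ∀ x, x ∉ closedBall (0 : ℝᵈ) R → f x = 0
  primitive_nonpos : ∀ x, f x ≤ 0
  hasFDerivAt : ∀ x, HasFDerivAt f (ρ x • innerSL ℝ (g x)) x
  continuous_grad : Continuous g
  holderConst_nonneg : 0 ≤ y
  holder : ∀ x x', ‖g x - g x'‖ ≤ y * ‖x - x'‖ ^ γ

/-- The velocity field, up to sign, generated by `ρ` through the regularised kernel. -/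
noncomputable def velocity (r : ℝ) (ρ : ℝᵈ → ℝ) (x : ℝᵈ) : ℝᵈ := ∫ y, ρ y • regKernel d r (x - y)

/-- The derivative of `velocity`. -/
noncomputable def velocityGrad (r : ℝ) (ρ : ℝᵈ → ℝ) (x : ℝᵈ) : ℝᵈ →L[ℝ] ℝᵈ :=
  ∫ y, ρ y • regKernelDeriv d r (x - y)

/-- The convolution of `f` with the approximate identity `regKernelDiv`. -/
noncomputable def mollify (r : ℝ) (f : ℝᵈ → ℝ) (x : ℝᵈ) : ℝ := ∫ y, f y * regKernelDiv d r (x - y)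

/-- The convolution of the vector field `ρ g` with the approximate identity `regKernelDiv`. -/
noncomputable def mollifyGrad (r : ℝ) (ρ : ℝᵈ → ℝ) (g : ℝᵈ → ℝᵈ) (x : ℝᵈ) : ℝᵈ :=
  ∫ y, (ρ y * regKernelDiv d r (x - y)) • g y

/-- The forcing term in the evolution of the gradient `g` of the defining function; by
`IsSmoothPatch.commutator_eq` it is a commutator of the singular integral operator with
multiplication by `g`. -/
noncomputable def commutator (r : ℝ) (ρ : ℝᵈ → ℝ) (g : ℝᵈ → ℝᵈ) (x : ℝᵈ) : ℝᵈ :=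
  velocityGrad r ρ x (g x) - mollifyGrad r ρ g x

/-- The trilinear form obtained by pairing the matrix field `regKernelDeriv` with `ρ g`. -/
noncomputable def derivPairing (r : ℝ) (ρ : ℝᵈ → ℝ) (g : ℝᵈ → ℝᵈ) (x u w p : ℝᵈ) : ℝ :=
  ∫ y, ⟪regKernelDeriv d r (x - y) u, w⟫ * (ρ y * ⟪g y, p⟫)

lemma integrable_of_eq_zero_off_closedBall {V : Type*} [NormedAddCommGroup V] {R : ℝ} {F : ℝᵈ → V}
    (hF : Continuous F) (h : ∀ x, x ∉ closedBall (0 : ℝᵈ) R → F x = 0) : Integrable F :=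
  hF.integrable_of_hasCompactSupport (.intro (isCompact_closedBall 0 R) h)

lemma hasFDerivAt_integral_smul_sub {V : Type*} [NormedAddCommGroup V] [NormedSpace ℝ V]
    {R M : ℝ} {φ : ℝᵈ → ℝ} (hφ : Continuous φ) (hsupp : ∀ x, x ∉ closedBall (0 : ℝᵈ) R → φ x = 0)
    {k : ℝᵈ → V} {k' : ℝᵈ → ℝᵈ →L[ℝ] V} (hk : ∀ z, HasFDerivAt k (k' z) z)
    (hk' : Continuous k') (hM : ∀ z, ‖k' z‖ ≤ M) (x : ℝᵈ) :
    HasFDerivAt (fun x => ∫ y, φ y • k (x - y)) (∫ y, φ y • k' (x - y)) x := by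
  have hk_cont : Continuous k := continuous_iff_continuousAt.2 fun z => (hk z).continuousAt
  refine hasFDerivAt_integral_of_dominated_of_fderiv_le (bound := fun y => |φ y| * M) (s := univ)
    (F' := fun x y => φ y • k' (x - y)) Filter.univ_mem (.of_forall fun x => ?_) ?_ ?_
    (.of_forall fun y x _ => ?_) ?_ (.of_forall fun y x _ => ?_)
  · exact Continuous.aestronglyMeasurable (by fun_prop)
  · exact integrable_of_eq_zero_off_closedBall (R := R) (by fun_prop) fun y hy => by
      simp [hsupp y hy]
  · exact Continuous.aestronglyMeasurable (by fun_prop)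
  · rw [norm_smul, Real.norm_eq_abs]
    gcongr
    exact hM _
  · exact integrable_of_eq_zero_off_closedBall (R := R) (by fun_prop) fun y hy => by
      simp [hsupp y hy]
  · exact (((hk (x - y)).comp x ((hasFDerivAt_id x).sub_const y)).const_smul (φ y)).congr_fderiv
      (by simp)

variable {γ y R r : ℝ} {ρ f : EuclideanSpace ℝ (Fin d) → ℝ}
  {g : EuclideanSpace ℝ (Fin d) → EuclideanSpace ℝ (Fin d)}

namespace IsDensity

lemma integrable_smul (h : IsDensity R ρ) {V : Type*} [NormedAddCommGroup V] [NormedSpace ℝ V]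
    {F : ℝᵈ → V} (hF : Continuous F) : Integrable fun y => ρ y • F y :=
  have := h.continuous
  integrable_of_eq_zero_off_closedBall (R := R) (by fun_prop) fun y hy => by
    rw [h.eq_zero y hy, zero_smul]

lemma integrable_regKernelDeriv (h : IsDensity R ρ) (hr : 0 < r) (x : ℝᵈ) {v : ℝᵈ → ℝᵈ}
    (hv : Continuous v) : Integrable fun y => ρ y • regKernelDeriv d r (x - y) (v y) :=
  have := continuous_regKernelDeriv (E := ℝᵈ) d hr
  h.integrable_smul (by fun_prop)

lemma integrable_regKernelDiv (h : IsDensity R ρ) (hr : 0 < r) (x : ℝᵈ) {v : ℝᵈ → ℝᵈ}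
    (hv : Continuous v) : Integrable fun y => (ρ y * regKernelDiv d r (x - y)) • v y := by
  have := continuous_regKernelDiv (E := ℝᵈ) d hr
  simp only [mul_smul]
  exact h.integrable_smul (by fun_prop)

lemma velocityGrad_apply (h : IsDensity R ρ) (hr : 0 < r) (x u : ℝᵈ) :
    velocityGrad r ρ x u = ∫ y, ρ y • regKernelDeriv d r (x - y) u :=
  ContinuousLinearMap.integral_apply
    (h.integrable_smul ((continuous_regKernelDeriv d hr).comp (continuous_sub_left x))) u

lemma inner_velocityGrad (h : IsDensity R ρ) (hr : 0 < r) (x u w : ℝᵈ) :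
    ⟪velocityGrad r ρ x u, w⟫ = ∫ y, ρ y * ⟪regKernelDeriv d r (x - y) u, w⟫ := by
  rw [h.velocityGrad_apply hr, real_inner_comm,
    ← integral_inner (h.integrable_regKernelDeriv hr x continuous_const)]
  simp only [real_inner_smul_right, real_inner_comm]

lemma inner_velocityGrad_symm (h : IsDensity R ρ) (hr : 0 < r) (x u w : ℝᵈ) :
    ⟪velocityGrad r ρ x u, w⟫ = ⟪u, velocityGrad r ρ x w⟫ := by
  rw [real_inner_comm (velocityGrad r ρ x w), h.inner_velocityGrad hr, h.inner_velocityGrad hr]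
  simp only [inner_regKernelDeriv_symm d r _ u w, real_inner_comm]

lemma hasFDerivAt_velocity (h : IsDensity R ρ) (hr : 0 < r) (x : ℝᵈ) :
    HasFDerivAt (velocity r ρ) (velocityGrad r ρ x) x := by
  refine hasFDerivAt_integral_smul_sub (M := (1 + d) * (r ^ d)⁻¹) h.continuous h.eq_zero
    (hasFDerivAt_regKernel d hr) (continuous_regKernelDeriv d hr) (fun z => ?_) x
  refine (norm_regKernelDeriv_le d (regNorm_pos hr z)).trans ?_
  gcongr
  exact le_regNorm r z

end IsDensity

lemma derivPairing_swap (r : ℝ) (ρ : ℝᵈ → ℝ) (g : ℝᵈ → ℝᵈ) (x u w p : ℝᵈ) :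
    derivPairing r ρ g x u w p = derivPairing r ρ g x w u p := by
  simp only [derivPairing, inner_regKernelDeriv_symm d r _ u w, real_inner_comm]

namespace IsSmoothPatch

lemma continuous_primitive (h : IsSmoothPatch γ y R ρ f g) : Continuous f :=
  continuous_iff_continuousAt.2 fun z => (h.hasFDerivAt z).continuousAt

lemma integral_mul_inner (h : IsSmoothPatch γ y R ρ f g) {ψ : ℝᵈ → ℝ} {ψ' : ℝᵈ → ℝᵈ →L[ℝ] ℝ}
    (hψ : ∀ z, HasFDerivAt ψ (ψ' z) z) (hψ' : ∀ p, Continuous fun z => ψ' z p) (x p : ℝᵈ) :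
    ∫ y, ψ (x - y) * (ρ y * ⟪g y, p⟫) = ∫ y, f y * ψ' (x - y) p := by
  have hρ_cont := h.continuous
  have hg_cont := h.continuous_grad
  have hf_cont := h.continuous_primitive
  have hψ_cont : Continuous ψ := continuous_iff_continuousAt.2 fun z => (hψ z).continuousAt
  have : Continuous fun y => ψ' (x - y) p := (hψ' p).comp (continuous_sub_left x)
  have hψ_sub (y : ℝᵈ) : HasFDerivAt (fun y => ψ (x - y)) (-(ψ' (x - y))) y :=
    ((hψ (x - y)).comp y ((hasFDerivAt_id y).const_sub x)).congr_fderiv (by simp)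
  have hfderiv_f (y : ℝᵈ) : fderiv ℝ f y p = ρ y * ⟪g y, p⟫ := by
    simp [(h.hasFDerivAt y).fderiv]
  have hfderiv_ψ (y : ℝᵈ) : fderiv ℝ (fun y => ψ (x - y)) y p = -ψ' (x - y) p := by
    simp [(hψ_sub y).fderiv]
  have hparts := integral_mul_fderiv_eq_neg_fderiv_mul_of_integrable (μ := volume)
    (f := fun y => ψ (x - y)) (g := f) (v := p) ?_ ?_ ?_
    (fun y _ => (hψ_sub y).differentiableAt) (fun y _ => (h.hasFDerivAt y).differentiableAt)
  · simp only [hfderiv_f, hfderiv_ψ] at hparts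
    rw [hparts, ← integral_neg]
    simp only [neg_mul, neg_neg, mul_comm (f _)]
  · simp only [hfderiv_ψ]
    exact integrable_of_eq_zero_off_closedBall (R := R) (by fun_prop) fun y hy => by
      simp [h.primitive_eq_zero y hy]
  · simp only [hfderiv_f]
    exact integrable_of_eq_zero_off_closedBall (R := R) (by fun_prop) fun y hy => by
      simp [h.eq_zero y hy]
  · exact integrable_of_eq_zero_off_closedBall (R := R) (by fun_prop) fun y hy => by
      simp [h.primitive_eq_zero y hy]

lemma derivPairing_symm (h : IsSmoothPatch γ y R ρ f g) (hr : 0 < r) (x u w p : ℝᵈ) :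
    derivPairing r ρ g x u w p = derivPairing r ρ g x u p w := by
  unfold derivPairing
  rw [h.integral_mul_inner (fun z => hasFDerivAt_inner_regKernelDeriv d hr z u w)
      (continuous_regKernelDeriv₂ d hr u w),
    h.integral_mul_inner (fun z => hasFDerivAt_inner_regKernelDeriv d hr z u p)
      (continuous_regKernelDeriv₂ d hr u p)]
  simp only [regKernelDeriv₂_symm _ _ _ u w p]

lemma integrable_derivPairing (h : IsSmoothPatch γ y R ρ f g) (hr : 0 < r) (x u w p : ℝᵈ) :
    Integrable fun y => ⟪regKernelDeriv d r (x - y) u, w⟫ * (ρ y * ⟪g y, p⟫) := by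
  have := h.continuous
  have := h.continuous_grad
  have := continuous_regKernelDeriv (E := ℝᵈ) d hr
  exact integrable_of_eq_zero_off_closedBall (R := R) (by fun_prop) fun y hy => by
    simp [h.eq_zero y hy]

-- Both sides are traces of `derivPairing`, over different pairs of arguments.
lemma mollifyGrad_eq (h : IsSmoothPatch γ y R ρ f g) (hr : 0 < r) (x : ℝᵈ) :
    mollifyGrad r ρ g x = ∫ y, ρ y • regKernelDeriv d r (x - y) (g y) := by
  set b := EuclideanSpace.basisFun (Fin d) ℝ
  refine ext_inner_left ℝ fun w => ?_
  have htrace (y : ℝᵈ) : ⟪w, (ρ y * regKernelDiv d r (x - y)) • g y⟫ =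
      ∑ i, ⟪regKernelDeriv d r (x - y) (b i), b i⟫ * (ρ y * ⟪g y, w⟫) := by
    rw [real_inner_smul_right, ← Finset.sum_mul, trace_regKernelDeriv hr, real_inner_comm]
    ring
  have hexpand (y : ℝᵈ) : ⟪w, ρ y • regKernelDeriv d r (x - y) (g y)⟫ =
      ∑ i, ⟪regKernelDeriv d r (x - y) w, b i⟫ * (ρ y * ⟪g y, b i⟫) := by
    rw [real_inner_smul_right, ← inner_regKernelDeriv_symm, ← b.sum_inner_mul_inner,
      Finset.mul_sum]
    refine Finset.sum_congr rfl fun i _ => ?_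
    rw [real_inner_comm (b i) (g y)]
    ring
  rw [mollifyGrad, ← integral_inner (h.integrable_regKernelDiv hr x h.continuous_grad),
    ← integral_inner (h.integrable_regKernelDeriv hr x h.continuous_grad)]
  simp only [htrace, hexpand]
  rw [integral_finsetSum _ fun i _ => h.integrable_derivPairing hr x _ _ _,
    integral_finsetSum _ fun i _ => h.integrable_derivPairing hr x _ _ _]
  refine Finset.sum_congr rfl fun i _ => ?_
  change derivPairing r ρ g x (b i) (b i) w = derivPairing r ρ g x w (b i) (b i)
  rw [h.derivPairing_symm hr, derivPairing_swap]

lemma commutator_eq (h : IsSmoothPatch γ y R ρ f g) (hr : 0 < r) (x : ℝᵈ) :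
    commutator r ρ g x = ∫ y, ρ y • regKernelDeriv d r (x - y) (g x - g y) := by
  rw [commutator, h.mollifyGrad_eq hr, h.velocityGrad_apply hr,
    ← integral_sub (h.integrable_regKernelDeriv hr x continuous_const)
      (h.integrable_regKernelDeriv hr x h.continuous_grad)]
  simp only [map_sub, smul_sub]

lemma hasFDerivAt_mollify (h : IsSmoothPatch γ y R ρ f g) (hr : 0 < r) (x : ℝᵈ) :
    HasFDerivAt (mollify r f) (innerSL ℝ (mollifyGrad r ρ g x)) x := by
  have hf_cont := h.continuous_primitive
  have hcont := continuous_regKernelDivDeriv (E := ℝᵈ) d hr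
  refine (hasFDerivAt_integral_smul_sub hf_cont h.primitive_eq_zero (hasFDerivAt_regKernelDiv d hr)
    hcont (norm_regKernelDivDeriv_le d hr) x).congr_fderiv ?_
  ext p
  rw [ContinuousLinearMap.integral_apply (integrable_of_eq_zero_off_closedBall (R := R)
      (by fun_prop) fun y hy => by simp [h.primitive_eq_zero y hy]),
    innerSL_apply_apply, real_inner_comm, mollifyGrad,
    ← integral_inner (h.integrable_regKernelDiv hr x h.continuous_grad)]
  simp only [smul_apply, smul_eq_mul]
  rw [← h.integral_mul_inner (hasFDerivAt_regKernelDiv d hr) (fun p => by fun_prop) x p]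
  congr 1 with y
  rw [real_inner_smul_right, real_inner_comm]
  ring

end IsSmoothPatch

end Potentials

/-! ### The commutator estimate -/

section Commutator

variable {γ y R r : ℝ} {ρ f : EuclideanSpace ℝ (Fin d) → ℝ}
  {g : EuclideanSpace ℝ (Fin d) → EuclideanSpace ℝ (Fin d)}

/-- The constant in `norm_integral_le_of_le_regKernelDiv`, the `L¹`-norm of the weight dominating
`|z| ^ b * regKernelDiv d 1 z`. -/
noncomputable def regKernelDivConst (d : ℕ) (b : ℝ) : ℝ :=
  d * (sphereVol d * (1 / (d + b) + 1 / (2 - b)))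

/-- The constant in `norm_integral_le_of_le_truncation`, the `L¹`-norm of the weight dominating
`|z| ^ γ * ‖regKernelDeriv d r z - regKernelDeriv d 1 z‖` for `r ≤ 1`. -/
noncomputable def truncationConst (d : ℕ) (γ : ℝ) : ℝ :=
  (2 + 2 * d + d * (d + 3)) * (sphereVol d * (1 / γ + 1 / (2 - γ)))

/-- The constant in `IsSmoothPatch.norm_integral_translation_le`, the `L¹`-norm of the weight
dominating the increments of `regKernelDeriv d 1` against `|z| ^ γ`. -/
noncomputable def translationConst (d : ℕ) (γ : ℝ) : ℝ :=
  d * (d + 5) * 2 ^ (d + 1) * (sphereVol d * (1 / (d + γ) + 1 / (1 - γ)))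

/-- The constant in the uniform bound `IsSmoothPatch.norm_commutator_le_mul` for densities supported
in the ball of radius `R`. -/
noncomputable def commutatorConst (d : ℕ) (γ R : ℝ) : ℝ :=
  (1 + d) * (sphereVol d * (1 / γ + 1) + volume.real (closedBall (0 : EuclideanSpace ℝ (Fin d)) R))

lemma regKernelDivConst_nonneg (d : ℕ) {b : ℝ} (hb : 0 ≤ b) (hb2 : b < 2) :
    0 ≤ regKernelDivConst d b := by
  have := sphereVol_nonneg d
  have : 0 < 2 - b := sub_pos.2 hb2
  unfold regKernelDivConst
  positivity

lemma truncationConst_nonneg (d : ℕ) (hγ0 : 0 < γ) (hγ2 : γ < 2) : 0 ≤ truncationConst d γ := by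
  have := sphereVol_nonneg d
  have : 0 < 2 - γ := sub_pos.2 hγ2
  unfold truncationConst
  positivity

lemma translationConst_nonneg (d : ℕ) (hγ0 : 0 ≤ γ) (hγ1 : γ < 1) : 0 ≤ translationConst d γ := by
  have := sphereVol_nonneg d
  have : 0 < 1 - γ := sub_pos.2 hγ1
  unfold translationConst
  positivity

lemma commutatorConst_nonneg (d : ℕ) (hγ0 : 0 ≤ γ) (R : ℝ) : 0 ≤ commutatorConst d γ R := by
  have := sphereVol_nonneg d
  unfold commutatorConst
  positivity

variable {V : Type*} [NormedAddCommGroup V] [NormedSpace ℝ V]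

lemma norm_integral_le_of_le_regKernelDiv [NeZero d] (hr : 0 < r) {b M : ℝ} (hb : 0 ≤ b)
    (hb2 : b < 2) (x : ℝᵈ) {F : ℝᵈ → V} (hM : 0 ≤ M)
    (h : ∀ y, ‖F y‖ ≤ regKernelDiv d r (x - y) * (M * ‖x - y‖ ^ b)) :
    ‖∫ y, F y‖ ≤ regKernelDivConst d b * (M * r ^ b) := by
  have hd : (0 : ℝ) < d := Nat.cast_pos.2 (Nat.pos_of_neZero d)
  refine (norm_integral_le_of_norm_le_scaleWeight (C := d * (M * r ^ b)) (p := d + b) (q := 2 - b)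
    (by positivity) (by linarith) hr x fun y hy => ?_).trans_eq (by rw [regKernelDivConst]; ring)
  have hz : x - y ≠ 0 := sub_ne_zero.2 hy.symm
  calc ‖F y‖ ≤ regKernelDiv d r (x - y) * (M * ‖x - y‖ ^ b) := h y
    _ ≤ d * scaleWeight d 2 r (x - y) * (M * ‖x - y‖ ^ b) := by
      gcongr
      exact regKernelDiv_le_scaleWeight hr hz
    _ = d * M * (scaleWeight d 2 r (x - y) * ‖x - y‖ ^ b) := by ring
    _ = _ := by rw [scaleWeight_mul_rpow d 2 b hr hz]; ring

lemma norm_integral_le_of_le_truncation [NeZero d] (hγ0 : 0 < γ) (hγ2 : γ < 2) {δ M : ℝ}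
    (hr : 0 < r) (hrδ : r ≤ δ) (x : ℝᵈ) {F : ℝᵈ → V} (hM : 0 ≤ M)
    (h : ∀ y, ‖F y‖ ≤
      ‖regKernelDeriv d r (x - y) - regKernelDeriv d δ (x - y)‖ * (M * ‖x - y‖ ^ γ)) :
    ‖∫ y, F y‖ ≤ truncationConst d γ * (M * δ ^ γ) := by
  have hδ := hr.trans_le hrδ
  refine (norm_integral_le_of_norm_le_scaleWeight (C := (2 + 2 * d + d * (d + 3)) * (M * δ ^ γ))
    (p := 0 + γ) (q := 2 - γ) (by linarith) (by linarith) hδ x fun y hy => ?_).trans_eq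
    (by rw [truncationConst, zero_add]; ring)
  have hz : x - y ≠ 0 := sub_ne_zero.2 hy.symm
  calc ‖F y‖ ≤ _ := h y
    _ ≤ (2 + 2 * d + d * (d + 3)) * scaleWeight 0 2 δ (x - y) * (M * ‖x - y‖ ^ γ) := by
      gcongr
      exact norm_regKernelDeriv_sub_le_scaleWeight hr.le hrδ hz
    _ = (2 + 2 * d + d * (d + 3)) * M * (scaleWeight 0 2 δ (x - y) * ‖x - y‖ ^ γ) := by ring
    _ = _ := by rw [scaleWeight_mul_rpow 0 2 γ hδ hz]; ring

lemma norm_regKernelDeriv_le_rpow (hr : 0 < r) {z : ℝᵈ} (hz : z ≠ 0) :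
    ‖regKernelDeriv d r z‖ ≤ (1 + d) * ‖z‖ ^ (-(d : ℝ)) := by
  have hz0 : 0 < ‖z‖ := norm_pos_iff.2 hz
  refine (norm_regKernelDeriv_le d (regNorm_pos hr z)).trans ?_
  rw [Real.rpow_neg hz0.le, Real.rpow_natCast]
  gcongr
  exact norm_le_regNorm r z

lemma mul_inv_regNorm_pow_le {R l : ℝ} (hγ1 : γ ≤ 1) (hl : 0 < l) (hlR : l ≤ R)
    {z : ℝᵈ} (hz : z ≠ 0) :
    l * (regNorm R z ^ (d + 1))⁻¹ * ‖z‖ ^ γ ≤ l ^ γ * scaleWeight (d + γ) (1 - γ) R z := by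
  have hR := hl.trans_le hlR
  have hweight := scaleWeight_nonneg (d + γ) (1 - γ) hR z
  have hscale : l * R ^ (-1 + γ) ≤ l ^ γ :=
    calc l * R ^ (-1 + γ) ≤ l ^ (1 : ℝ) * l ^ (-1 + γ) := by
          rw [Real.rpow_one]
          gcongr ?_ * ?_
          exact Real.rpow_le_rpow_of_nonpos hl hlR (by linarith)
      _ = l ^ γ := by rw [← Real.rpow_add hl]; ring_nf
  calc l * (regNorm R z ^ (d + 1))⁻¹ * ‖z‖ ^ γ
      ≤ l * (R ^ (-((1 : ℕ) : ℝ)) * scaleWeight d (1 : ℕ) R z) * ‖z‖ ^ γ := by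
        gcongr
        exact inv_regNorm_pow_le_scaleWeight hR hz 1
    _ = l * R ^ (-1 : ℝ) * (scaleWeight d 1 R z * ‖z‖ ^ γ) := by push_cast; ring
    _ = l * R ^ (-1 + γ) * scaleWeight (d + γ) (1 - γ) R z := by
      rw [scaleWeight_mul_rpow d 1 γ hR hz, Real.rpow_add hR]
      ring
    _ ≤ _ := by gcongr

namespace IsSmoothPatch

lemma norm_smul_apply_sub_le (h : IsSmoothPatch γ y R ρ f g) (B : ℝᵈ →L[ℝ] ℝᵈ) (x z : ℝᵈ) :
    ‖ρ z • B (g x - g z)‖ ≤ ‖B‖ * (y * ‖x - z‖ ^ γ) :=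
  calc ‖ρ z • B (g x - g z)‖ = ρ z * ‖B (g x - g z)‖ := by
        rw [norm_smul, Real.norm_of_nonneg (h.nonneg z)]
    _ ≤ 1 * (‖B‖ * (y * ‖x - z‖ ^ γ)) := by
      gcongr
      exacts [h.le_one z, B.le_opNorm_of_le (h.holder x z)]
    _ = _ := one_mul _

lemma integrable_regKernelDeriv_sub (h : IsSmoothPatch γ y R ρ f g) (hr : 0 < r) (x x' : ℝᵈ) :
    Integrable fun z => ρ z • regKernelDeriv d r (x - z) (g x' - g z) :=
  h.integrable_regKernelDeriv hr x (continuous_const.sub h.continuous_grad)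

lemma norm_mollifyGrad_le [NeZero d] (hγ0 : 0 ≤ γ) (hγ2 : γ < 2) (h : IsSmoothPatch γ y R ρ f g)
    (hr : 0 < r) (x : ℝᵈ) :
    ‖mollifyGrad r ρ g x‖ ≤
      regKernelDivConst d 0 * ‖g x‖ + regKernelDivConst d γ * (y * r ^ γ) := by
  have hsplit : mollifyGrad r ρ g x = (∫ z, (ρ z * regKernelDiv d r (x - z)) • g x) +
      ∫ z, (ρ z * regKernelDiv d r (x - z)) • (g z - g x) := by
    rw [← integral_add (h.integrable_regKernelDiv hr x continuous_const)
      (h.integrable_regKernelDiv hr x (v := fun z => g z - g x)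
        (h.continuous_grad.sub continuous_const))]
    simp only [← smul_add, add_sub_cancel, mollifyGrad]
  have hbound (z v : ℝᵈ) :
      ‖(ρ z * regKernelDiv d r (x - z)) • v‖ ≤ regKernelDiv d r (x - z) * ‖v‖ := by
    have hdiv := regKernelDiv_nonneg d r (x - z)
    rw [norm_smul, Real.norm_of_nonneg (mul_nonneg (h.nonneg z) hdiv)]
    gcongr
    exact mul_le_of_le_one_left hdiv (h.le_one z)
  rw [hsplit]
  refine (norm_add_le _ _).trans (add_le_add ?_ ?_)
  · simpa using norm_integral_le_of_le_regKernelDiv hr (b := 0) le_rfl two_pos x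
      (norm_nonneg (g x)) (fun z => by simpa using hbound z (g x))
  · refine norm_integral_le_of_le_regKernelDiv hr hγ0 hγ2 x h.holderConst_nonneg fun z => ?_
    refine (hbound z _).trans ?_
    gcongr
    · exact regKernelDiv_nonneg d r (x - z)
    · rw [norm_sub_rev]
      exact h.holder x z

lemma norm_commutator_le [NeZero d] (hγ0 : 0 ≤ γ) (hγ2 : γ < 2) (h : IsSmoothPatch γ y R ρ f g)
    (hr : 0 < r) (x : ℝᵈ) :
    ‖commutator r ρ g x‖ ≤ (‖velocityGrad r ρ x‖ + regKernelDivConst d 0) * ‖g x‖ +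
      regKernelDivConst d γ * (y * r ^ γ) := by
  unfold commutator
  linarith [h.norm_mollifyGrad_le hγ0 hγ2 hr x, (velocityGrad r ρ x).le_opNorm (g x),
    norm_sub_le (velocityGrad r ρ x (g x)) (mollifyGrad r ρ g x)]

lemma norm_commutator_le_mul [NeZero d] (hγ0 : 0 < γ) (hγd : γ ≤ d) (h : IsSmoothPatch γ y R ρ f g)
    (hr : 0 < r) (x : ℝᵈ) : ‖commutator r ρ g x‖ ≤ commutatorConst d γ R * y := by
  have hy := h.holderConst_nonneg
  rw [h.commutator_eq hr]
  refine (norm_integral_le_of_norm_le_rpow (C := (1 + d) * y) (R := R) hγ0 hγd one_pos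
    (by positivity) x (fun z hz => ?_) fun z hz => by simp [h.eq_zero z hz]).trans_eq
    (by rw [commutatorConst, Real.one_rpow, Real.one_rpow]; ring)
  have hz' : x - z ≠ 0 := sub_ne_zero.2 hz.symm
  calc ‖ρ z • regKernelDeriv d r (x - z) (g x - g z)‖
      ≤ ‖regKernelDeriv d r (x - z)‖ * (y * ‖x - z‖ ^ γ) := h.norm_smul_apply_sub_le _ x z
    _ ≤ (1 + d) * ‖x - z‖ ^ (-(d : ℝ)) * (y * ‖x - z‖ ^ γ) := by
      gcongr
      exact norm_regKernelDeriv_le_rpow hr hz'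
    _ = (1 + d) * y * ‖x - z‖ ^ (γ - d) := by
      rw [sub_eq_add_neg γ, Real.rpow_add (norm_pos_iff.2 hz')]
      ring

lemma commutator_eq_add (h : IsSmoothPatch γ y R ρ f g) (hr : 0 < r) {δ : ℝ} (hδ : 0 < δ)
    (x : ℝᵈ) :
    commutator r ρ g x =
      (∫ z, ρ z • (regKernelDeriv d r (x - z) - regKernelDeriv d δ (x - z)) (g x - g z)) +
        commutator δ ρ g x := by
  rw [h.commutator_eq hr, h.commutator_eq hδ]
  simp only [sub_apply, smul_sub]
  rw [integral_sub (h.integrable_regKernelDeriv_sub hr x x)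
    (h.integrable_regKernelDeriv_sub hδ x x), sub_add_cancel]

lemma norm_commutator_sub_commutator_le [NeZero d] (hγ0 : 0 < γ) (hγ2 : γ < 2)
    (h : IsSmoothPatch γ y R ρ f g) {δ : ℝ} (hr : 0 < r) (hrδ : r ≤ δ) (x : ℝᵈ) :
    ‖commutator r ρ g x - commutator δ ρ g x‖ ≤ truncationConst d γ * (y * δ ^ γ) := by
  rw [h.commutator_eq_add hr (hr.trans_le hrδ), add_sub_cancel_right]
  exact norm_integral_le_of_le_truncation hγ0 hγ2 hr hrδ x h.holderConst_nonneg fun z =>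
    h.norm_smul_apply_sub_le _ x z

lemma commutator_sub_eq (h : IsSmoothPatch γ y R ρ f g) (hr : 0 < r) (x x' : ℝᵈ) :
    commutator r ρ g x - commutator r ρ g x' =
      (∫ z, ρ z • (regKernelDeriv d r (x - z) - regKernelDeriv d r (x' - z)) (g x' - g z)) +
        velocityGrad r ρ x (g x - g x') := by
  have hsplit : commutator r ρ g x = (∫ z, ρ z • regKernelDeriv d r (x - z) (g x' - g z)) +
      velocityGrad r ρ x (g x - g x') := by
    rw [h.commutator_eq hr, h.velocityGrad_apply hr, ← integral_add
      (h.integrable_regKernelDeriv_sub hr x x') (h.integrable_regKernelDeriv hr x continuous_const)]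
    simp only [← smul_add, ← map_add, add_comm (g x' - g _), sub_add_sub_cancel]
  rw [hsplit, h.commutator_eq hr x', add_sub_right_comm,
    ← integral_sub (h.integrable_regKernelDeriv_sub hr x x')
      (h.integrable_regKernelDeriv_sub hr x' x')]
  simp only [sub_apply, smul_sub]

lemma norm_integral_translation_le [NeZero d] (hγ0 : 0 ≤ γ) (hγ1 : γ < 1)
    (h : IsSmoothPatch γ y R ρ f g) {x x' : ℝᵈ} (hne : x ≠ x') (hxr : ‖x - x'‖ ≤ r) :
    ‖∫ z, ρ z • (regKernelDeriv d r (x - z) - regKernelDeriv d r (x' - z)) (g x' - g z)‖ ≤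
      translationConst d γ * (y * ‖x - x'‖ ^ γ) := by
  have hd : (0 : ℝ) < d := Nat.cast_pos.2 (Nat.pos_of_neZero d)
  have hy := h.holderConst_nonneg
  have hl : 0 < ‖x - x'‖ := norm_pos_iff.2 (sub_ne_zero.2 hne)
  have hr := hl.trans_le hxr
  refine (norm_integral_le_of_norm_le_scaleWeight
    (C := d * (d + 5) * 2 ^ (d + 1) * (y * ‖x - x'‖ ^ γ)) (p := d + γ) (q := 1 - γ)
    (by positivity) (sub_pos.2 hγ1) hr x' fun z hz => ?_).trans_eq (by rw [translationConst]; ring)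
  have hlip := norm_regKernelDeriv_sub_le d hr (z := x - z) (z' := x' - z)
    (by rwa [sub_sub_sub_cancel_right])
  rw [sub_sub_sub_cancel_right] at hlip
  calc _ ≤ ‖regKernelDeriv d r (x - z) - regKernelDeriv d r (x' - z)‖ * (y * ‖x' - z‖ ^ γ) :=
        h.norm_smul_apply_sub_le _ x' z
    _ ≤ d * (d + 5) * 2 ^ (d + 1) * (regNorm r (x' - z) ^ (d + 1))⁻¹ * ‖x - x'‖ *
        (y * ‖x' - z‖ ^ γ) := by gcongr
    _ = d * (d + 5) * 2 ^ (d + 1) * y *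
        (‖x - x'‖ * (regNorm r (x' - z) ^ (d + 1))⁻¹ * ‖x' - z‖ ^ γ) := by ring
    _ ≤ d * (d + 5) * 2 ^ (d + 1) * y *
        (‖x - x'‖ ^ γ * scaleWeight (d + γ) (1 - γ) r (x' - z)) := by
      gcongr d * (d + 5) * 2 ^ (d + 1) * y * ?_
      exact mul_inv_regNorm_pow_le hγ1.le hl hxr (sub_ne_zero.2 hz.symm)
    _ = _ := by ring

lemma norm_commutator_sub_le_of_le [NeZero d] (hγ0 : 0 ≤ γ) (hγ1 : γ < 1)
    (h : IsSmoothPatch γ y R ρ f g) {x x' : ℝᵈ} (hne : x ≠ x') (hxr : ‖x - x'‖ ≤ r) :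
    ‖commutator r ρ g x - commutator r ρ g x'‖ ≤
      (translationConst d γ + ‖velocityGrad r ρ x‖) * (y * ‖x - x'‖ ^ γ) := by
  have hr : 0 < r := (norm_pos_iff.2 (sub_ne_zero.2 hne)).trans_le hxr
  rw [h.commutator_sub_eq hr, add_mul]
  refine (norm_add_le _ _).trans (add_le_add (h.norm_integral_translation_le hγ0 hγ1 hne hxr) ?_)
  exact ContinuousLinearMap.le_opNorm_of_le _ (h.holder x x')

lemma norm_commutator_sub_le [NeZero d] (hγ0 : 0 < γ) (hγ1 : γ < 1)
    (h : IsSmoothPatch γ y R ρ f g) {A : ℝ} (hr : 0 < r)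
    (hA : ∀ δ, r ≤ δ → ∀ x, ‖velocityGrad δ ρ x‖ ≤ A) (x x' : ℝᵈ) :
    ‖commutator r ρ g x - commutator r ρ g x'‖ ≤
      (2 * truncationConst d γ + translationConst d γ + A) * (y * ‖x - x'‖ ^ γ) := by
  have hy := h.holderConst_nonneg
  rcases eq_or_ne x x' with rfl | hne
  · simp [Real.zero_rpow hγ0.ne']
  have hconst := truncationConst_nonneg d hγ0 (hγ1.trans one_lt_two)
  -- Compare with the scale `δ = max |x - x'| r`; for `δ = r` the near parts vanish.
  have hnear (x'' : ℝᵈ) : ‖commutator r ρ g x'' - commutator (max ‖x - x'‖ r) ρ g x''‖ ≤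
      truncationConst d γ * (y * ‖x - x'‖ ^ γ) := by
    rcases le_total ‖x - x'‖ r with hxr | hxr
    · rw [max_eq_right hxr, sub_self, norm_zero]
      positivity
    · rw [max_eq_left hxr]
      exact h.norm_commutator_sub_commutator_le hγ0 (hγ1.trans one_lt_two) hr hxr x''
  have hfar : ‖commutator (max ‖x - x'‖ r) ρ g x - commutator (max ‖x - x'‖ r) ρ g x'‖ ≤
      (translationConst d γ + A) * (y * ‖x - x'‖ ^ γ) := by
    refine (h.norm_commutator_sub_le_of_le hγ0.le hγ1 hne (le_max_left _ r)).trans ?_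
    gcongr
    exact hA _ (le_max_right _ r) x
  have htriangle := norm_sub_le_norm_sub_add_norm_sub (commutator r ρ g x)
    (commutator (max ‖x - x'‖ r) ρ g x) (commutator r ρ g x')
  have htriangle' := norm_sub_le_norm_sub_add_norm_sub (commutator (max ‖x - x'‖ r) ρ g x)
    (commutator (max ‖x - x'‖ r) ρ g x') (commutator r ρ g x')
  have hnear' := hnear x'
  rw [norm_sub_rev] at hnear'
  linarith [hnear x]

end IsSmoothPatch

end Commutator

/-! ### The logarithmic bound for the velocity gradient -/

section LinearAlgebra

variable {E ι : Type*} [NormedAddCommGroup E] [InnerProductSpace ℝ E] [Fintype ι]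

lemma abs_inner_self_le_of_trace {S : E →L[ℝ] E} (hS : ∀ u w, ⟪S u, w⟫ = ⟪u, S w⟫)
    (b : OrthonormalBasis ι ℝ E) {n : E} {A T : ℝ}
    (hA : ∀ u w, |⟪S u, w⟫ - ⟪S u, n⟫ * ⟪n, w⟫| ≤ A * (‖u‖ * ‖w‖))
    (hT : |∑ i, ⟪S (b i), b i⟫| ≤ T) : |⟪S n, n⟫| ≤ T + Fintype.card ι * A := by
  have htrace : ∑ i, ⟪S (b i), n⟫ * ⟪n, b i⟫ = ⟪S n, n⟫ := by
    have hcomm (i) : ⟪S (b i), n⟫ * ⟪n, b i⟫ = ⟪n, b i⟫ * ⟪b i, S n⟫ := by rw [hS, mul_comm]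
    rw [Finset.sum_congr rfl fun i _ => hcomm i, b.sum_inner_mul_inner, real_inner_comm]
  have hdiff : |∑ i, (⟪S (b i), b i⟫ - ⟪S (b i), n⟫ * ⟪n, b i⟫)| ≤ Fintype.card ι * A :=
    (Finset.abs_sum_le_sum_abs _ _).trans
      ((Finset.sum_le_sum fun i _ => hA (b i) (b i)).trans_eq (by simp))
  rw [Finset.sum_sub_distrib, htrace] at hdiff
  have := abs_sub_abs_le_abs_sub ⟪S n, n⟫ (∑ i, ⟪S (b i), b i⟫)
  rw [abs_sub_comm] at this
  linarith

/- In an orthonormal basis whose first vector is `n`, the assumption `hA` bounds every entry of the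
symmetric matrix `S` except the one at `(n, n)`, which is controlled by the trace. -/
lemma opNorm_le_of_rankOne_of_trace {S : E →L[ℝ] E} (hS : ∀ u w, ⟪S u, w⟫ = ⟪u, S w⟫)
    (b : OrthonormalBasis ι ℝ E) {n : E} (hn : ‖n‖ = 1) {A T : ℝ} (hA0 : 0 ≤ A)
    (hA : ∀ u w, |⟪S u, w⟫ - ⟪S u, n⟫ * ⟪n, w⟫| ≤ A * (‖u‖ * ‖w‖))
    (hT : |∑ i, ⟪S (b i), b i⟫| ≤ T) : ‖S‖ ≤ T + (Fintype.card ι + 2) * A := by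
  have hT0 : 0 ≤ T := (abs_nonneg _).trans hT
  have hn_inner (w : E) : |⟪n, w⟫| ≤ ‖w‖ := by simpa [hn] using abs_real_inner_le_norm n w
  have hSn (u : E) : |⟪S u, n⟫| ≤ (T + (Fintype.card ι + 1) * A) * ‖u‖ := by
    have hentry := hA n u
    rw [hS n u, real_inner_comm (S u) n, hn, one_mul] at hentry
    have hproj : |⟪S n, n⟫ * ⟪n, u⟫| ≤ (T + Fintype.card ι * A) * ‖u‖ := by
      rw [abs_mul]
      gcongr
      exacts [abs_inner_self_le_of_trace hS b hA hT, hn_inner u]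
    linarith [abs_sub_abs_le_abs_sub ⟪S u, n⟫ (⟪S n, n⟫ * ⟪n, u⟫)]
  refine opNorm_le_of_abs_inner_le (by positivity) fun u w => ?_
  have hproj : |⟪S u, n⟫ * ⟪n, w⟫| ≤ (T + (Fintype.card ι + 1) * A) * ‖u‖ * ‖w‖ := by
    rw [abs_mul]
    gcongr
    exacts [hSn u, hn_inner w]
  linarith [hA u w, abs_sub_abs_le_abs_sub ⟪S u, w⟫ (⟪S u, n⟫ * ⟪n, w⟫)]

lemma opNorm_le_of_antisymm_le_of_trace {S : E →L[ℝ] E} (hS : ∀ u w, ⟪S u, w⟫ = ⟪u, S w⟫)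
    (b : OrthonormalBasis ι ℝ E) {G : E} (hG : G ≠ 0) {A T : ℝ} (hA0 : 0 ≤ A)
    (hA : ∀ u w p, |⟪S u, w⟫ * ⟪G, p⟫ - ⟪S u, p⟫ * ⟪G, w⟫| ≤ A * ‖G‖ * (‖u‖ * ‖w‖ * ‖p‖))
    (hT : |∑ i, ⟪S (b i), b i⟫| ≤ T) : ‖S‖ ≤ T + (Fintype.card ι + 2) * A := by
  have hG0 : 0 < ‖G‖ := norm_pos_iff.2 hG
  have hn : ‖‖G‖⁻¹ • G‖ = 1 := norm_smul_inv_norm (𝕜 := ℝ) hG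
  refine opNorm_le_of_rankOne_of_trace hS b hn hA0 (fun u w => ?_) hT
  refine le_of_mul_le_mul_left ?_ hG0
  have hGn : ⟪G, ‖G‖⁻¹ • G⟫ = ‖G‖ := by
    rw [real_inner_smul_right, real_inner_self_eq_norm_sq]
    field_simp
  have := hA u w (‖G‖⁻¹ • G)
  rw [hGn, hn] at this
  rw [← abs_of_pos hG0, ← abs_mul, abs_of_pos hG0, real_inner_smul_left]
  calc _ = |⟪S u, w⟫ * ‖G‖ - ⟪S u, ‖G‖⁻¹ • G⟫ * ⟪G, w⟫| := by congr 1; field_simp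
    _ ≤ _ := this
    _ = _ := by ring

lemma opNorm_le_of_forall_unit_abs_inner_self_le {S : E →L[ℝ] E}
    (hS : ∀ u w, ⟪S u, w⟫ = ⟪u, S w⟫) {T : ℝ} (hT : 0 ≤ T)
    (h : ∀ u, ‖u‖ = 1 → |⟪S u, u⟫| ≤ T) : ‖S‖ ≤ T := by
  rw [ContinuousLinearMap.norm_eq_iSup_rayleighQuotient S hS]
  refine ciSup_le fun x => ?_
  rcases eq_or_ne x 0 with rfl | hx
  · simpa [ContinuousLinearMap.rayleighQuotient] using hT
  · rw [← S.rayleigh_smul x (inv_ne_zero (norm_ne_zero_iff.2 hx))]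
    have hunit : ‖‖x‖⁻¹ • x‖ = 1 := norm_smul_inv_norm (𝕜 := ℝ) hx
    simpa [ContinuousLinearMap.rayleighQuotient, ContinuousLinearMap.reApplyInnerSelf, hunit]
      using h _ hunit

end LinearAlgebra

section LogBound

variable {γ y R r : ℝ} {ρ f : EuclideanSpace ℝ (Fin d) → ℝ}
  {g : EuclideanSpace ℝ (Fin d) → EuclideanSpace ℝ (Fin d)}

lemma IsDensity.trace_velocityGrad (h : IsDensity R ρ) (hr : 0 < r) (x : ℝᵈ)
    (b : OrthonormalBasis (Fin d) ℝ ℝᵈ) :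
    ∑ i, ⟪velocityGrad r ρ x (b i), b i⟫ = ∫ z, ρ z * regKernelDiv d r (x - z) := by
  have hcont := continuous_regKernelDeriv (E := ℝᵈ) d hr
  simp only [h.inner_velocityGrad hr]
  rw [← integral_finsetSum]
  · simp only [← Finset.mul_sum, trace_regKernelDeriv hr _ b]
  · exact fun i _ => h.integrable_smul (by fun_prop)

lemma IsDensity.abs_trace_velocityGrad_le [NeZero d] (h : IsDensity R ρ) (hr : 0 < r) (x : ℝᵈ)
    (b : OrthonormalBasis (Fin d) ℝ ℝᵈ) :
    |∑ i, ⟪velocityGrad r ρ x (b i), b i⟫| ≤ regKernelDivConst d 0 := by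
  rw [h.trace_velocityGrad hr, ← Real.norm_eq_abs]
  refine (norm_integral_le_of_le_regKernelDiv hr le_rfl two_pos x zero_le_one fun z => ?_).trans_eq
    (by simp)
  have hdiv := regKernelDiv_nonneg d r (x - z)
  rw [Real.norm_of_nonneg (mul_nonneg (h.nonneg z) hdiv), Real.rpow_zero, mul_one, mul_one]
  exact mul_le_of_le_one_left hdiv (h.le_one z)

namespace IsSmoothPatch

lemma inner_velocityGrad_mul_sub_derivPairing (h : IsSmoothPatch γ y R ρ f g) (hr : 0 < r)
    (x u w p : ℝᵈ) :
    ⟪velocityGrad r ρ x u, w⟫ * ⟪g x, p⟫ - derivPairing r ρ g x u w p =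
      ∫ z, ρ z * (⟪regKernelDeriv d r (x - z) u, w⟫ * ⟪g x - g z, p⟫) := by
  have hcont := continuous_regKernelDeriv (E := ℝᵈ) d hr
  have hint : Integrable fun z => ρ z * ⟪regKernelDeriv d r (x - z) u, w⟫ * ⟪g x, p⟫ :=
    (h.integrable_smul (by fun_prop)).mul_const _
  rw [h.inner_velocityGrad hr, ← integral_mul_const, derivPairing,
    ← integral_sub hint (h.integrable_derivPairing hr x u w p)]
  congr 1 with z
  rw [inner_sub_left]
  ring

lemma abs_inner_velocityGrad_mul_sub_le [NeZero d] (hγ0 : 0 < γ) (hγ2 : γ < 2)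
    (h : IsSmoothPatch γ y R ρ f g) {δ : ℝ} (hr : 0 < r) (hrδ : r ≤ δ) (x u w p : ℝᵈ) :
    |⟪(velocityGrad r ρ x - velocityGrad δ ρ x) u, w⟫ * ⟪g x, p⟫ -
        (derivPairing r ρ g x u w p - derivPairing δ ρ g x u w p)| ≤
      truncationConst d γ * (y * (‖u‖ * ‖w‖ * ‖p‖) * δ ^ γ) := by
  have hδ := hr.trans_le hrδ
  have hy := h.holderConst_nonneg
  have hint {s : ℝ} (hs : 0 < s) :
      Integrable fun z => ρ z * (⟪regKernelDeriv d s (x - z) u, w⟫ * ⟪g x - g z, p⟫) := by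
    have := h.continuous_grad
    have := continuous_regKernelDeriv (E := ℝᵈ) d hs
    exact h.integrable_smul (by fun_prop)
  have hsplit : ⟪(velocityGrad r ρ x - velocityGrad δ ρ x) u, w⟫ * ⟪g x, p⟫ -
      (derivPairing r ρ g x u w p - derivPairing δ ρ g x u w p) =
      ∫ z, ρ z * (⟪(regKernelDeriv d r (x - z) - regKernelDeriv d δ (x - z)) u, w⟫ *
        ⟪g x - g z, p⟫) := by
    simp only [sub_apply, inner_sub_left _ _ w, sub_mul, mul_sub]
    rw [integral_sub (hint hr) (hint hδ), ← h.inner_velocityGrad_mul_sub_derivPairing hr,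
      ← h.inner_velocityGrad_mul_sub_derivPairing hδ]
    ring
  rw [hsplit, ← Real.norm_eq_abs]
  refine norm_integral_le_of_le_truncation hγ0 hγ2 hr hrδ x (by positivity) fun z => ?_
  set D := regKernelDeriv d r (x - z) - regKernelDeriv d δ (x - z)
  calc ‖ρ z * (⟪D u, w⟫ * ⟪g x - g z, p⟫)‖ = ρ z * (‖⟪D u, w⟫‖ * ‖⟪g x - g z, p⟫‖) := by
        rw [norm_mul, norm_mul, Real.norm_of_nonneg (h.nonneg z)]
    _ ≤ 1 * (‖D‖ * ‖u‖ * ‖w‖ * (y * ‖x - z‖ ^ γ * ‖p‖)) := by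
      gcongr
      · exact h.le_one z
      · exact (norm_inner_le_norm _ _).trans (by gcongr; exact D.le_opNorm u)
      · exact (norm_inner_le_norm _ _).trans (by gcongr; exact h.holder x z)
    _ = _ := by ring

/- `derivPairing` is totally symmetric because `ρ g` is a gradient, so the difference of the two
velocity gradients nearly annihilates the directions orthogonal to `g x`. -/
lemma norm_velocityGrad_sub_le_of_le_norm [NeZero d] (hγ0 : 0 < γ) (hγ2 : γ < 2)
    (h : IsSmoothPatch γ y R ρ f g) {δ : ℝ} (hr : 0 < r) (hrδ : r ≤ δ) {x : ℝᵈ} (hg0 : g x ≠ 0)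
    (hg : y * δ ^ γ ≤ ‖g x‖) :
    ‖velocityGrad r ρ x - velocityGrad δ ρ x‖ ≤
      2 * regKernelDivConst d 0 + (d + 2) * (2 * truncationConst d γ) := by
  have hδ := hr.trans_le hrδ
  have hconst := truncationConst_nonneg d hγ0 hγ2
  have hsymm (u w : ℝᵈ) : ⟪(velocityGrad r ρ x - velocityGrad δ ρ x) u, w⟫ =
      ⟪u, (velocityGrad r ρ x - velocityGrad δ ρ x) w⟫ := by
    simp only [sub_apply, inner_sub_left, inner_sub_right, h.inner_velocityGrad_symm hr,
      h.inner_velocityGrad_symm hδ]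
  have hbound (u w p : ℝᵈ) := (h.abs_inner_velocityGrad_mul_sub_le hγ0 hγ2 hr hrδ x u w p).trans <|
    calc truncationConst d γ * (y * (‖u‖ * ‖w‖ * ‖p‖) * δ ^ γ)
        = truncationConst d γ * (y * δ ^ γ) * (‖u‖ * ‖w‖ * ‖p‖) := by ring
      _ ≤ truncationConst d γ * ‖g x‖ * (‖u‖ * ‖w‖ * ‖p‖) := by gcongr
  let b := EuclideanSpace.basisFun (Fin d) ℝ
  have htrace : |∑ i, ⟪(velocityGrad r ρ x - velocityGrad δ ρ x) (b i), b i⟫| ≤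
      2 * regKernelDivConst d 0 := by
    simp only [sub_apply, inner_sub_left, Finset.sum_sub_distrib]
    refine (abs_sub _ _).trans ?_
    linarith [h.abs_trace_velocityGrad_le hr x b, h.abs_trace_velocityGrad_le hδ x b]
  have hmain := opNorm_le_of_antisymm_le_of_trace hsymm b hg0 (A := 2 * truncationConst d γ)
    (by positivity) (fun u w p => ?_) htrace
  · simpa using hmain
  · have huwp := hbound u w p
    have hupw := hbound u p w
    rw [h.derivPairing_symm hr x u p w, h.derivPairing_symm hδ x u p w, mul_right_comm ‖u‖] at hupw
    rw [abs_le] at huwp hupw ⊢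
    constructor <;> linarith

end IsSmoothPatch

section Isotropy

lemma integrableOn_ball_of_continuous {V : Type*} [NormedAddCommGroup V] {F : ℝᵈ → V}
    (hF : Continuous F) (x : ℝᵈ) (δ : ℝ) : IntegrableOn F (ball x δ) :=
  (hF.continuousOn.integrableOn_compact (isCompact_closedBall x δ)).mono_set ball_subset_closedBall

lemma inner_setIntegral_regKernelDeriv (hr : 0 < r) (δ : ℝ) (u w : ℝᵈ) :
    ⟪(∫ z in ball (0 : ℝᵈ) δ, regKernelDeriv d r z) u, w⟫ =
      ∫ z in ball (0 : ℝᵈ) δ, ⟪regKernelDeriv d r z u, w⟫ := by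
  have hcont := continuous_regKernelDeriv (E := ℝᵈ) d hr
  rw [ContinuousLinearMap.integral_apply (integrableOn_ball_of_continuous hcont 0 δ),
    real_inner_comm, ← integral_inner (integrableOn_ball_of_continuous (by fun_prop) 0 δ)]
  simp only [real_inner_comm]

lemma inner_setIntegral_regKernelDeriv_map (hr : 0 < r) (δ : ℝ) (e : ℝᵈ ≃ₗᵢ[ℝ] ℝᵈ) (u w : ℝᵈ) :
    ⟪(∫ z in ball (0 : ℝᵈ) δ, regKernelDeriv d r z) (e u), e w⟫ =
      ⟪(∫ z in ball (0 : ℝᵈ) δ, regKernelDeriv d r z) u, w⟫ := by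
  have hball : (e : ℝᵈ → ℝᵈ) ⁻¹' ball 0 δ = ball 0 δ := by
    ext z
    simp
  rw [inner_setIntegral_regKernelDeriv hr, inner_setIntegral_regKernelDeriv hr,
    ← e.measurePreserving.setIntegral_preimage_emb e.toMeasurableEquiv.measurableEmbedding, hball]
  simp only [inner_regKernelDeriv, regNorm, e.norm_map, e.inner_map_map]

lemma trace_setIntegral_regKernelDeriv (hr : 0 < r) (δ : ℝ) (b : OrthonormalBasis (Fin d) ℝ ℝᵈ) :
    ∑ i, ⟪(∫ z in ball (0 : ℝᵈ) δ, regKernelDeriv d r z) (b i), b i⟫ =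
      ∫ z in ball (0 : ℝᵈ) δ, regKernelDiv d r z := by
  have hcont := continuous_regKernelDeriv (E := ℝᵈ) d hr
  simp only [inner_setIntegral_regKernelDeriv hr]
  rw [← integral_finsetSum _ fun i _ => integrableOn_ball_of_continuous (by fun_prop) 0 δ]
  simp only [trace_regKernelDeriv hr _ b]

lemma abs_setIntegral_regKernelDiv_le [NeZero d] (hr : 0 < r) (δ : ℝ) :
    |∫ z in ball (0 : ℝᵈ) δ, regKernelDiv d r z| ≤ regKernelDivConst d 0 := by
  rw [← integral_indicator measurableSet_ball, ← Real.norm_eq_abs]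
  refine (norm_integral_le_of_le_regKernelDiv hr le_rfl two_pos 0 zero_le_one fun z => ?_).trans_eq
    (by simp)
  rw [Real.rpow_zero, mul_one, mul_one]
  refine (norm_indicator_le_norm_self _ z).trans_eq ?_
  rw [Real.norm_of_nonneg (regKernelDiv_nonneg d r z), zero_sub, regKernelDiv, regKernelDiv,
    regNorm, regNorm, norm_neg]

lemma norm_setIntegral_regKernelDeriv_le [NeZero d] (hr : 0 < r) (δ : ℝ) :
    ‖∫ z in ball (0 : ℝᵈ) δ, regKernelDeriv d r z‖ ≤ regKernelDivConst d 0 := by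
  refine opNorm_le_of_forall_unit_abs_inner_self_le (fun u w => ?_)
    (regKernelDivConst_nonneg d le_rfl two_pos) fun u hu => ?_
  · rw [real_inner_comm _ u, inner_setIntegral_regKernelDeriv hr,
      inner_setIntegral_regKernelDeriv hr]
    simp only [inner_regKernelDeriv_symm d r _ u w, real_inner_comm]
  set Q := ∫ z in ball (0 : ℝᵈ) δ, regKernelDeriv d r z
  let b := EuclideanSpace.basisFun (Fin d) ℝ
  have hisotropic (i) : ⟪Q (b i), b i⟫ = ⟪Q u, u⟫ := by
    have hreflect := Submodule.reflection_sub (v := u) (w := b i) (by rw [hu, b.norm_eq_one])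
    simpa only [hreflect] using
      inner_setIntegral_regKernelDeriv_map hr δ (Submodule.span ℝ {u - b i})ᗮ.reflection u u
  have htrace := abs_setIntegral_regKernelDiv_le (d := d) hr δ
  rw [← trace_setIntegral_regKernelDeriv hr δ b, Finset.sum_congr rfl fun i _ => hisotropic i,
    Finset.sum_const, Finset.card_univ, Fintype.card_fin, nsmul_eq_mul, abs_mul,
    Nat.abs_cast] at htrace
  exact (le_mul_of_one_le_left (abs_nonneg _)
    (Nat.one_le_cast.2 (Nat.pos_of_neZero d))).trans htrace

lemma setIntegral_ball_sub_left {V : Type*} [NormedAddCommGroup V] [NormedSpace ℝ V]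
    (F : ℝᵈ → V) (x : ℝᵈ) (δ : ℝ) : ∫ z in ball x δ, F (x - z) = ∫ z in ball (0 : ℝᵈ) δ, F z := by
  rw [← (volume.measurePreserving_sub_left x).setIntegral_preimage_emb
    (MeasurableEquiv.subLeft x).measurableEmbedding F (ball 0 δ)]
  congr 2
  ext z
  simp [dist_eq_norm, norm_sub_rev]

end Isotropy

/-- The constant in the logarithmic bound `IsDensity.norm_velocityGrad_le_of_le` for the part of the
velocity gradient generated away from the singularity. -/
noncomputable def farFieldConst (d : ℕ) (R : ℝ) : ℝ :=
  (1 + d) * Real.exp 1 *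
    (sphereVol d * 2 + volume.real (closedBall (0 : EuclideanSpace ℝ (Fin d)) R))

lemma rpow_neg_inv_one_sub_log_le {δ : ℝ} (hδ : 0 < δ) (hδ1 : δ ≤ 1) :
    δ ^ (-(1 - Real.log δ)⁻¹) ≤ Real.exp 1 := by
  have hlog : 0 < 1 - Real.log δ := by linarith [Real.log_nonpos hδ.le hδ1]
  rw [Real.rpow_def_of_pos hδ, Real.exp_le_exp, mul_neg, ← neg_mul, ← div_eq_mul_inv,
    div_le_one hlog]
  linarith

lemma scaleWeight_eq_of_le (p p' q : ℝ) {l : ℝ} (hl : 0 < l) {z : ℝᵈ} (hz : l ≤ ‖z‖) :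
    scaleWeight p q l z = scaleWeight p' q l z := by
  unfold scaleWeight radialProfile
  split_ifs with hzl
  · rw [← hz.antisymm hzl, ← Real.rpow_add hl, ← Real.rpow_add hl]
    ring_nf
  · rfl

namespace IsDensity

lemma norm_setIntegral_compl_ball_le [NeZero d] (h : IsDensity R ρ) {δ : ℝ} (hr : 0 < r)
    (hrδ : r ≤ δ) (x : ℝᵈ) :
    ‖∫ z in (ball x δ)ᶜ, ρ z • (regKernelDeriv d r (x - z) - regKernelDeriv d δ (x - z))‖ ≤
      (2 + 2 * d + d * (d + 3)) * (sphereVol d * (1 / d + 1 / 2)) := by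
  have hd : (0 : ℝ) < d := Nat.cast_pos.2 (Nat.pos_of_neZero d)
  have hδ := hr.trans_le hrδ
  rw [← integral_indicator measurableSet_ball.compl]
  refine norm_integral_le_of_norm_le_scaleWeight hd two_pos hδ x fun z hz => ?_
  by_cases hball : z ∈ ball x δ
  · rw [indicator_of_notMem (notMem_compl_iff.2 hball), norm_zero]
    have := scaleWeight_nonneg d 2 hδ (x - z)
    positivity
  · rw [indicator_of_mem hball, norm_smul, Real.norm_of_nonneg (h.nonneg z)]
    refine (mul_le_of_le_one_left (norm_nonneg _) (h.le_one z)).trans ?_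
    rw [scaleWeight_eq_of_le d 0 2 hδ (by simpa [dist_eq_norm, norm_sub_rev] using hball)]
    exact norm_regKernelDeriv_sub_le_scaleWeight hr.le hrδ (sub_ne_zero.2 hz.symm)

lemma norm_velocityGrad_sub_le_of_eqOn_ball [NeZero d] (h : IsDensity R ρ) {δ : ℝ} (hr : 0 < r)
    (hrδ : r ≤ δ) {x : ℝᵈ} (hx : ∀ x' ∈ ball x δ, ρ x' = ρ x) :
    ‖velocityGrad r ρ x - velocityGrad δ ρ x‖ ≤
      (2 + 2 * d + d * (d + 3)) * (sphereVol d * (1 / d + 1 / 2)) +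
        2 * regKernelDivConst d 0 := by
  have hδ := hr.trans_le hrδ
  have hcont {s : ℝ} (hs : 0 < s) := continuous_regKernelDeriv (E := ℝᵈ) d hs
  have hint {s : ℝ} (hs : 0 < s) : Integrable fun z => ρ z • regKernelDeriv d s (x - z) :=
    h.integrable_smul ((hcont hs).comp (continuous_sub_left x))
  have hball : ‖∫ z in ball x δ,
      ρ z • (regKernelDeriv d r (x - z) - regKernelDeriv d δ (x - z))‖ ≤
      2 * regKernelDivConst d 0 := by
    have hρ : EqOn
        (fun z => ρ z • (regKernelDeriv d r (x - z) - regKernelDeriv d δ (x - z)))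
        (fun z => ρ x • (regKernelDeriv d r (x - z) - regKernelDeriv d δ (x - z))) (ball x δ) :=
      fun z hz => by simp only [hx z hz]
    rw [setIntegral_congr_fun measurableSet_ball hρ, integral_smul,
      setIntegral_ball_sub_left (fun z => regKernelDeriv d r z - regKernelDeriv d δ z) x δ,
      integral_sub (integrableOn_ball_of_continuous (hcont hr) 0 δ)
        (integrableOn_ball_of_continuous (hcont hδ) 0 δ), norm_smul,
      Real.norm_of_nonneg (h.nonneg x)]
    refine (mul_le_of_le_one_left (norm_nonneg _) (h.le_one x)).trans
      ((norm_sub_le _ _).trans ?_)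
    linarith [norm_setIntegral_regKernelDeriv_le (d := d) hr δ,
      norm_setIntegral_regKernelDeriv_le (d := d) hδ δ]
  rw [velocityGrad, velocityGrad, ← integral_sub (hint hr) (hint hδ)]
  simp only [← smul_sub]
  rw [← integral_add_compl measurableSet_ball]
  · exact (norm_add_le _ _).trans
      ((add_le_add hball (h.norm_setIntegral_compl_ball_le hr hrδ x)).trans_eq (add_comm _ _))
  · exact h.integrable_smul (((hcont hr).sub (hcont hδ)).comp (continuous_sub_left x))

/- `|z| ^ (-d) ≤ e |z| ^ (κ - d)` for `|z| ≥ δ` and `κ = (1 - log δ)⁻¹`; integrating the right-hand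
side over a bounded set costs `κ⁻¹`. -/
lemma norm_velocityGrad_le_of_le [NeZero d] (h : IsDensity R ρ) {δ : ℝ} (hδ : 0 < δ) (hδ1 : δ ≤ 1)
    (hr : δ ≤ r) (x : ℝᵈ) : ‖velocityGrad r ρ x‖ ≤ farFieldConst d R * (1 - Real.log δ) := by
  have hlog : Real.log δ ≤ 0 := Real.log_nonpos hδ.le hδ1
  set κ := (1 - Real.log δ)⁻¹ with hκ
  have hκ0 : 0 < κ := inv_pos.2 (by linarith)
  have hκ1 : κ ≤ 1 := inv_le_one_of_one_le₀ (by linarith)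
  have hd : (1 : ℝ) ≤ d := Nat.one_le_cast.2 (Nat.pos_of_neZero d)
  have hr0 := hδ.trans_le hr
  have hkernel (z : ℝᵈ) (hz : z ≠ 0) :
      ‖regKernelDeriv d r z‖ ≤ (1 + d) * Real.exp 1 * ‖z‖ ^ (κ - d) := by
    have hR := regNorm_pos hr0 z
    calc ‖regKernelDeriv d r z‖ ≤ (1 + d) * (regNorm r z ^ d)⁻¹ := norm_regKernelDeriv_le d hR
      _ = (1 + d) * (regNorm r z ^ (-κ) * regNorm r z ^ (κ - d)) := by
        rw [← Real.rpow_add hR, ← Real.rpow_natCast, ← Real.rpow_neg hR.le]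
        ring_nf
      _ ≤ (1 + d) * (δ ^ (-κ) * ‖z‖ ^ (κ - d)) := by
        gcongr ?_ * (?_ * ?_)
        · exact Real.rpow_le_rpow_of_nonpos hδ (hr.trans (le_regNorm r z)) (by linarith)
        · exact Real.rpow_le_rpow_of_nonpos (norm_pos_iff.2 hz) (norm_le_regNorm r z) (by linarith)
      _ ≤ (1 + d) * (Real.exp 1 * ‖z‖ ^ (κ - d)) := by
        gcongr
        exact rpow_neg_inv_one_sub_log_le hδ hδ1
      _ = _ := by ring
  refine (norm_integral_le_of_norm_le_rpow (C := (1 + d) * Real.exp 1) (R := R) hκ0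
    (hκ1.trans hd) one_pos (by positivity) x (fun z hz => ?_)
    fun z hz => by rw [h.eq_zero z hz, zero_smul]).trans ?_
  · rw [norm_smul, Real.norm_of_nonneg (h.nonneg z)]
    exact (mul_le_of_le_one_left (norm_nonneg _) (h.le_one z)).trans
      (hkernel _ (sub_ne_zero.2 hz.symm))
  · have hS := sphereVol_nonneg d
    have hvol : 0 ≤ volume.real (closedBall (0 : ℝᵈ) R) := measureReal_nonneg
    rw [Real.one_rpow, Real.one_rpow, one_mul, one_mul, farFieldConst, mul_assoc _ _ (1 - _),
      one_div, hκ, inv_inv]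
    gcongr
    nlinarith

end IsDensity

/-- The constant in `IsSmoothPatch.norm_velocityGrad_le`. -/
noncomputable def velocityGradConst (d : ℕ) (γ R : ℝ) : ℝ :=
  farFieldConst d R + (2 * regKernelDivConst d 0 + (d + 2) * (2 * truncationConst d γ)) +
    ((2 + 2 * d + d * (d + 3)) * (sphereVol d * (1 / d + 1 / 2)) + 2 * regKernelDivConst d 0)

lemma velocityGradConst_nonneg (d : ℕ) (hγ0 : 0 < γ) (hγ2 : γ < 2) (R : ℝ) :
    0 ≤ velocityGradConst d γ R := by
  have := sphereVol_nonneg d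
  have := regKernelDivConst_nonneg d le_rfl two_pos
  have := truncationConst_nonneg d hγ0 hγ2
  unfold velocityGradConst farFieldConst
  positivity

lemma IsSmoothPatch.norm_velocityGrad_le [NeZero d] (hγ0 : 0 < γ) (hγ2 : γ < 2)
    (h : IsSmoothPatch γ y R ρ f g) {δ : ℝ} (hδ : 0 < δ) (hδ1 : δ ≤ 1) {x : ℝᵈ}
    (hx : (g x ≠ 0 ∧ y * δ ^ γ ≤ ‖g x‖) ∨ ∀ x' ∈ ball x δ, ρ x' = ρ x) (hr : 0 < r) :
    ‖velocityGrad r ρ x‖ ≤ velocityGradConst d γ R * (1 - Real.log δ) := by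
  have hlog : 1 ≤ 1 - Real.log δ := by linarith [Real.log_nonpos hδ.le hδ1]
  have hS := sphereVol_nonneg d
  have hdiv := regKernelDivConst_nonneg d le_rfl two_pos
  have htrunc := truncationConst_nonneg d hγ0 hγ2
  set A := 2 * regKernelDivConst d 0 + (d + 2) * (2 * truncationConst d γ)
  set B := (2 + 2 * d + d * (d + 3)) * (sphereVol d * (1 / d + 1 / 2)) +
    2 * regKernelDivConst d 0
  have hA0 : 0 ≤ A := by positivity
  have hB0 : 0 ≤ B := by positivity
  have hconst : velocityGradConst d γ R * (1 - Real.log δ) =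
      farFieldConst d R * (1 - Real.log δ) + (A + B) * (1 - Real.log δ) := by
    rw [velocityGradConst]
    ring
  rw [hconst]
  have hAB : A + B ≤ (A + B) * (1 - Real.log δ) := le_mul_of_one_le_right (by positivity) hlog
  rcases le_total δ r with hδr | hrδ
  · linarith [h.norm_velocityGrad_le_of_le hδ hδ1 hδr x]
  · have hfar := h.norm_velocityGrad_le_of_le hδ hδ1 le_rfl x
    have hnear : ‖velocityGrad r ρ x - velocityGrad δ ρ x‖ ≤ A + B := by
      rcases hx with ⟨hg0, hg⟩ | hx
      · exact (h.norm_velocityGrad_sub_le_of_le_norm hγ0 hγ2 hr hrδ hg0 hg).trans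
          (le_add_of_nonneg_right hB0)
      · exact (h.norm_velocityGrad_sub_le_of_eqOn_ball hr hrδ hx).trans
          (le_add_of_nonneg_left hA0)
    linarith [norm_sub_norm_le (velocityGrad r ρ x) (velocityGrad δ ρ x)]

end LogBound

section Estimates

/-- The `γ`-Hölder constant of `regKernelDeriv n r`. -/
noncomputable def regKernelDerivHolderConst (n : ℕ) (γ r : ℝ) : ℝ :=
  (n * (n + 5) * 2 ^ (n + 1)) * (r ^ (n + 1))⁻¹ * r ^ (1 - γ) +
    2 * ((1 + n) * (r ^ n)⁻¹) * r ^ (-γ)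

lemma regKernelDerivHolderConst_nonneg (n : ℕ) (γ : ℝ) {r : ℝ} (hr : 0 < r) :
    0 ≤ regKernelDerivHolderConst n γ r := by
  unfold regKernelDerivHolderConst
  positivity

lemma le_rpow_one_sub_mul_rpow {a r γ : ℝ} (ha : 0 ≤ a) (har : a ≤ r) (hγ0 : 0 < γ) (hγ1 : γ ≤ 1) :
    a ≤ r ^ (1 - γ) * a ^ γ := by
  rcases ha.eq_or_lt with rfl | ha
  · rw [Real.zero_rpow hγ0.ne', mul_zero]
  calc a = a ^ (1 - γ) * a ^ γ := by rw [← Real.rpow_add ha, sub_add_cancel, Real.rpow_one]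
    _ ≤ r ^ (1 - γ) * a ^ γ := by gcongr

lemma one_le_rpow_neg_mul_rpow {a r γ : ℝ} (hr : 0 < r) (hra : r ≤ a) (hγ0 : 0 ≤ γ) :
    1 ≤ r ^ (-γ) * a ^ γ := by
  calc 1 = r ^ (-γ) * r ^ γ := by rw [← Real.rpow_add hr, neg_add_cancel, Real.rpow_zero]
    _ ≤ r ^ (-γ) * a ^ γ := by gcongr

lemma norm_regKernelDeriv_sub_le_rpow {E : Type*} [NormedAddCommGroup E] [InnerProductSpace ℝ E]
    (n : ℕ) {γ r : ℝ} (hγ0 : 0 < γ) (hγ1 : γ ≤ 1) (hr : 0 < r) (z z' : E) :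
    ‖regKernelDeriv n r z - regKernelDeriv n r z'‖ ≤
      regKernelDerivHolderConst n γ r * ‖z - z'‖ ^ γ := by
  rw [regKernelDerivHolderConst, add_mul]
  rcases le_total ‖z - z'‖ r with h | h
  · refine le_add_of_le_of_nonneg ?_ (by positivity)
    rw [mul_assoc]
    refine (norm_regKernelDeriv_sub_le n hr h).trans ?_
    gcongr
    · exact le_regNorm r z'
    · exact le_rpow_one_sub_mul_rpow (norm_nonneg _) h hγ0 hγ1
  · refine le_add_of_nonneg_of_le (by positivity) ?_
    have hbound (w : E) : ‖regKernelDeriv n r w‖ ≤ (1 + n) * (r ^ n)⁻¹ := by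
      refine (norm_regKernelDeriv_le n (regNorm_pos hr w)).trans ?_
      gcongr
      exact le_regNorm r w
    calc _ ≤ 2 * ((1 + n) * (r ^ n)⁻¹) := by
          linarith [norm_sub_le (regKernelDeriv n r z) (regKernelDeriv n r z'), hbound z, hbound z']
      _ ≤ 2 * ((1 + n) * (r ^ n)⁻¹) * (r ^ (-γ) * ‖z - z'‖ ^ γ) :=
          le_mul_of_one_le_right (by positivity) (one_le_rpow_neg_mul_rpow hr h hγ0.le)
      _ = _ := (mul_assoc ..).symm

lemma norm_regKernel_le_rpow {E : Type*} [NormedAddCommGroup E] [InnerProductSpace ℝ E] (n : ℕ)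
    (r : ℝ) {z : E} (hz : z ≠ 0) : ‖regKernel n r z‖ ≤ ‖z‖ ^ (1 - n : ℝ) := by
  have hz0 : 0 < ‖z‖ := norm_pos_iff.2 hz
  rw [norm_regKernel_eq, Real.rpow_sub hz0, Real.rpow_one, Real.rpow_natCast, div_eq_inv_mul]
  gcongr
  exact norm_le_regNorm r z

variable {γ y R r : ℝ} {ρ f : EuclideanSpace ℝ (Fin d) → ℝ}
  {g : EuclideanSpace ℝ (Fin d) → EuclideanSpace ℝ (Fin d)}

/-- The constant in `IsDensity.norm_velocityGrad_sub_le`. -/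
noncomputable def velocityGradHolderConst (d : ℕ) (γ R r : ℝ) : ℝ :=
  regKernelDerivHolderConst d γ r * volume.real (closedBall (0 : EuclideanSpace ℝ (Fin d)) R)

lemma velocityGradHolderConst_nonneg (d : ℕ) (γ R : ℝ) (hr : 0 < r) :
    0 ≤ velocityGradHolderConst d γ R r :=
  mul_nonneg (regKernelDerivHolderConst_nonneg d γ hr) measureReal_nonneg

lemma IsDensity.norm_velocityGrad_sub_le (h : IsDensity R ρ) (hγ0 : 0 < γ) (hγ1 : γ ≤ 1)
    (hr : 0 < r) (x x' : ℝᵈ) :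
    ‖velocityGrad r ρ x - velocityGrad r ρ x'‖ ≤
      velocityGradHolderConst d γ R r * ‖x - x'‖ ^ γ := by
  have hint (x : ℝᵈ) : Integrable fun z => ρ z • regKernelDeriv d r (x - z) :=
    h.integrable_smul ((continuous_regKernelDeriv d hr).comp (continuous_sub_left x))
  rw [velocityGrad, velocityGrad, ← integral_sub (hint x) (hint x')]
  simp only [← smul_sub]
  rw [← setIntegral_eq_integral_of_forall_compl_eq_zero (s := closedBall (0 : ℝᵈ) R)
    fun z hz => by rw [h.eq_zero z hz, zero_smul]]
  refine (norm_setIntegral_le_of_norm_le_const (C := regKernelDerivHolderConst d γ r * ‖x - x'‖ ^ γ)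
    measure_closedBall_lt_top fun z _ => ?_).trans_eq (mul_right_comm ..)
  rw [norm_smul, Real.norm_of_nonneg (h.nonneg z)]
  refine (mul_le_of_le_one_left (norm_nonneg _) (h.le_one z)).trans ?_
  simpa using norm_regKernelDeriv_sub_le_rpow d hγ0 hγ1 hr (x - z) (x' - z)

/-- The constant in `IsDensity.norm_velocity_le`. -/
noncomputable def velocityConst (d : ℕ) : ℝ :=
  sphereVol d * 2 + volume.real (ball (0 : EuclideanSpace ℝ (Fin d)) 1)

lemma velocityConst_nonneg (d : ℕ) : 0 ≤ velocityConst d :=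
  add_nonneg (mul_nonneg (sphereVol_nonneg d) zero_le_two) measureReal_nonneg

lemma IsDensity.norm_velocity_le [NeZero d] (h : IsDensity R ρ) (hR : 0 < R) (r : ℝ) (x : ℝᵈ) :
    ‖velocity r ρ x‖ ≤ velocityConst d * R := by
  have hd : (1 : ℝ) ≤ d := Nat.one_le_cast.2 (Nat.pos_of_neZero d)
  refine (norm_integral_le_of_norm_le_rpow (b := 1) (l := R) (C := 1) (R := R) one_pos hd hR
    zero_le_one x (fun z hz => ?_) fun z hz => ?_).trans_eq ?_
  · rw [norm_smul, Real.norm_of_nonneg (h.nonneg z)]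
    gcongr
    exacts [h.le_one z, norm_regKernel_le_rpow d r (sub_ne_zero.2 hz.symm)]
  · rw [h.eq_zero z hz, zero_smul]
  · rw [Measure.addHaar_real_closedBall _ _ hR.le, finrank_euclideanSpace_fin,
      Real.rpow_sub hR, Real.rpow_one, Real.rpow_natCast, velocityConst]
    field_simp
    ring

lemma IsSmoothPatch.mollify_nonpos (h : IsSmoothPatch γ y R ρ f g) (r : ℝ) (x : ℝᵈ) :
    mollify r f x ≤ 0 :=
  integral_nonpos fun z =>
    mul_nonpos_of_nonpos_of_nonneg (h.primitive_nonpos z) (regKernelDiv_nonneg d r _)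

lemma IsSmoothPatch.primitive_sub_le (h : IsSmoothPatch γ y R ρ f g) {M : ℝ}
    (hM : ∀ x ∈ closedBall (0 : ℝᵈ) R, ‖g x‖ ≤ M) {x : ℝᵈ} (hx : x ∈ closedBall (0 : ℝᵈ) R)
    (z : ℝᵈ) : f x - f z ≤ M * ‖x - z‖ := by
  by_cases hz : z ∈ closedBall (0 : ℝᵈ) R
  · refine (le_abs_self _).trans ((convex_closedBall (0 : ℝᵈ) R)
      |>.norm_image_sub_le_of_norm_hasFDerivWithin_le
        (fun w _ => (h.hasFDerivAt w).hasFDerivWithinAt) (fun w hw => ?_) hz hx)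
    rw [norm_smul, innerSL_apply_norm, Real.norm_of_nonneg (h.nonneg w)]
    exact (mul_le_of_le_one_left (norm_nonneg _) (h.le_one w)).trans (hM w hw)
  · rw [h.primitive_eq_zero z hz, sub_zero]
    exact (h.primitive_nonpos x).trans
      (mul_nonneg ((norm_nonneg _).trans (hM x hx)) (norm_nonneg _))

/- Split `f z = max (f z) (f x) + (f z - max (f z) (f x))`: the first part is bounded by `|f x|` and
the second one by `M * ‖x - z‖`. -/
lemma IsSmoothPatch.neg_mollify_le [NeZero d] (h : IsSmoothPatch γ y R ρ f g) {M : ℝ} (hr : 0 < r)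
    (hM : ∀ x ∈ closedBall (0 : ℝᵈ) R, ‖g x‖ ≤ M) {x : ℝᵈ} (hx : x ∈ closedBall (0 : ℝᵈ) R) :
    -mollify r f x ≤ regKernelDivConst d 0 * -f x + regKernelDivConst d 1 * (M * r) := by
  have hM0 : 0 ≤ M := (norm_nonneg _).trans (hM x hx)
  have hf := h.continuous_primitive
  have hdiv := continuous_regKernelDiv d hr (E := ℝᵈ)
  have hmax : Integrable fun z => max (f z) (f x) * regKernelDiv d r (x - z) :=
    integrable_of_eq_zero_off_closedBall (R := R) (by fun_prop) fun z hz => by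
      simp [h.primitive_eq_zero z hz, h.primitive_nonpos x]
  have hrest : Integrable fun z => (f z - max (f z) (f x)) * regKernelDiv d r (x - z) :=
    integrable_of_eq_zero_off_closedBall (R := R) (by fun_prop) fun z hz => by
      simp [h.primitive_eq_zero z hz, h.primitive_nonpos x]
  have hsplit : mollify r f x = (∫ z, max (f z) (f x) * regKernelDiv d r (x - z)) +
      ∫ z, (f z - max (f z) (f x)) * regKernelDiv d r (x - z) := by
    rw [← integral_add hmax hrest, mollify]
    simp only [← add_mul, add_sub_cancel]
  have hmax_le := norm_integral_le_of_le_regKernelDiv hr (b := 0) (M := -f x) le_rfl two_pos x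
    (F := fun z => max (f z) (f x) * regKernelDiv d r (x - z))
    (neg_nonneg.2 (h.primitive_nonpos x)) fun z => by
      rw [norm_mul, Real.norm_of_nonneg (regKernelDiv_nonneg d r _), mul_comm, Real.rpow_zero,
        mul_one, Real.norm_of_nonpos (max_le (h.primitive_nonpos z) (h.primitive_nonpos x))]
      gcongr
      exacts [regKernelDiv_nonneg d r _, le_max_right _ _]
  have hrest_le := norm_integral_le_of_le_regKernelDiv hr zero_le_one one_lt_two x
    (F := fun z => (f z - max (f z) (f x)) * regKernelDiv d r (x - z)) hM0 fun z => by
      rw [norm_mul, Real.norm_of_nonneg (regKernelDiv_nonneg d r _), mul_comm, Real.rpow_one,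
        Real.norm_of_nonpos (sub_nonpos.2 (le_max_left _ _)), neg_sub, ← max_sub_sub_right,
        sub_self]
      gcongr
      exacts [regKernelDiv_nonneg d r _, max_le (by positivity) (h.primitive_sub_le hM hx z)]
  rw [Real.rpow_zero, mul_one] at hmax_le
  rw [Real.rpow_one] at hrest_le
  rw [hsplit, neg_add]
  exact add_le_add ((neg_le_abs _).trans hmax_le) ((neg_le_abs _).trans hrest_le)

end Estimates

section Cutoff

/-- The piecewise linear cutoff, equal to `1` on `(-∞, -ε]` and to `0` on `[0, ∞)`. -/
noncomputable def cutoff (ε z : ℝ) : ℝ := max 0 (min 1 (-z / ε))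

/-- The primitive of `cutoff ε` vanishing on `[0, ∞)`. -/
noncomputable def cutoffPrimitive (ε z : ℝ) : ℝ := ∫ t in (0 : ℝ)..z, cutoff ε t

variable {ε z : ℝ}

lemma continuous_cutoff (ε : ℝ) : Continuous (cutoff ε) := by
  unfold cutoff
  fun_prop

lemma cutoff_nonneg (ε z : ℝ) : 0 ≤ cutoff ε z := le_max_left _ _

lemma cutoff_le_one (ε z : ℝ) : cutoff ε z ≤ 1 := max_le zero_le_one (min_le_left _ _)

lemma cutoff_of_nonneg (hε : 0 ≤ ε) (hz : 0 ≤ z) : cutoff ε z = 0 :=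
  max_eq_left ((min_le_right _ _).trans (div_nonpos_of_nonpos_of_nonneg (neg_nonpos.2 hz) hε))

lemma cutoff_of_le_neg (hε : 0 < ε) (hz : z ≤ -ε) : cutoff ε z = 1 := by
  rw [cutoff, min_eq_left ((one_le_div hε).2 (le_neg_of_le_neg hz)), max_eq_right zero_le_one]

lemma hasDerivAt_cutoffPrimitive (ε z : ℝ) : HasDerivAt (cutoffPrimitive ε) (cutoff ε z) z :=
  intervalIntegral.integral_hasDerivAt_right ((continuous_cutoff ε).intervalIntegrable _ _)
    ((continuous_cutoff ε).stronglyMeasurableAtFilter _ _) (continuous_cutoff ε).continuousAt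

lemma cutoffPrimitive_of_nonneg (hε : 0 ≤ ε) (hz : 0 ≤ z) : cutoffPrimitive ε z = 0 := by
  rw [cutoffPrimitive, intervalIntegral.integral_congr (g := fun _ => 0),
    intervalIntegral.integral_zero]
  intro t ht
  rw [uIcc_of_le hz] at ht
  exact cutoff_of_nonneg hε ht.1

lemma cutoffPrimitive_nonpos (hε : 0 ≤ ε) (z : ℝ) : cutoffPrimitive ε z ≤ 0 := by
  rcases le_total 0 z with hz | hz
  · exact (cutoffPrimitive_of_nonneg hε hz).le
  · rw [cutoffPrimitive, intervalIntegral.integral_symm, neg_nonpos]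
    exact intervalIntegral.integral_nonneg hz fun t _ => cutoff_nonneg ε t

lemma neg_cutoffPrimitive_le (hε : 0 ≤ ε) (z : ℝ) : -cutoffPrimitive ε z ≤ max 0 (-z) := by
  rcases le_total 0 z with hz | hz
  · rw [cutoffPrimitive_of_nonneg hε hz, neg_zero]
    exact le_max_left _ _
  · rw [cutoffPrimitive, intervalIntegral.integral_symm, neg_neg]
    refine le_max_of_le_right ?_
    simpa using intervalIntegral.integral_mono_on (μ := volume) hz
      ((continuous_cutoff ε).intervalIntegrable _ _)
      ((continuous_const (y := (1 : ℝ))).intervalIntegrable z 0) fun t _ => cutoff_le_one ε t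

lemma continuous_of_norm_sub_le_rpow {E F : Type*} [SeminormedAddCommGroup E]
    [SeminormedAddCommGroup F] {γ y : ℝ} {g : E → F} (hγ0 : 0 < γ)
    (hg : ∀ x x', ‖g x - g x'‖ ≤ y * ‖x - x'‖ ^ γ) : Continuous g := by
  refine continuous_iff_continuousAt.2 fun x => tendsto_iff_norm_sub_tendsto_zero.2 <|
    squeeze_zero (fun _ => norm_nonneg _) (fun x' => hg x' x) ?_
  have : ContinuousAt (fun x' => y * ‖x' - x‖ ^ γ) x :=
    continuousAt_const.mul (ContinuousAt.rpow_const (by fun_prop) (Or.inr hγ0.le))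
  simpa [ContinuousAt, Real.zero_rpow hγ0.ne'] using this

variable {γ y R : ℝ} {Φ : EuclideanSpace ℝ (Fin d) → ℝ}
  {g : EuclideanSpace ℝ (Fin d) → EuclideanSpace ℝ (Fin d)}

lemma isSmoothPatch_cutoff (hε : 0 ≤ ε) (hγ0 : 0 < γ) (hy : 0 ≤ y)
    (hΦ : ∀ x, HasFDerivAt Φ (innerSL ℝ (g x)) x)
    (hg : ∀ x x', ‖g x - g x'‖ ≤ y * ‖x - x'‖ ^ γ)
    (hsupp : ∀ x, Φ x < 0 → x ∈ closedBall (0 : ℝᵈ) R) :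
    IsSmoothPatch γ y R (fun x => cutoff ε (Φ x)) (fun x => cutoffPrimitive ε (Φ x)) g where
  continuous := (continuous_cutoff ε).comp
    (continuous_iff_continuousAt.2 fun x => (hΦ x).continuousAt)
  nonneg _ := cutoff_nonneg _ _
  le_one _ := cutoff_le_one _ _
  eq_zero x hx := cutoff_of_nonneg hε (not_lt.1 fun h => hx (hsupp x h))
  primitive_eq_zero x hx := cutoffPrimitive_of_nonneg hε (not_lt.1 fun h => hx (hsupp x h))
  primitive_nonpos _ := cutoffPrimitive_nonpos hε _
  hasFDerivAt x := (hasDerivAt_cutoffPrimitive ε (Φ x)).comp_hasFDerivAt x (hΦ x)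
  continuous_grad := continuous_of_norm_sub_le_rpow hγ0 hg
  holderConst_nonneg := hy
  holder := hg

end Cutoff

/-! ### Euler steps -/

section EulerStep

/-- One explicit Euler step, of size `τ`, of the flow of the velocity field generated by `ρ`. -/
noncomputable def eulerMap (r τ : ℝ) (ρ : ℝᵈ → ℝ) (x : ℝᵈ) : ℝᵈ := x - τ • velocity r ρ x

/-- The defining function `Φ` after one Euler step: it is not merely transported by `eulerMap`, but
corrected by `mollify r f`, which makes its gradient evolve by the commutator. -/
noncomputable def eulerPotential (r τ : ℝ) (ρ f Φ : ℝᵈ → ℝ) (u : ℝᵈ) : ℝ :=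
  Φ (Function.invFun (eulerMap r τ ρ) u) - τ * mollify r f (Function.invFun (eulerMap r τ ρ) u)

variable {γ y R r A τ : ℝ} {ρ f : EuclideanSpace ℝ (Fin d) → ℝ}
  {g : EuclideanSpace ℝ (Fin d) → EuclideanSpace ℝ (Fin d)}

namespace IsDensity

lemma norm_velocity_sub_le (h : IsDensity R ρ) (hr : 0 < r) (hA : ∀ x, ‖velocityGrad r ρ x‖ ≤ A)
    (x x' : ℝᵈ) : ‖velocity r ρ x - velocity r ρ x'‖ ≤ A * ‖x - x'‖ :=
  convex_univ.norm_image_sub_le_of_norm_hasFDerivWithin_le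
    (fun w _ => (h.hasFDerivAt_velocity hr w).hasFDerivWithinAt) (fun w _ => hA w) (mem_univ _)
    (mem_univ _)

lemma norm_smul_velocity_sub_le (h : IsDensity R ρ) (hr : 0 < r)
    (hA : ∀ x, ‖velocityGrad r ρ x‖ ≤ A) (hτ : 0 ≤ τ) (x x' : ℝᵈ) :
    ‖τ • (velocity r ρ x - velocity r ρ x')‖ ≤ τ * A * ‖x - x'‖ := by
  rw [norm_smul, Real.norm_of_nonneg hτ, mul_assoc]
  exact mul_le_mul_of_nonneg_left (h.norm_velocity_sub_le hr hA x x') hτ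

lemma eulerMap_sub (r τ : ℝ) (ρ : ℝᵈ → ℝ) (x x' : ℝᵈ) :
    eulerMap r τ ρ x - eulerMap r τ ρ x' = (x - x') - τ • (velocity r ρ x - velocity r ρ x') := by
  rw [eulerMap, eulerMap, smul_sub]
  abel

lemma mul_norm_sub_le_norm_eulerMap_sub (h : IsDensity R ρ) (hr : 0 < r)
    (hA : ∀ x, ‖velocityGrad r ρ x‖ ≤ A) (hτ : 0 ≤ τ) (x x' : ℝᵈ) :
    (1 - τ * A) * ‖x - x'‖ ≤ ‖eulerMap r τ ρ x - eulerMap r τ ρ x'‖ := by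
  rw [eulerMap_sub]
  linarith [norm_sub_norm_le (x - x') (τ • (velocity r ρ x - velocity r ρ x')),
    h.norm_smul_velocity_sub_le hr hA hτ x x']

lemma norm_eulerMap_sub_le (h : IsDensity R ρ) (hr : 0 < r)
    (hA : ∀ x, ‖velocityGrad r ρ x‖ ≤ A) (hτ : 0 ≤ τ) (x x' : ℝᵈ) :
    ‖eulerMap r τ ρ x - eulerMap r τ ρ x'‖ ≤ (1 + τ * A) * ‖x - x'‖ := by
  rw [eulerMap_sub]
  linarith [norm_sub_le (x - x') (τ • (velocity r ρ x - velocity r ρ x')),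
    h.norm_smul_velocity_sub_le hr hA hτ x x']

lemma norm_sub_le_two_mul_norm_eulerMap_sub (h : IsDensity R ρ) (hr : 0 < r)
    (hA : ∀ x, ‖velocityGrad r ρ x‖ ≤ A) (hτ : 0 ≤ τ) (hτA : τ * A ≤ 1 / 2) (x x' : ℝᵈ) :
    ‖x - x'‖ ≤ 2 * ‖eulerMap r τ ρ x - eulerMap r τ ρ x'‖ := by
  have hhalf : τ * A * ‖x - x'‖ ≤ 1 / 2 * ‖x - x'‖ := by gcongr
  linarith [h.mul_norm_sub_le_norm_eulerMap_sub hr hA hτ x x']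

lemma bijective_eulerMap (h : IsDensity R ρ) (hr : 0 < r) (hA : ∀ x, ‖velocityGrad r ρ x‖ ≤ A)
    (hτ : 0 ≤ τ) (hτA : τ * A ≤ 1 / 2) : Function.Bijective (eulerMap r τ ρ) := by
  refine ⟨fun x x' hx => sub_eq_zero.1 (norm_le_zero_iff.1 ?_), fun u => ?_⟩
  · simpa [hx] using h.norm_sub_le_two_mul_norm_eulerMap_sub hr hA hτ hτA x x'
  · have hcontr : ContractingWith (1 / 2) fun x => u + τ • velocity r ρ x := by
      refine ⟨by norm_num, LipschitzWith.of_dist_le_mul fun x x' => ?_⟩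
      rw [dist_add_left, dist_eq_norm, dist_eq_norm, ← smul_sub]
      refine (h.norm_smul_velocity_sub_le hr hA hτ x x').trans ?_
      gcongr
      simpa using hτA
    exact ⟨hcontr.fixedPoint, sub_eq_iff_eq_add.2 hcontr.fixedPoint_isFixedPt.symm⟩

lemma hasFDerivAt_eulerMap (h : IsDensity R ρ) (hr : 0 < r) (τ : ℝ) (x : ℝᵈ) :
    HasFDerivAt (eulerMap r τ ρ) (ContinuousLinearMap.id ℝ ℝᵈ - τ • velocityGrad r ρ x) x :=
  (hasFDerivAt_id x).sub ((h.hasFDerivAt_velocity hr x).const_smul τ)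

lemma exists_hasFDerivAt_invFun_eulerMap (h : IsDensity R ρ) (hr : 0 < r)
    (hA : ∀ x, ‖velocityGrad r ρ x‖ ≤ A) (hτ : 0 ≤ τ) (hτA : τ * A ≤ 1 / 2) (x : ℝᵈ) :
    ∃ L : ℝᵈ ≃L[ℝ] ℝᵈ, (∀ p, L p = p - τ • velocityGrad r ρ x p) ∧
      HasFDerivAt (Function.invFun (eulerMap r τ ρ)) (L.symm : ℝᵈ →L[ℝ] ℝᵈ) (eulerMap r τ ρ x) := by
  have hbij := h.bijective_eulerMap hr hA hτ hτA
  have hright := Function.rightInverse_invFun hbij.2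
  have hleft := Function.leftInverse_invFun hbij.1
  have hnorm : ‖τ • velocityGrad r ρ x‖ < 1 := by
    rw [norm_smul, Real.norm_of_nonneg hτ]
    exact (mul_le_mul_of_nonneg_left (hA x) hτ).trans_lt (by linarith)
  have hcont : Continuous (Function.invFun (eulerMap r τ ρ)) := by
    refine LipschitzWith.continuous (K := 2) (LipschitzWith.of_dist_le_mul fun u u' => ?_)
    have := h.norm_sub_le_two_mul_norm_eulerMap_sub hr hA hτ hτA
      (Function.invFun (eulerMap r τ ρ) u) (Function.invFun (eulerMap r τ ρ) u')
    simpa only [hright u, hright u', dist_eq_norm, NNReal.coe_ofNat] using this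
  let L : ℝᵈ ≃L[ℝ] ℝᵈ := .ofUnit (Units.oneSub _ hnorm)
  refine ⟨L, fun p => rfl, HasFDerivAt.of_local_left_inverse (f := eulerMap r τ ρ)
    hcont.continuousAt ?_ (.of_forall hright)⟩
  rw [hleft x]
  exact h.hasFDerivAt_eulerMap hr τ x

end IsDensity

lemma norm_le_of_eq_smul_add {E : Type*} [NormedAddCommGroup E] [NormedSpace ℝ E] {S : E →L[ℝ] E}
    {c v : E} (hτ : 0 ≤ τ) (hS : ‖S‖ ≤ A) (hτA : τ * A ≤ 1 / 2) (hv : v = τ • c + τ • S v) :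
    ‖v‖ ≤ 2 * (τ * ‖c‖) := by
  have hSv : ‖τ • S v‖ ≤ 1 / 2 * ‖v‖ := by
    rw [norm_smul, Real.norm_of_nonneg hτ]
    calc τ * ‖S v‖ ≤ τ * (A * ‖v‖) := by
          gcongr
          exact S.le_of_opNorm_le hS v
      _ = τ * A * ‖v‖ := (mul_assoc ..).symm
      _ ≤ 1 / 2 * ‖v‖ := by gcongr
  have hnorm : ‖v‖ ≤ τ * ‖c‖ + ‖τ • S v‖ := by
    conv_lhs => rw [hv]
    exact (norm_add_le _ _).trans_eq (by rw [norm_smul τ c, Real.norm_of_nonneg hτ])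
  linarith

/-- The constant governing the growth of the Hölder norm and of the lower gradient bound in one
Euler step. -/
noncomputable def eulerConst (d : ℕ) (γ R : ℝ) : ℝ :=
  4 * (2 * truncationConst d γ + translationConst d γ) + 8 * commutatorConst d γ R + 6 +
    2 * regKernelDivConst d 0 + 2 * regKernelDivConst d γ

lemma one_le_eulerConst (d : ℕ) (hγ0 : 0 < γ) (hγ1 : γ < 1) (R : ℝ) : 1 ≤ eulerConst d γ R := by
  have := truncationConst_nonneg d hγ0 (hγ1.trans one_lt_two)
  have := translationConst_nonneg d hγ0.le hγ1
  have := commutatorConst_nonneg d hγ0.le R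
  have := regKernelDivConst_nonneg d le_rfl two_pos
  have := regKernelDivConst_nonneg d hγ0.le (hγ1.trans one_lt_two)
  unfold eulerConst
  linarith

lemma two_mul_commutatorConst_le_eulerConst (d : ℕ) (hγ0 : 0 < γ) (hγ1 : γ < 1) (R : ℝ) :
    2 * commutatorConst d γ R ≤ eulerConst d γ R := by
  have := truncationConst_nonneg d hγ0 (hγ1.trans one_lt_two)
  have := translationConst_nonneg d hγ0.le hγ1
  have := commutatorConst_nonneg d hγ0.le R
  have := regKernelDivConst_nonneg d le_rfl two_pos
  have := regKernelDivConst_nonneg d hγ0.le (hγ1.trans one_lt_two)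
  unfold eulerConst
  linarith

namespace IsSmoothPatch

lemma exists_hasFDerivAt_eulerPotential (h : IsSmoothPatch γ y R ρ f g) (hr : 0 < r)
    (hA : ∀ x, ‖velocityGrad r ρ x‖ ≤ A) (hτ : 0 ≤ τ) (hτA : τ * A ≤ 1 / 2) {Φ : ℝᵈ → ℝ}
    (hΦ : ∀ x, HasFDerivAt Φ (innerSL ℝ (g x)) x) (x : ℝᵈ) :
    ∃ v, HasFDerivAt (eulerPotential r τ ρ f Φ) (innerSL ℝ (g x + v)) (eulerMap r τ ρ x) ∧
      v = τ • commutator r ρ g x + τ • velocityGrad r ρ x v := by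
  obtain ⟨L, hL, hderiv⟩ := h.exists_hasFDerivAt_invFun_eulerMap hr hA hτ hτA x
  have hsymm (p q : ℝᵈ) : ⟪L p, q⟫ = ⟪p, L q⟫ := by
    rw [hL, hL, inner_sub_left, inner_sub_right, real_inner_smul_left, real_inner_smul_right,
      h.inner_velocityGrad_symm hr]
  have hleft := Function.leftInverse_invFun (h.bijective_eulerMap hr hA hτ hτA).1 x
  set p := g x - τ • mollifyGrad r ρ g x with p_def
  refine ⟨L.symm p - g x, ?_, ?_⟩
  · have hsource : HasFDerivAt (fun x => Φ x - τ * mollify r f x) (innerSL ℝ p)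
        (Function.invFun (eulerMap r τ ρ) (eulerMap r τ ρ x)) := by
      rw [hleft]
      refine ((hΦ x).sub ((h.hasFDerivAt_mollify hr x).const_mul τ)).congr_fderiv ?_
      rw [map_sub, map_smul]
    rw [add_sub_cancel]
    refine (hsource.comp _ hderiv).congr_fderiv (ContinuousLinearMap.ext fun w => ?_)
    have := hsymm (L.symm p) (L.symm w)
    rw [L.apply_symm_apply, L.apply_symm_apply] at this
    simpa using this
  · have hq : p = L.symm p - τ • velocityGrad r ρ x (L.symm p) := by
      rw [← hL, L.apply_symm_apply]
    generalize L.symm p = q at hq ⊢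
    rw [p_def] at hq
    rw [commutator, map_sub, smul_sub, smul_sub]
    linear_combination (norm := module) -hq

lemma norm_increment_le [NeZero d] (hγ0 : 0 < γ) (hγ1 : γ < 1) (h : IsSmoothPatch γ y R ρ f g)
    (hr : 0 < r) (hA : ∀ x, ‖velocityGrad r ρ x‖ ≤ A) (hτ : 0 ≤ τ) (hτA : τ * A ≤ 1 / 2) {v x : ℝᵈ}
    (hv : v = τ • commutator r ρ g x + τ • velocityGrad r ρ x v) :
    ‖v‖ ≤ 2 * (τ * (commutatorConst d γ R * y)) := by
  have hγd : γ ≤ d := hγ1.le.trans (Nat.one_le_cast.2 (Nat.pos_of_neZero d))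
  refine (norm_le_of_eq_smul_add hτ (hA x) hτA hv).trans ?_
  gcongr
  exact h.norm_commutator_le_mul hγ0 hγd hr x

lemma norm_increment_le_mul_norm [NeZero d] (hγ0 : 0 < γ) (hγ1 : γ < 1)
    (h : IsSmoothPatch γ y R ρ f g) (hr : 0 < r) (hA : ∀ x, ‖velocityGrad r ρ x‖ ≤ A) (hτ : 0 ≤ τ)
    (hτA : τ * A ≤ 1 / 2) {v x : ℝᵈ}
    (hv : v = τ • commutator r ρ g x + τ • velocityGrad r ρ x v) (hx : y * r ^ γ ≤ ‖g x‖) :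
    ‖v‖ ≤ 2 * (τ * ((A + regKernelDivConst d 0 + regKernelDivConst d γ) * ‖g x‖)) := by
  have hγ2 := hγ1.trans one_lt_two
  have hCγ := regKernelDivConst_nonneg d hγ0.le hγ2
  refine (norm_le_of_eq_smul_add hτ (hA x) hτA hv).trans ?_
  gcongr
  calc ‖commutator r ρ g x‖ ≤ (‖velocityGrad r ρ x‖ + regKernelDivConst d 0) * ‖g x‖ +
        regKernelDivConst d γ * (y * r ^ γ) := h.norm_commutator_le hγ0.le hγ2 hr x
    _ ≤ (A + regKernelDivConst d 0) * ‖g x‖ + regKernelDivConst d γ * ‖g x‖ := by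
      gcongr
      exact hA x
    _ = _ := (add_mul ..).symm

lemma norm_increment_sub_le [NeZero d] (hγ0 : 0 < γ) (hγ1 : γ < 1) (h : IsSmoothPatch γ y R ρ f g)
    (hr : 0 < r) (hA : ∀ δ, r ≤ δ → ∀ x, ‖velocityGrad δ ρ x‖ ≤ A) (hτ : 0 ≤ τ)
    (hτA : τ * A ≤ 1 / 2) (hτC : τ * velocityGradHolderConst d γ R r ≤ 1) {v : ℝᵈ → ℝᵈ}
    (hv : ∀ x, v x = τ • commutator r ρ g x + τ • velocityGrad r ρ x (v x)) (x x' : ℝᵈ) :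
    ‖v x - v x'‖ ≤ 2 * (τ * ((2 * truncationConst d γ + translationConst d γ + A +
      2 * commutatorConst d γ R) * (y * ‖x - x'‖ ^ γ))) := by
  have hC := commutatorConst_nonneg d hγ0.le R
  have hy := h.holderConst_nonneg
  have hvx' := h.norm_increment_le hγ0 hγ1 hr (hA r le_rfl) hτ hτA (hv x')
  have heq : v x - v x' = τ • (commutator r ρ g x - commutator r ρ g x' +
      (velocityGrad r ρ x - velocityGrad r ρ x') (v x')) +
        τ • velocityGrad r ρ x (v x - v x') := by
    conv_lhs => rw [hv x, hv x']
    simp only [map_sub, sub_apply, smul_sub, smul_add]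
    abel
  refine (norm_le_of_eq_smul_add hτ (hA r le_rfl x) hτA heq).trans ?_
  have hgrad : ‖(velocityGrad r ρ x - velocityGrad r ρ x') (v x')‖ ≤
      2 * commutatorConst d γ R * (y * ‖x - x'‖ ^ γ) := by
    calc _ ≤ velocityGradHolderConst d γ R r * ‖x - x'‖ ^ γ *
          (2 * (τ * (commutatorConst d γ R * y))) :=
          (ContinuousLinearMap.le_of_opNorm_le _
            (h.norm_velocityGrad_sub_le hγ0 hγ1.le hr x x') _).trans (by
              have := velocityGradHolderConst_nonneg d γ R hr
              gcongr)
      _ = τ * velocityGradHolderConst d γ R r *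
          (2 * commutatorConst d γ R * (y * ‖x - x'‖ ^ γ)) := by ring
      _ ≤ _ := mul_le_of_le_one_left (by positivity) hτC
  gcongr
  refine (norm_add_le _ _).trans ?_
  linarith [h.norm_commutator_sub_le hγ0 hγ1 hr hA x x']

lemma rpow_le_of_mul_one_sub_le {a b s : ℝ} (hγ0 : 0 ≤ γ) (hγ1 : γ ≤ 1) (ha : 0 ≤ a) (hs : 0 ≤ s)
    (hs2 : s ≤ 1 / 2) (h : (1 - s) * a ≤ b) : a ^ γ ≤ (1 + 2 * s) * b ^ γ := by
  have hb : 0 ≤ b := (mul_nonneg (by linarith) ha).trans h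
  have hab : a ≤ (1 + 2 * s) * b := by
    have : 0 ≤ s * (1 - 2 * s) * a := mul_nonneg (mul_nonneg hs (by linarith)) ha
    calc a ≤ (1 + 2 * s) * ((1 - s) * a) := by linarith
      _ ≤ (1 + 2 * s) * b := by gcongr
  calc a ^ γ ≤ ((1 + 2 * s) * b) ^ γ := by gcongr
    _ = (1 + 2 * s) ^ γ * b ^ γ := Real.mul_rpow (by positivity) hb
    _ ≤ (1 + 2 * s) ^ (1 : ℝ) * b ^ γ := by
      gcongr
      linarith
    _ = (1 + 2 * s) * b ^ γ := by rw [Real.rpow_one]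

lemma mul_norm_le_norm_add_increment [NeZero d] (hγ0 : 0 < γ) (hγ1 : γ < 1)
    (h : IsSmoothPatch γ y R ρ f g) (hr : 0 < r) (hA : ∀ x, ‖velocityGrad r ρ x‖ ≤ A) (hτ : 0 ≤ τ)
    (hτA : τ * A ≤ 1 / 2) {v x : ℝᵈ}
    (hv : v = τ • commutator r ρ g x + τ • velocityGrad r ρ x v) (hx : y * r ^ γ ≤ ‖g x‖) :
    (1 - τ * (eulerConst d γ R * (1 + A))) * ‖g x‖ ≤ ‖g x + v‖ := by
  have hA0 : 0 ≤ A := (norm_nonneg _).trans (hA 0)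
  have hconst : 2 * (A + regKernelDivConst d 0 + regKernelDivConst d γ) ≤
      eulerConst d γ R * (1 + A) := by
    have := commutatorConst_nonneg d hγ0.le R
    have := regKernelDivConst_nonneg d le_rfl two_pos
    have := regKernelDivConst_nonneg d hγ0.le (hγ1.trans one_lt_two)
    have := truncationConst_nonneg d hγ0 (hγ1.trans one_lt_two)
    have := translationConst_nonneg d hγ0.le hγ1
    rw [eulerConst, ← sub_nonneg]
    ring_nf
    positivity
  have hv_le : ‖v‖ ≤ τ * (eulerConst d γ R * (1 + A)) * ‖g x‖ := by
    calc ‖v‖ ≤ 2 * (τ * ((A + regKernelDivConst d 0 + regKernelDivConst d γ) * ‖g x‖)) :=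
          h.norm_increment_le_mul_norm hγ0 hγ1 hr hA hτ hτA hv hx
      _ = τ * (2 * (A + regKernelDivConst d 0 + regKernelDivConst d γ)) * ‖g x‖ := by ring
      _ ≤ _ := by gcongr
  linarith [norm_sub_le_norm_add (g x) v]

lemma norm_add_increment_sub_le [NeZero d] (hγ0 : 0 < γ) (hγ1 : γ < 1)
    (h : IsSmoothPatch γ y R ρ f g) (hr : 0 < r)
    (hA : ∀ δ, r ≤ δ → ∀ x, ‖velocityGrad δ ρ x‖ ≤ A) (hτ : 0 ≤ τ) (hτA : τ * A ≤ 1 / 2)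
    (hτC : τ * velocityGradHolderConst d γ R r ≤ 1) {v : ℝᵈ → ℝᵈ}
    (hv : ∀ x, v x = τ • commutator r ρ g x + τ • velocityGrad r ρ x (v x)) (x x' : ℝᵈ) :
    ‖(g x + v x) - (g x' + v x')‖ ≤ y * (1 + τ * (eulerConst d γ R * (1 + A))) *
      ‖eulerMap r τ ρ x - eulerMap r τ ρ x'‖ ^ γ := by
  have hA0 : 0 ≤ A := (norm_nonneg _).trans (hA r le_rfl 0)
  have hy := h.holderConst_nonneg
  have hC := commutatorConst_nonneg d hγ0.le R
  have hC0 := regKernelDivConst_nonneg d le_rfl two_pos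
  have hCγ := regKernelDivConst_nonneg d hγ0.le (hγ1.trans one_lt_two)
  have hCt := truncationConst_nonneg d hγ0 (hγ1.trans one_lt_two)
  have hCs := translationConst_nonneg d hγ0.le hγ1
  have hv_sub := h.norm_increment_sub_le hγ0 hγ1 hr hA hτ hτA hτC hv x x'
  have hdist := rpow_le_of_mul_one_sub_le hγ0.le hγ1.le (norm_nonneg _) (by positivity) hτA
    (h.mul_norm_sub_le_norm_eulerMap_sub hr (hA r le_rfl) hτ x x')
  set Q := 2 * truncationConst d γ + translationConst d γ + A + 2 * commutatorConst d γ R with hQ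
  have : 0 ≤ Q := by positivity
  have hconst : (1 + 2 * τ * Q) * (1 + 2 * (τ * A)) ≤
      1 + τ * (eulerConst d γ R * (1 + A)) := by
    have hτQ : 2 * (τ * Q * (τ * A)) ≤ 2 * (τ * Q * (1 / 2)) := by gcongr
    have hle : 4 * Q + 2 * A ≤ eulerConst d γ R * (1 + A) := by
      rw [eulerConst, hQ, ← sub_nonneg]
      ring_nf
      positivity
    linarith [mul_le_mul_of_nonneg_left hle hτ]
  rw [add_sub_add_comm]
  calc _ ≤ y * (1 + 2 * τ * Q) * ‖x - x'‖ ^ γ := by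
        linarith [h.holder x x', norm_add_le (g x - g x') (v x - v x')]
    _ ≤ y * (1 + 2 * τ * Q) * ((1 + 2 * (τ * A)) *
        ‖eulerMap r τ ρ x - eulerMap r τ ρ x'‖ ^ γ) := by gcongr
    _ = y * ((1 + 2 * τ * Q) * (1 + 2 * (τ * A))) *
        ‖eulerMap r τ ρ x - eulerMap r τ ρ x'‖ ^ γ := by ring
    _ ≤ _ := by gcongr

lemma exists_eulerStep [NeZero d] (hγ0 : 0 < γ) (hγ1 : γ < 1) (h : IsSmoothPatch γ y R ρ f g)
    (hr : 0 < r) (hA : ∀ δ, r ≤ δ → ∀ x, ‖velocityGrad δ ρ x‖ ≤ A) (hτ : 0 ≤ τ)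
    (hτA : τ * A ≤ 1 / 2) (hτC : τ * velocityGradHolderConst d γ R r ≤ 1) {Φ : ℝᵈ → ℝ}
    (hΦ : ∀ x, HasFDerivAt Φ (innerSL ℝ (g x)) x) :
    ∃ g' : ℝᵈ → ℝᵈ,
      (∀ u, HasFDerivAt (eulerPotential r τ ρ f Φ) (innerSL ℝ (g' u)) u) ∧
      (∀ x, ‖g' (eulerMap r τ ρ x) - g x‖ ≤ τ * eulerConst d γ R * y) ∧
      (∀ x, y * r ^ γ ≤ ‖g x‖ →
        (1 - τ * (eulerConst d γ R * (1 + A))) * ‖g x‖ ≤ ‖g' (eulerMap r τ ρ x)‖) ∧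
      ∀ u u', ‖g' u - g' u'‖ ≤ y * (1 + τ * (eulerConst d γ R * (1 + A))) * ‖u - u'‖ ^ γ := by
  have hbij := h.bijective_eulerMap hr (hA r le_rfl) hτ hτA
  choose v hderiv hv using h.exists_hasFDerivAt_eulerPotential hr (hA r le_rfl) hτ hτA hΦ
  have hleft := Function.leftInverse_invFun hbij.1
  refine ⟨fun u => g (Function.invFun (eulerMap r τ ρ) u) + v (Function.invFun (eulerMap r τ ρ) u),
    hbij.2.forall.2 ?_, ?_, ?_, hbij.2.forall.2 fun x => hbij.2.forall.2 fun x' => ?_⟩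
  all_goals simp only [hleft _]
  · exact hderiv
  · intro x
    rw [add_sub_cancel_left]
    refine (h.norm_increment_le hγ0 hγ1 hr (hA r le_rfl) hτ hτA (hv x)).trans ?_
    have hy := h.holderConst_nonneg
    calc 2 * (τ * (commutatorConst d γ R * y)) = τ * (2 * commutatorConst d γ R) * y := by ring
      _ ≤ τ * eulerConst d γ R * y := by
          gcongr
          exact two_mul_commutatorConst_le_eulerConst d hγ0 hγ1 R
  · exact fun x hx => h.mul_norm_le_norm_add_increment hγ0 hγ1 hr (hA r le_rfl) hτ hτA (hv x) hx
  · exact h.norm_add_increment_sub_le hγ0 hγ1 hr hA hτ hτA hτC hv x x'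

end IsSmoothPatch
end EulerStep

/-! ### Uniform bounds for the Euler scheme -/

section ElementaryEstimates

variable {γ ε y m δ : ℝ} {Φ : EuclideanSpace ℝ (Fin d) → ℝ}
  {g : EuclideanSpace ℝ (Fin d) → EuclideanSpace ℝ (Fin d)}

lemma cutoff_comp_eq_of_forall_ball (hε : 0 < ε) (hΦ : Continuous Φ) {x : ℝᵈ}
    (h : ∀ z ∈ ball x δ, -ε ≤ Φ z → 0 < Φ z) {x' : ℝᵈ} (hx' : x' ∈ ball x δ) :
    cutoff ε (Φ x') = cutoff ε (Φ x) := by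
  have hx : x ∈ ball x δ := mem_ball_self (dist_nonneg.trans_lt (mem_ball.1 hx'))
  have not_lt_of_lt : ∀ a ∈ ball x δ, ∀ b ∈ ball x δ, Φ a < -ε → ¬0 < Φ b := by
    intro a ha b hb hΦa hΦb
    obtain ⟨z, hz, hz0⟩ := (convex_ball x δ).isPreconnected.intermediate_value ha hb
      hΦ.continuousOn (⟨by linarith, hΦb.le⟩ : (0 : ℝ) ∈ Icc (Φ a) (Φ b))
    exact (h z hz (by linarith)).ne' hz0
  rcases lt_or_ge (Φ x) (-ε) with h1 | h1 <;> rcases lt_or_ge (Φ x') (-ε) with h2 | h2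
  · rw [cutoff_of_le_neg hε h1.le, cutoff_of_le_neg hε h2.le]
  · exact (not_lt_of_lt x hx x' hx' h1 (h x' hx' h2)).elim
  · exact (not_lt_of_lt x' hx' x hx h2 (h x hx h1)).elim
  · rw [cutoff_of_nonneg hε.le (h x hx h1).le, cutoff_of_nonneg hε.le (h x' hx' h2).le]

lemma le_norm_or_cutoff_comp_eq (hγ : 0 ≤ γ) (hε : 0 < ε) (hm : 0 < m) (hΦ : Continuous Φ)
    (hg : ∀ x x', ‖g x - g x'‖ ≤ y * ‖x - x'‖ ^ γ) (hy : 0 ≤ y)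
    (hlayer : ∀ x, -ε ≤ Φ x → Φ x ≤ 0 → m ≤ ‖g x‖) (hδ : y * δ ^ γ ≤ m / 2) (x : ℝᵈ) :
    (g x ≠ 0 ∧ y * δ ^ γ ≤ ‖g x‖) ∨ ∀ x' ∈ ball x δ, cutoff ε (Φ x') = cutoff ε (Φ x) := by
  by_cases! hz : ∃ z ∈ ball x δ, -ε ≤ Φ z ∧ Φ z ≤ 0
  · obtain ⟨z, hz, hz1, hz2⟩ := hz
    have hzx : ‖z - x‖ ≤ δ := (mem_ball_iff_norm.1 hz).le
    have hmove : ‖g z - g x‖ ≤ m / 2 := calc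
      ‖g z - g x‖ ≤ y * ‖z - x‖ ^ γ := hg z x
      _ ≤ y * δ ^ γ := by gcongr
      _ ≤ m / 2 := hδ
    have hgx : m / 2 ≤ ‖g x‖ := by linarith [hlayer z hz1 hz2, norm_sub_norm_le (g z) (g x)]
    exact .inl ⟨norm_pos_iff.1 (by linarith), hδ.trans hgx⟩
  · exact .inr fun x' hx' => cutoff_comp_eq_of_forall_ball hε hΦ hz hx'

lemma log_two_mul_div_nonneg (hm : 0 < m) (hmy : m ≤ y) : 0 ≤ Real.log (2 * y / m) :=
  Real.log_nonneg (by rw [le_div_iff₀ hm]; linarith)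

lemma exists_scale {q : ℝ} (hγ : 0 < γ) (hm : 0 < m) (hmy : m ≤ y) (hq : 0 ≤ q) :
    ∃ δ, 0 < δ ∧ δ ≤ 1 ∧ y * Real.exp q * δ ^ γ ≤ m * Real.exp (-q) / 2 ∧
      1 - Real.log δ = 1 + (Real.log (2 * y / m) + 2 * q) / γ := by
  have hy : 0 < y := hm.trans_le hmy
  have hlog := log_two_mul_div_nonneg hm hmy
  set b := (Real.log (2 * y / m) + 2 * q) / γ with hb
  have hbγ : -b * γ = -Real.log (2 * y / m) + (-q + -q) := by
    rw [hb]
    field_simp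
    ring
  refine ⟨Real.exp (-b), Real.exp_pos _, Real.exp_le_one_iff.2 (neg_nonpos.2 (by positivity)),
    le_of_eq ?_, by rw [Real.log_exp, sub_neg_eq_add]⟩
  have := Real.exp_pos q
  rw [← Real.exp_mul, hbγ, Real.exp_add, Real.exp_add, Real.exp_neg (Real.log _),
    Real.exp_log (by positivity), Real.exp_neg q]
  field_simp

lemma one_add_mul_pow_le_exp {τ C S : ℝ} {k : ℕ} (hτ : 0 ≤ τ) (hC : 0 ≤ C) (hk : k * τ ≤ S) :
    (1 + τ * C) ^ k ≤ Real.exp (C * S) := calc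
  (1 + τ * C) ^ k ≤ Real.exp (τ * C) ^ k := by
    gcongr
    linarith [Real.add_one_le_exp (τ * C)]
  _ = Real.exp (C * (k * τ)) := by
    rw [← Real.exp_nat_mul]
    ring_nf
  _ ≤ Real.exp (C * S) := by gcongr

lemma exp_neg_two_mul_le_one_sub {t : ℝ} (ht0 : 0 ≤ t) (ht : t ≤ 1 / 2) :
    Real.exp (-(2 * t)) ≤ 1 - t := by
  rw [Real.exp_neg]
  refine inv_le_of_inv_le₀ (by linarith) (le_trans ?_ (Real.add_one_le_exp (2 * t)))
  rw [inv_le_iff_one_le_mul₀ (by linarith)]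
  nlinarith

lemma exp_neg_le_one_sub_mul_pow {τ C S : ℝ} {k : ℕ} (hτ : 0 ≤ τ) (hC : 0 ≤ C)
    (hτC : τ * C ≤ 1 / 2) (hk : k * τ ≤ S) : Real.exp (-(2 * C * S)) ≤ (1 - τ * C) ^ k := calc
  Real.exp (-(2 * C * S)) ≤ Real.exp (-(2 * C * (k * τ))) := by gcongr
  _ = Real.exp (-(2 * (τ * C))) ^ k := by
    rw [← Real.exp_nat_mul]
    ring_nf
  _ ≤ (1 - τ * C) ^ k := by
    gcongr
    exact exp_neg_two_mul_le_one_sub (by positivity) hτC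

end ElementaryEstimates

variable (d) in
/-- Quantitative data of the initial patch `{Φ ≤ 0}`: a defining function `Φ` with `γ`-Hölder
gradient `grad`, a lower bound for the gradient in the layer `-width ≤ Φ ≤ 0`, and the radius of a
ball containing the patch. -/
structure InitialPatch (γ : ℝ) where
  Φ : ℝᵈ → ℝ
  grad : ℝᵈ → ℝᵈ
  holderConst : ℝ
  gradMin : ℝ
  width : ℝ
  radius : ℝ
  exponent_pos : 0 < γ
  exponent_lt_one : γ < 1
  hasFDerivAt : ∀ x, HasFDerivAt Φ (innerSL ℝ (grad x)) x
  holder : ∀ x x', ‖grad x - grad x'‖ ≤ holderConst * ‖x - x'‖ ^ γ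
  gradMin_pos : 0 < gradMin
  gradMin_le : gradMin ≤ holderConst
  width_pos : 0 < width
  radius_pos : 0 < radius
  norm_le : ∀ x, Φ x ≤ 0 → ‖x‖ ≤ radius
  gradMin_le_norm : ∀ x, -width ≤ Φ x → Φ x ≤ 0 → gradMin ≤ ‖grad x‖
  exists_nonpos : ∃ x, Φ x ≤ 0

/-- The constant in the loss of monotonicity of the defining function under mollification. -/
noncomputable def mollifyConst (d : ℕ) : ℝ := regKernelDivConst d 0 + regKernelDivConst d 1

lemma mollifyConst_nonneg (d : ℕ) : 0 ≤ mollifyConst d :=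
  add_nonneg (regKernelDivConst_nonneg d le_rfl two_pos)
    (regKernelDivConst_nonneg d zero_le_one one_lt_two)

namespace InitialPatch

variable {γ : ℝ} (P : InitialPatch d γ) (S ε τ : ℝ)

section Constants

/-- The logarithm of the ratio between the Hölder constant and the lower bound of the gradient. -/
noncomputable def logRatio : ℝ := Real.log (2 * P.holderConst / P.gradMin)

/-- Radius of a ball containing the evolving patch up to time `S`. -/
noncomputable def supportRadius : ℝ := P.radius * Real.exp (velocityConst d * S)

/-- Bound for the velocity gradient when the Hölder constant of the defining function has grown,
and its lower gradient bound has decayed, by a factor `exp q`. -/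
noncomputable def strain (q : ℝ) : ℝ :=
  velocityGradConst d γ (P.supportRadius S) * (1 + (P.logRatio + 2 * q) / γ)

/-- Growth rate of `1 + q`, where `exp q` is the factor gained by the Hölder constant: the
Gronwall constant of the a priori estimate. -/
noncomputable def growthRate : ℝ := 2 * (eulerConst d γ (P.supportRadius S) * (1 + P.strain S 1))

/-- Bound, up to time `S`, for the logarithm of the factor gained by the Hölder constant. -/
noncomputable def growth : ℝ := Real.exp (P.growthRate S * S)

/-- Bound for the Hölder constant up to time `S`. -/
noncomputable def holderBound : ℝ := P.holderConst * Real.exp (P.growth S)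

/-- Lower bound for the gradient near the boundary up to time `S`. -/
noncomputable def gradMinBound : ℝ := P.gradMin * Real.exp (-P.growth S)

/-- Bound for the velocity gradient up to time `S`. -/
noncomputable def strainBound : ℝ := P.strain S (P.growth S)

/-- Bound for the gradient of the defining function on the support up to time `S`. -/
noncomputable def gradBound : ℝ :=
  ‖P.grad 0‖ + S * (eulerConst d γ (P.supportRadius S) * P.holderBound S) +
    P.holderBound S * (2 * P.supportRadius S) ^ γ

/-- The logarithm, at the `k`-th time step, of the factor by which the estimates have
deteriorated. -/
noncomputable def loss (k : ℕ) : ℝ := (1 + τ * P.growthRate S) ^ k - 1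

/-- Radius of a ball containing the support at the `k`-th time step. -/
noncomputable def stepRadius (k : ℕ) : ℝ := P.radius * (1 + τ * velocityConst d) ^ k

lemma holderConst_pos : 0 < P.holderConst := P.gradMin_pos.trans_le P.gradMin_le

lemma supportRadius_pos : 0 < P.supportRadius S := mul_pos P.radius_pos (Real.exp_pos _)

lemma holderBound_pos : 0 < P.holderBound S := mul_pos P.holderConst_pos (Real.exp_pos _)

lemma gradMinBound_pos : 0 < P.gradMinBound S := mul_pos P.gradMin_pos (Real.exp_pos _)

lemma growth_pos : 0 < P.growth S := Real.exp_pos _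

lemma logRatio_nonneg : 0 ≤ P.logRatio := log_two_mul_div_nonneg P.gradMin_pos P.gradMin_le

lemma velocityGradConst_supportRadius_nonneg : 0 ≤ velocityGradConst d γ (P.supportRadius S) :=
  velocityGradConst_nonneg d P.exponent_pos (P.exponent_lt_one.trans one_lt_two) _

lemma eulerConst_supportRadius_nonneg : 0 ≤ eulerConst d γ (P.supportRadius S) :=
  zero_le_one.trans (one_le_eulerConst d P.exponent_pos P.exponent_lt_one _)

lemma strain_mono : Monotone (P.strain S) := fun _ _ h => by
  have := P.exponent_pos
  have := P.velocityGradConst_supportRadius_nonneg S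
  unfold strain
  gcongr

lemma strain_nonneg {q : ℝ} (hq : 0 ≤ q) : 0 ≤ P.strain S q := by
  have := P.exponent_pos
  have := P.velocityGradConst_supportRadius_nonneg S
  have := P.logRatio_nonneg
  unfold strain
  positivity

lemma strainBound_nonneg : 0 ≤ P.strainBound S := P.strain_nonneg S (P.growth_pos S).le

lemma growthRate_nonneg : 0 ≤ P.growthRate S := by
  have := P.eulerConst_supportRadius_nonneg S
  have := P.strain_nonneg S zero_le_one
  unfold growthRate
  positivity

lemma gradBound_nonneg (hS : 0 ≤ S) : 0 ≤ P.gradBound S := by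
  have := P.eulerConst_supportRadius_nonneg S
  have := P.holderBound_pos S
  have := P.supportRadius_pos S
  unfold gradBound
  positivity

lemma two_mul_eulerConst_mul_le {q : ℝ} (hq : 0 ≤ q) :
    2 * (eulerConst d γ (P.supportRadius S) * (1 + P.strain S q)) ≤ P.growthRate S * (1 + q) := by
  have hγ := P.exponent_pos
  have hC := P.eulerConst_supportRadius_nonneg S
  have hV := P.velocityGradConst_supportRadius_nonneg S
  have hL := P.logRatio_nonneg
  have hstrain : P.strain S q ≤ P.strain S 1 * (1 + q) := by
    rw [strain, strain, mul_assoc]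
    refine mul_le_mul_of_nonneg_left ?_ hV
    have : (P.logRatio + 2 * q) / γ ≤ (P.logRatio + 2 * 1) / γ * (1 + q) := by
      rw [div_mul_eq_mul_div]
      gcongr
      nlinarith
    nlinarith
  calc
    2 * (eulerConst d γ (P.supportRadius S) * (1 + P.strain S q)) ≤
        2 * (eulerConst d γ (P.supportRadius S) * ((1 + q) + P.strain S 1 * (1 + q))) := by
      gcongr
      linarith
    _ = P.growthRate S * (1 + q) := by
      rw [growthRate]
      ring

variable {S τ} {k : ℕ}

lemma loss_nonneg (hτ : 0 ≤ τ) (k : ℕ) : 0 ≤ P.loss S τ k :=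
  sub_nonneg.2 (one_le_pow₀ (le_add_of_nonneg_right (mul_nonneg hτ (P.growthRate_nonneg S))))

lemma loss_le (hτ : 0 ≤ τ) (hk : k * τ ≤ S) : P.loss S τ k ≤ P.growth S :=
  (sub_le_self _ zero_le_one).trans (one_add_mul_pow_le_exp hτ (P.growthRate_nonneg S) hk)

lemma loss_succ (S τ : ℝ) (k : ℕ) :
    P.loss S τ (k + 1) = P.loss S τ k + τ * (P.growthRate S * (1 + P.loss S τ k)) := by
  rw [loss, loss]
  ring

lemma stepRadius_pos (hτ : 0 ≤ τ) (k : ℕ) : 0 < P.stepRadius τ k :=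
  mul_pos P.radius_pos
    (pow_pos (add_pos_of_pos_of_nonneg one_pos (mul_nonneg hτ (velocityConst_nonneg d))) _)

lemma stepRadius_le (hτ : 0 ≤ τ) (hk : k * τ ≤ S) : P.stepRadius τ k ≤ P.supportRadius S :=
  mul_le_mul_of_nonneg_left (one_add_mul_pow_le_exp hτ (velocityConst_nonneg d) hk)
    P.radius_pos.le

lemma holderConst_mul_exp_loss_le (hτ : 0 ≤ τ) (hk : k * τ ≤ S) :
    P.holderConst * Real.exp (P.loss S τ k) ≤ P.holderBound S :=
  mul_le_mul_of_nonneg_left (Real.exp_le_exp.2 (P.loss_le hτ hk)) P.holderConst_pos.le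

lemma gradMinBound_le (hτ : 0 ≤ τ) (hk : k * τ ≤ S) :
    P.gradMinBound S ≤ P.gradMin * Real.exp (-P.loss S τ k) :=
  mul_le_mul_of_nonneg_left (Real.exp_le_exp.2 (neg_le_neg (P.loss_le hτ hk))) P.gradMin_pos.le

end Constants

/-- The defining functions of the Euler scheme with regularisation `ε` and time step `τ`. -/
noncomputable def potential : ℕ → ℝᵈ → ℝ
  | 0 => P.Φ
  | k + 1 => eulerPotential ε τ (fun x => cutoff ε (potential k x))
      (fun x => cutoffPrimitive ε (potential k x)) (potential k)

/-- The smoothed indicator functions of the patches in the Euler scheme. -/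
noncomputable def density (k : ℕ) (x : ℝᵈ) : ℝ := cutoff ε (P.potential ε τ k x)

/-- The primitives of the densities, in the sense of `IsSmoothPatch`. -/
noncomputable def primitive (k : ℕ) (x : ℝᵈ) : ℝ := cutoffPrimitive ε (P.potential ε τ k x)

/-- The flow maps of the Euler scheme. -/
noncomputable def flowMap : ℕ → ℝᵈ → ℝᵈ
  | 0 => id
  | k + 1 => fun α => eulerMap ε τ (P.density ε τ k) (flowMap k α)

lemma potential_succ (k : ℕ) : P.potential ε τ (k + 1) =
    eulerPotential ε τ (P.density ε τ k) (P.primitive ε τ k) (P.potential ε τ k) := rfl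

lemma flowMap_succ (k : ℕ) (α : ℝᵈ) :
    P.flowMap ε τ (k + 1) α = eulerMap ε τ (P.density ε τ k) (P.flowMap ε τ k α) := rfl

/-- Smallness conditions on the regularisation `ε` and the time step `τ` under which the a priori
estimates for the Euler scheme hold up to time `S`. -/
structure IsAdmissible : Prop where
  horizon_nonneg : 0 ≤ S
  eps_pos : 0 < ε
  tau_pos : 0 < τ
  holderBound_mul_le : P.holderBound S * ε ^ γ ≤ P.gradMinBound S
  drift_le_width : Real.exp (2 * mollifyConst d * S) *
    (ε * (1 + S * mollifyConst d * P.gradBound S)) ≤ P.width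
  tau_mul_strainBound_le : τ * P.strainBound S ≤ 1 / 2
  tau_mul_velocityGradHolderConst_le : τ * velocityGradHolderConst d γ (P.supportRadius S) ε ≤ 1
  tau_mul_mollifyConst_le : τ * mollifyConst d ≤ 1 / 2
  tau_mul_growthRate_le : τ * (P.growthRate S * (1 + P.growth S)) ≤ 1

/-- The a priori estimates satisfied by the `k`-th iterate of the Euler scheme, `g` being the
gradient of its defining function. The last two say that the defining function is nearly
transported by the flow. -/
structure StepBounds (k : ℕ) (g : ℝᵈ → ℝᵈ) : Prop where
  hasFDerivAt : ∀ x, HasFDerivAt (P.potential ε τ k) (innerSL ℝ (g x)) x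
  holder : ∀ x x', ‖g x - g x'‖ ≤ P.holderConst * Real.exp (P.loss S τ k) * ‖x - x'‖ ^ γ
  gradMin_le : ∀ α, -P.width ≤ P.Φ α → P.Φ α ≤ 0 →
    P.gradMin * Real.exp (-P.loss S τ k) ≤ ‖g (P.flowMap ε τ k α)‖
  norm_grad_le : ∀ α, ‖g (P.flowMap ε τ k α)‖ ≤
    ‖P.grad α‖ + k * τ * (eulerConst d γ (P.supportRadius S) * P.holderBound S)
  norm_flowMap_le : ∀ α, ‖α‖ ≤ P.radius → ‖P.flowMap ε τ k α‖ ≤ P.stepRadius τ k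
  bijective : Function.Bijective (P.flowMap ε τ k)
  mul_norm_sub_le : ∀ α β, (1 - τ * P.strainBound S) ^ k * ‖α - β‖ ≤
    ‖P.flowMap ε τ k α - P.flowMap ε τ k β‖
  norm_sub_le : ∀ α β, ‖P.flowMap ε τ k α - P.flowMap ε τ k β‖ ≤
    (1 + τ * P.strainBound S) ^ k * ‖α - β‖
  le_potential : ∀ α, P.Φ α ≤ P.potential ε τ k (P.flowMap ε τ k α)
  potential_le : ∀ α, P.Φ α ≤ 0 → P.potential ε τ k (P.flowMap ε τ k α) ≤
    (1 - τ * mollifyConst d) ^ k * P.Φ α + k * τ * (mollifyConst d * (ε * P.gradBound S))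

variable {P S ε τ} {k : ℕ} {g : EuclideanSpace ℝ (Fin d) → EuclideanSpace ℝ (Fin d)}

lemma stepBounds_zero : P.StepBounds S ε τ 0 P.grad where
  hasFDerivAt := P.hasFDerivAt
  holder := by simpa [loss] using P.holder
  gradMin_le α h1 h2 := by simpa [loss, flowMap] using P.gradMin_le_norm α h1 h2
  norm_grad_le α := by simp [flowMap]
  norm_flowMap_le α h := by simpa [stepRadius, flowMap] using h
  bijective := Function.bijective_id
  mul_norm_sub_le α β := by simp [flowMap]
  norm_sub_le α β := by simp [flowMap]
  le_potential α := by simp [flowMap, potential]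
  potential_le α _ := by simp [flowMap, potential]

namespace StepBounds

lemma continuous_potential (h : P.StepBounds S ε τ k g) : Continuous (P.potential ε τ k) :=
  continuous_iff_continuousAt.2 fun x => (h.hasFDerivAt x).continuousAt

lemma norm_le_stepRadius (h : P.StepBounds S ε τ k g) {x : ℝᵈ} (hx : P.potential ε τ k x ≤ 0) :
    ‖x‖ ≤ P.stepRadius τ k := by
  obtain ⟨α, rfl⟩ := h.bijective.2 x
  exact h.norm_flowMap_le α (P.norm_le α ((h.le_potential α).trans hx))

lemma isSmoothPatch (h : P.StepBounds S ε τ k g) (hε : 0 ≤ ε) {R : ℝ} (hR : P.stepRadius τ k ≤ R) :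
    IsSmoothPatch γ (P.holderConst * Real.exp (P.loss S τ k)) R (P.density ε τ k)
      (P.primitive ε τ k) g :=
  isSmoothPatch_cutoff hε P.exponent_pos (mul_pos P.holderConst_pos (Real.exp_pos _)).le
    h.hasFDerivAt h.holder fun _ hx =>
      mem_closedBall_zero_iff.2 ((h.norm_le_stepRadius hx.le).trans hR)

lemma norm_velocity_le [NeZero d] (h : P.StepBounds S ε τ k g) (hε : 0 ≤ ε) (hτ : 0 ≤ τ)
    (x : ℝᵈ) : ‖velocity ε (P.density ε τ k) x‖ ≤ velocityConst d * P.stepRadius τ k :=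
  (h.isSmoothPatch hε le_rfl).toIsDensity.norm_velocity_le (P.stepRadius_pos hτ k) ε x

lemma norm_grad_le_gradBound (h : P.StepBounds S ε τ k g) (hτ : 0 ≤ τ) (hk : k * τ ≤ S) {x : ℝᵈ}
    (hx : x ∈ closedBall (0 : ℝᵈ) (P.supportRadius S)) : ‖g x‖ ≤ P.gradBound S := by
  have hγ := P.exponent_pos
  have hY := P.holderBound_pos S
  have hC := P.eulerConst_supportRadius_nonneg S
  set x₀ := P.flowMap ε τ k 0
  have hx₀ : ‖x₀‖ ≤ P.supportRadius S :=
    (h.norm_flowMap_le 0 (by simpa using P.radius_pos.le)).trans (P.stepRadius_le hτ hk)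
  have hdist : ‖x - x₀‖ ≤ 2 * P.supportRadius S := by
    linarith [_root_.norm_sub_le x x₀, mem_closedBall_zero_iff.1 hx]
  calc
    ‖g x‖ ≤ ‖g x₀‖ + ‖g x - g x₀‖ := norm_le_insert' _ _
    _ ≤ (‖P.grad 0‖ + k * τ * (eulerConst d γ (P.supportRadius S) * P.holderBound S)) +
        P.holderConst * Real.exp (P.loss S τ k) * ‖x - x₀‖ ^ γ :=
      add_le_add (h.norm_grad_le 0) (h.holder x x₀)
    _ ≤ P.gradBound S := by
      unfold gradBound
      gcongr
      exact P.holderConst_mul_exp_loss_le hτ hk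

variable (hadm : P.IsAdmissible S ε τ) (hk : k * τ ≤ S)
include hadm hk

lemma gradMin_le_norm (h : P.StepBounds S ε τ k g) {x : ℝᵈ} (hx : -ε ≤ P.potential ε τ k x)
    (hx0 : P.potential ε τ k x ≤ 0) : P.gradMin * Real.exp (-P.loss S τ k) ≤ ‖g x‖ := by
  obtain ⟨α, rfl⟩ := h.bijective.2 x
  have hα : P.Φ α ≤ 0 := (h.le_potential α).trans hx0
  refine h.gradMin_le α ?_ hα
  have hM := P.gradBound_nonneg S hadm.horizon_nonneg
  have hC := mollifyConst_nonneg d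
  have hε := hadm.eps_pos
  set a := 2 * mollifyConst d * S
  have hupper : -(ε * (1 + S * mollifyConst d * P.gradBound S)) ≤ Real.exp (-a) * P.Φ α := by
    have hdecay : (1 - τ * mollifyConst d) ^ k * P.Φ α ≤ Real.exp (-a) * P.Φ α :=
      mul_le_mul_of_nonpos_right
        (exp_neg_le_one_sub_mul_pow hadm.tau_pos.le hC hadm.tau_mul_mollifyConst_le hk) hα
    have hdrift : k * τ * (mollifyConst d * (ε * P.gradBound S)) ≤
        S * (mollifyConst d * (ε * P.gradBound S)) := by gcongr
    linarith [h.potential_le α hα]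
  have hmul : Real.exp a * -(ε * (1 + S * mollifyConst d * P.gradBound S)) ≤ P.Φ α := calc
    _ ≤ Real.exp a * (Real.exp (-a) * P.Φ α) := by gcongr
    _ = P.Φ α := by rw [← mul_assoc, ← Real.exp_add, add_neg_cancel, Real.exp_zero, one_mul]
  linarith [hadm.drift_le_width]

lemma norm_velocityGrad_le_strain [NeZero d] (h : P.StepBounds S ε τ k g) {r : ℝ} (hr : 0 < r)
    (x : ℝᵈ) : ‖velocityGrad r (P.density ε τ k) x‖ ≤ P.strain S (P.loss S τ k) := by
  have hε := hadm.eps_pos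
  have hτ := hadm.tau_pos.le
  have hγ := P.exponent_pos
  have hpatch := h.isSmoothPatch hε.le (P.stepRadius_le hτ hk)
  obtain ⟨δ, hδ, hδ1, hscale, hlog⟩ :=
    exists_scale hγ P.gradMin_pos P.gradMin_le (P.loss_nonneg (S := S) hτ k)
  rw [strain, logRatio, ← hlog]
  exact hpatch.norm_velocityGrad_le hγ (P.exponent_lt_one.trans one_lt_two) hδ hδ1
    (le_norm_or_cutoff_comp_eq hγ.le hε (mul_pos P.gradMin_pos (Real.exp_pos _))
      h.continuous_potential h.holder hpatch.holderConst_nonneg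
      (fun _ => h.gradMin_le_norm hadm hk) hscale x) hr

lemma norm_velocityGrad_le_strainBound [NeZero d] (h : P.StepBounds S ε τ k g) (x : ℝᵈ) :
    ‖velocityGrad ε (P.density ε τ k) x‖ ≤ P.strainBound S :=
  (h.norm_velocityGrad_le_strain hadm hk hadm.eps_pos x).trans
    (P.strain_mono S (P.loss_le hadm.tau_pos.le hk))

end StepBounds

end InitialPatch

namespace InitialPatch

variable {γ : ℝ} {P : InitialPatch d γ} {S ε τ : ℝ} {k : ℕ}
  {g g' : EuclideanSpace ℝ (Fin d) → EuclideanSpace ℝ (Fin d)}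

lemma IsAdmissible.tau_mul_eulerConst_le (h : P.IsAdmissible S ε τ) (k : ℕ) :
    2 * (τ * (eulerConst d γ (P.supportRadius S) * (1 + P.strain S (P.loss S τ k)))) ≤
      P.loss S τ (k + 1) - P.loss S τ k := calc
  _ = τ * (2 * (eulerConst d γ (P.supportRadius S) * (1 + P.strain S (P.loss S τ k)))) := by ring
  _ ≤ τ * (P.growthRate S * (1 + P.loss S τ k)) :=
    mul_le_mul_of_nonneg_left
      (P.two_mul_eulerConst_mul_le S (P.loss_nonneg h.tau_pos.le k)) h.tau_pos.le
  _ = P.loss S τ (k + 1) - P.loss S τ k := by rw [loss_succ, add_sub_cancel_left]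

lemma IsAdmissible.loss_succ_sub_loss_le (h : P.IsAdmissible S ε τ) (hk : k * τ ≤ S) :
    P.loss S τ (k + 1) - P.loss S τ k ≤ 1 := by
  have hτ := h.tau_pos.le
  have hG := P.growthRate_nonneg S
  rw [loss_succ, add_sub_cancel_left]
  refine le_trans ?_ h.tau_mul_growthRate_le
  gcongr
  exact P.loss_le hτ hk

lemma IsAdmissible.one_add_tau_mul_eulerConst_le (h : P.IsAdmissible S ε τ) (k : ℕ) :
    1 + τ * (eulerConst d γ (P.supportRadius S) * (1 + P.strain S (P.loss S τ k))) ≤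
      Real.exp (P.loss S τ (k + 1) - P.loss S τ k) := by
  have hC := P.eulerConst_supportRadius_nonneg S
  have hA := P.strain_nonneg S (P.loss_nonneg (S := S) h.tau_pos.le k)
  have hτ := h.tau_pos
  have hnonneg :
      0 ≤ τ * (eulerConst d γ (P.supportRadius S) * (1 + P.strain S (P.loss S τ k))) := by
    positivity
  linarith [h.tau_mul_eulerConst_le k,
    Real.add_one_le_exp (P.loss S τ (k + 1) - P.loss S τ k)]

lemma IsAdmissible.exp_le_one_sub_tau_mul_eulerConst (h : P.IsAdmissible S ε τ)
    (hk : k * τ ≤ S) : Real.exp (-(P.loss S τ (k + 1) - P.loss S τ k)) ≤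
      1 - τ * (eulerConst d γ (P.supportRadius S) * (1 + P.strain S (P.loss S τ k))) := by
  have hC := P.eulerConst_supportRadius_nonneg S
  have hA := P.strain_nonneg S (P.loss_nonneg (S := S) h.tau_pos.le k)
  have hτ := h.tau_pos
  have hle := h.tau_mul_eulerConst_le k
  calc
    _ ≤ Real.exp (-(2 * (τ * (eulerConst d γ (P.supportRadius S) *
        (1 + P.strain S (P.loss S τ k)))))) := Real.exp_le_exp.2 (neg_le_neg hle)
    _ ≤ _ := exp_neg_two_mul_le_one_sub (by positivity)
      (by linarith [h.loss_succ_sub_loss_le hk])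

namespace StepBounds

section Succ

variable (h : P.StepBounds S ε τ k g) (hadm : P.IsAdmissible S ε τ) (hk : k * τ ≤ S)
include h hadm hk

lemma le_mul_norm_succ (hlow : ∀ x, P.holderConst * Real.exp (P.loss S τ k) * ε ^ γ ≤ ‖g x‖ →
      (1 - τ * (eulerConst d γ (P.supportRadius S) * (1 + P.strain S (P.loss S τ k)))) * ‖g x‖ ≤
        ‖g' (eulerMap ε τ (P.density ε τ k) x)‖) {α : ℝᵈ} (hα : -P.width ≤ P.Φ α)
    (hα0 : P.Φ α ≤ 0) :
    P.gradMin * Real.exp (-P.loss S τ (k + 1)) ≤ ‖g' (P.flowMap ε τ (k + 1) α)‖ := by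
  have hτ := hadm.tau_pos.le
  have hε := hadm.eps_pos
  have hm := P.gradMin_pos
  have hg := h.gradMin_le α hα hα0
  have hlarge : P.holderConst * Real.exp (P.loss S τ k) * ε ^ γ ≤ ‖g (P.flowMap ε τ k α)‖ := calc
    _ ≤ P.holderBound S * ε ^ γ := by
      gcongr
      exact P.holderConst_mul_exp_loss_le hτ hk
    _ ≤ P.gradMinBound S := hadm.holderBound_mul_le
    _ ≤ P.gradMin * Real.exp (-P.loss S τ k) := P.gradMinBound_le hτ hk
    _ ≤ _ := hg
  have hexp := hadm.exp_le_one_sub_tau_mul_eulerConst hk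
  calc
    _ = Real.exp (-(P.loss S τ (k + 1) - P.loss S τ k)) *
        (P.gradMin * Real.exp (-P.loss S τ k)) := by
      rw [mul_left_comm, ← Real.exp_add]
      ring_nf
    _ ≤ (1 - τ * (eulerConst d γ (P.supportRadius S) * (1 + P.strain S (P.loss S τ k)))) *
        ‖g (P.flowMap ε τ k α)‖ :=
      mul_le_mul hexp hg (by positivity) ((Real.exp_pos _).le.trans hexp)
    _ ≤ _ := hlow _ hlarge

omit h in
lemma norm_grad_succ_le (hnear : ∀ x, ‖g' (eulerMap ε τ (P.density ε τ k) x) - g x‖ ≤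
      τ * eulerConst d γ (P.supportRadius S) * (P.holderConst * Real.exp (P.loss S τ k)))
    {α : ℝᵈ} (hα : ‖g (P.flowMap ε τ k α)‖ ≤
      ‖P.grad α‖ + k * τ * (eulerConst d γ (P.supportRadius S) * P.holderBound S)) :
    ‖g' (P.flowMap ε τ (k + 1) α)‖ ≤ ‖P.grad α‖ +
      (k + 1 : ℕ) * τ * (eulerConst d γ (P.supportRadius S) * P.holderBound S) := by
  have hC := P.eulerConst_supportRadius_nonneg S
  have hτ := hadm.tau_pos.le
  have hle : τ * eulerConst d γ (P.supportRadius S) *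
      (P.holderConst * Real.exp (P.loss S τ k)) ≤
      τ * eulerConst d γ (P.supportRadius S) * P.holderBound S := by
    gcongr
    exact P.holderConst_mul_exp_loss_le hτ hk
  have htriangle := norm_le_insert' (g' (P.flowMap ε τ (k + 1) α)) (g (P.flowMap ε τ k α))
  rw [flowMap_succ] at htriangle ⊢
  push_cast
  linarith [hnear (P.flowMap ε τ k α)]

omit hk in
lemma norm_flowMap_succ_le [NeZero d] {α : ℝᵈ} (hα : ‖α‖ ≤ P.radius) :
    ‖P.flowMap ε τ (k + 1) α‖ ≤ P.stepRadius τ (k + 1) := by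
  have hτ := hadm.tau_pos.le
  rw [flowMap_succ, eulerMap]
  calc
    _ ≤ ‖P.flowMap ε τ k α‖ + ‖τ • velocity ε (P.density ε τ k) (P.flowMap ε τ k α)‖ :=
      _root_.norm_sub_le _ _
    _ ≤ P.stepRadius τ k + τ * (velocityConst d * P.stepRadius τ k) := by
      rw [norm_smul, Real.norm_of_nonneg hτ]
      gcongr
      · exact h.norm_flowMap_le α hα
      · exact h.norm_velocity_le hadm.eps_pos.le hτ _
    _ = P.stepRadius τ (k + 1) := by
      rw [stepRadius, stepRadius]
      ring

variable [NeZero d]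

lemma bijective_eulerMap : Function.Bijective (eulerMap ε τ (P.density ε τ k)) :=
  (h.isSmoothPatch hadm.eps_pos.le le_rfl).toIsDensity.bijective_eulerMap hadm.eps_pos
    (h.norm_velocityGrad_le_strainBound hadm hk) hadm.tau_pos.le hadm.tau_mul_strainBound_le

lemma potential_succ_eulerMap (x : ℝᵈ) :
    P.potential ε τ (k + 1) (eulerMap ε τ (P.density ε τ k) x) =
      P.potential ε τ k x - τ * mollify ε (P.primitive ε τ k) x := by
  rw [potential_succ, eulerPotential,
    Function.leftInverse_invFun (h.bijective_eulerMap hadm hk).1 x]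

lemma mul_norm_flowMap_succ_sub_le (α β : ℝᵈ) :
    (1 - τ * P.strainBound S) ^ (k + 1) * ‖α - β‖ ≤
      ‖P.flowMap ε τ (k + 1) α - P.flowMap ε τ (k + 1) β‖ := calc
  _ = (1 - τ * P.strainBound S) * ((1 - τ * P.strainBound S) ^ k * ‖α - β‖) := by ring
  _ ≤ (1 - τ * P.strainBound S) * ‖P.flowMap ε τ k α - P.flowMap ε τ k β‖ :=
    mul_le_mul_of_nonneg_left (h.mul_norm_sub_le α β)
      (by linarith [hadm.tau_mul_strainBound_le])
  _ ≤ _ := (h.isSmoothPatch hadm.eps_pos.le le_rfl).toIsDensity.mul_norm_sub_le_norm_eulerMap_sub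
    hadm.eps_pos (h.norm_velocityGrad_le_strainBound hadm hk) hadm.tau_pos.le _ _

lemma norm_flowMap_succ_sub_le (α β : ℝᵈ) :
    ‖P.flowMap ε τ (k + 1) α - P.flowMap ε τ (k + 1) β‖ ≤
      (1 + τ * P.strainBound S) ^ (k + 1) * ‖α - β‖ := calc
  _ ≤ (1 + τ * P.strainBound S) * ‖P.flowMap ε τ k α - P.flowMap ε τ k β‖ :=
    (h.isSmoothPatch hadm.eps_pos.le le_rfl).toIsDensity.norm_eulerMap_sub_le
      hadm.eps_pos (h.norm_velocityGrad_le_strainBound hadm hk) hadm.tau_pos.le _ _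
  _ ≤ (1 + τ * P.strainBound S) * ((1 + τ * P.strainBound S) ^ k * ‖α - β‖) :=
    mul_le_mul_of_nonneg_left (h.norm_sub_le α β)
      (add_nonneg zero_le_one (mul_nonneg hadm.tau_pos.le (P.strainBound_nonneg S)))
  _ = _ := by ring

lemma le_potential_succ (α : ℝᵈ) :
    P.Φ α ≤ P.potential ε τ (k + 1) (P.flowMap ε τ (k + 1) α) := by
  rw [flowMap_succ, h.potential_succ_eulerMap hadm hk]
  have hmollify := (h.isSmoothPatch hadm.eps_pos.le le_rfl).mollify_nonpos ε (P.flowMap ε τ k α)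
  linarith [h.le_potential α, mul_nonpos_of_nonneg_of_nonpos hadm.tau_pos.le hmollify]

lemma neg_mollify_primitive_le {x : ℝᵈ} (hx : x ∈ closedBall (0 : ℝᵈ) (P.supportRadius S)) :
    -mollify ε (P.primitive ε τ k) x ≤
      mollifyConst d * (max 0 (-P.potential ε τ k x) + ε * P.gradBound S) := by
  have hε := hadm.eps_pos
  have hC₀ := regKernelDivConst_nonneg d le_rfl two_pos
  have hC₁ := regKernelDivConst_nonneg d zero_le_one one_lt_two
  have hM := P.gradBound_nonneg S hadm.horizon_nonneg
  have hτ := hadm.tau_pos.le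
  calc
    _ ≤ regKernelDivConst d 0 * -P.primitive ε τ k x +
        regKernelDivConst d 1 * (P.gradBound S * ε) :=
      (h.isSmoothPatch hε.le (P.stepRadius_le hτ hk)).neg_mollify_le hε
        (fun _ => h.norm_grad_le_gradBound hτ hk) hx
    _ ≤ regKernelDivConst d 0 * max 0 (-P.potential ε τ k x) +
        regKernelDivConst d 1 * (P.gradBound S * ε) := by
      gcongr
      exact neg_cutoffPrimitive_le hε.le _
    _ ≤ _ := by
      have h₀ : 0 ≤ regKernelDivConst d 0 * (ε * P.gradBound S) := by positivity
      have h₁ : 0 ≤ regKernelDivConst d 1 * max 0 (-P.potential ε τ k x) :=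
        mul_nonneg hC₁ (le_max_left _ _)
      rw [mollifyConst]
      linarith

lemma potential_succ_le {α : ℝᵈ} (hα : P.Φ α ≤ 0) :
    P.potential ε τ (k + 1) (P.flowMap ε τ (k + 1) α) ≤
      (1 - τ * mollifyConst d) ^ (k + 1) * P.Φ α +
        (k + 1 : ℕ) * τ * (mollifyConst d * (ε * P.gradBound S)) := by
  have hτ := hadm.tau_pos.le
  have hε := hadm.eps_pos.le
  have hM := P.gradBound_nonneg S hadm.horizon_nonneg
  have hC := mollifyConst_nonneg d
  have hb : 0 ≤ 1 - τ * mollifyConst d := by linarith [hadm.tau_mul_mollifyConst_le]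
  have hx : P.flowMap ε τ k α ∈ closedBall (0 : ℝᵈ) (P.supportRadius S) :=
    mem_closedBall_zero_iff.2
      ((h.norm_flowMap_le α (P.norm_le α hα)).trans (P.stepRadius_le hτ hk))
  have hmollify := mul_le_mul_of_nonneg_left (h.neg_mollify_primitive_le hadm hk hx) hτ
  have ih := h.potential_le α hα
  rw [flowMap_succ, h.potential_succ_eulerMap hadm hk, pow_succ]
  push_cast
  set φ := P.potential ε τ k (P.flowMap ε τ k α)
  rcases le_total φ 0 with hφ | hφ
  · rw [max_eq_right (neg_nonneg.2 hφ)] at hmollify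
    have hmul := mul_le_mul_of_nonneg_left ih hb
    have : 0 ≤ τ * mollifyConst d * (k * τ * (mollifyConst d * (ε * P.gradBound S))) := by
      positivity
    linarith
  · rw [max_eq_left (neg_nonpos.2 hφ)] at hmollify
    have : (1 - τ * mollifyConst d) ^ k * P.Φ α * (τ * mollifyConst d) ≤ 0 :=
      mul_nonpos_of_nonpos_of_nonneg (mul_nonpos_of_nonneg_of_nonpos (by positivity) hα)
        (by positivity)
    linarith

theorem exists_succ : ∃ g', P.StepBounds S ε τ (k + 1) g' := by
  have hε := hadm.eps_pos
  have hτ := hadm.tau_pos.le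
  have hstrain : P.strain S (P.loss S τ k) ≤ P.strainBound S := P.strain_mono S (P.loss_le hτ hk)
  have hτA : τ * P.strain S (P.loss S τ k) ≤ 1 / 2 :=
    (mul_le_mul_of_nonneg_left hstrain hτ).trans hadm.tau_mul_strainBound_le
  have hpatch := h.isSmoothPatch hε.le (P.stepRadius_le hτ hk)
  obtain ⟨g', hderiv, hnear, hlow, hholder⟩ :=
    hpatch.exists_eulerStep P.exponent_pos P.exponent_lt_one hε
      (fun _ hδ => h.norm_velocityGrad_le_strain hadm hk (hε.trans_le hδ)) hτ hτA
      hadm.tau_mul_velocityGradHolderConst_le h.hasFDerivAt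
  refine ⟨g', hderiv, fun u u' => (hholder u u').trans ?_,
    fun _ => h.le_mul_norm_succ hadm hk hlow,
    fun α => norm_grad_succ_le hadm hk hnear (h.norm_grad_le α),
    fun _ => h.norm_flowMap_succ_le hadm, (h.bijective_eulerMap hadm hk).comp h.bijective,
    h.mul_norm_flowMap_succ_sub_le hadm hk, h.norm_flowMap_succ_sub_le hadm hk,
    h.le_potential_succ hadm hk, fun _ => h.potential_succ_le hadm hk⟩
  refine mul_le_mul_of_nonneg_right ?_ (Real.rpow_nonneg (norm_nonneg _) _)
  calc
    _ ≤ P.holderConst * Real.exp (P.loss S τ k) *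
        Real.exp (P.loss S τ (k + 1) - P.loss S τ k) :=
      mul_le_mul_of_nonneg_left (hadm.one_add_tau_mul_eulerConst_le k) hpatch.holderConst_nonneg
    _ = _ := by
      rw [mul_assoc, ← Real.exp_add, add_sub_cancel]

end Succ

end StepBounds

theorem IsAdmissible.exists_stepBounds [NeZero d] (hadm : P.IsAdmissible S ε τ) (k : ℕ)
    (hk : k * τ ≤ S) : ∃ g, P.StepBounds S ε τ k g := by
  induction k with
  | zero => exact ⟨P.grad, P.stepBounds_zero⟩
  | succ k ih =>
    have hk' : k * τ ≤ S := by
      push_cast at hk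
      linarith [hadm.tau_pos]
    obtain ⟨g, h⟩ := ih hk'
    exact h.exists_succ hadm hk'

end InitialPatch

open Filter Topology

namespace InitialPatch

variable {γ : ℝ} (P : InitialPatch d γ) (S ε τ : ℝ)

/-- Lipschitz constant, up to time `S`, of the flow maps and of their inverses. -/
noncomputable def lipBound : ℝ := Real.exp (2 * P.strainBound S * S)

/-- Bound for the velocity up to time `S`. -/
noncomputable def speedBound : ℝ := velocityConst d * P.supportRadius S

/-- Factor by which the defining function is preserved along the flow up to time `S`. -/
noncomputable def retention (d : ℕ) (S : ℝ) : ℝ := Real.exp (-(2 * mollifyConst d * S))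

/-- Bound, per unit of `ε`, for the increase of the defining function along the flow up to
time `S`. -/
noncomputable def drift : ℝ := S * mollifyConst d * P.gradBound S

lemma lipBound_pos : 0 < P.lipBound S := Real.exp_pos _

lemma speedBound_nonneg : 0 ≤ P.speedBound S :=
  mul_nonneg (velocityConst_nonneg d) (P.supportRadius_pos S).le

lemma retention_pos (d : ℕ) (S : ℝ) : 0 < retention d S := Real.exp_pos _

/-- The consequences of `StepBounds` which hold uniformly for all time steps up to time `S` and
all admissible parameters. -/
structure UniformBounds (k : ℕ) (g : ℝᵈ → ℝᵈ) : Prop where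
  hasFDerivAt : ∀ x, HasFDerivAt (P.potential ε τ k) (innerSL ℝ (g x)) x
  holder : ∀ x x', ‖g x - g x'‖ ≤ P.holderBound S * ‖x - x'‖ ^ γ
  gradMin_le : ∀ α, -P.width ≤ P.Φ α → P.Φ α ≤ 0 →
    P.gradMinBound S ≤ ‖g (P.flowMap ε τ k α)‖
  norm_grad_le : ∀ x ∈ closedBall (0 : ℝᵈ) (P.supportRadius S), ‖g x‖ ≤ P.gradBound S
  bijective : Function.Bijective (P.flowMap ε τ k)
  norm_sub_le_mul : ∀ α β,
    ‖α - β‖ ≤ P.lipBound S * ‖P.flowMap ε τ k α - P.flowMap ε τ k β‖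
  norm_flowMap_sub_le : ∀ α β,
    ‖P.flowMap ε τ k α - P.flowMap ε τ k β‖ ≤ P.lipBound S * ‖α - β‖
  le_potential : ∀ α, P.Φ α ≤ P.potential ε τ k (P.flowMap ε τ k α)
  potential_le : ∀ α, P.Φ α ≤ 0 →
    P.potential ε τ k (P.flowMap ε τ k α) ≤ retention d S * P.Φ α + P.drift S * ε
  flowMap_mem : ∀ α, P.Φ α ≤ 0 → P.flowMap ε τ k α ∈ closedBall (0 : ℝᵈ) (P.supportRadius S)
  isDensity : IsDensity (P.supportRadius S) (P.density ε τ k)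
  norm_velocity_le : ∀ x, ‖velocity ε (P.density ε τ k) x‖ ≤ P.speedBound S

variable {P S ε τ} {k : ℕ} {g : EuclideanSpace ℝ (Fin d) → EuclideanSpace ℝ (Fin d)}

namespace StepBounds

variable (hadm : P.IsAdmissible S ε τ) (hk : k * τ ≤ S)
include hadm hk

lemma norm_sub_le_lipBound_mul (h : P.StepBounds S ε τ k g) (α β : ℝᵈ) :
    ‖α - β‖ ≤ P.lipBound S * ‖P.flowMap ε τ k α - P.flowMap ε τ k β‖ := by
  have hlower : Real.exp (-(2 * P.strainBound S * S)) * ‖α - β‖ ≤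
      ‖P.flowMap ε τ k α - P.flowMap ε τ k β‖ :=
    (mul_le_mul_of_nonneg_right (exp_neg_le_one_sub_mul_pow hadm.tau_pos.le
      (P.strainBound_nonneg S) hadm.tau_mul_strainBound_le hk) (norm_nonneg _)).trans
      (h.mul_norm_sub_le α β)
  rwa [Real.exp_neg, inv_mul_le_iff₀ (Real.exp_pos _)] at hlower

lemma norm_flowMap_sub_le_lipBound_mul (h : P.StepBounds S ε τ k g) (α β : ℝᵈ) :
    ‖P.flowMap ε τ k α - P.flowMap ε τ k β‖ ≤ P.lipBound S * ‖α - β‖ := by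
  have hC := P.strainBound_nonneg S
  refine (h.norm_sub_le α β).trans (mul_le_mul_of_nonneg_right
    ((one_add_mul_pow_le_exp hadm.tau_pos.le hC hk).trans (Real.exp_le_exp.2 ?_)) (norm_nonneg _))
  linarith [mul_nonneg hC hadm.horizon_nonneg]

lemma potential_le_retention_mul_add (h : P.StepBounds S ε τ k g) {α : ℝᵈ} (hα : P.Φ α ≤ 0) :
    P.potential ε τ k (P.flowMap ε τ k α) ≤ retention d S * P.Φ α + P.drift S * ε := by
  have hC := mollifyConst_nonneg d
  have hM := P.gradBound_nonneg S hadm.horizon_nonneg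
  have hε := hadm.eps_pos.le
  calc
    _ ≤ (1 - τ * mollifyConst d) ^ k * P.Φ α + k * τ * (mollifyConst d * (ε * P.gradBound S)) :=
      h.potential_le α hα
    _ ≤ retention d S * P.Φ α + S * (mollifyConst d * (ε * P.gradBound S)) :=
      add_le_add (mul_le_mul_of_nonpos_right (exp_neg_le_one_sub_mul_pow hadm.tau_pos.le hC
        hadm.tau_mul_mollifyConst_le hk) hα) (by gcongr)
    _ = _ := by
      rw [drift]
      ring

theorem uniformBounds [NeZero d] (h : P.StepBounds S ε τ k g) : P.UniformBounds S ε τ k g where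
  hasFDerivAt := h.hasFDerivAt
  holder x x' := (h.holder x x').trans (mul_le_mul_of_nonneg_right
    (P.holderConst_mul_exp_loss_le hadm.tau_pos.le hk) (Real.rpow_nonneg (norm_nonneg _) _))
  gradMin_le α h1 h2 := (P.gradMinBound_le hadm.tau_pos.le hk).trans (h.gradMin_le α h1 h2)
  norm_grad_le _ := h.norm_grad_le_gradBound hadm.tau_pos.le hk
  bijective := h.bijective
  norm_sub_le_mul := h.norm_sub_le_lipBound_mul hadm hk
  norm_flowMap_sub_le := h.norm_flowMap_sub_le_lipBound_mul hadm hk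
  le_potential := h.le_potential
  potential_le _ := h.potential_le_retention_mul_add hadm hk
  flowMap_mem α hα := mem_closedBall_zero_iff.2 ((h.norm_flowMap_le α (P.norm_le α hα)).trans
    (P.stepRadius_le hadm.tau_pos.le hk))
  isDensity :=
    (h.isSmoothPatch hadm.eps_pos.le (P.stepRadius_le hadm.tau_pos.le hk)).toIsDensity
  norm_velocity_le x := (h.norm_velocity_le hadm.eps_pos.le hadm.tau_pos.le x).trans
    (mul_le_mul_of_nonneg_left (P.stepRadius_le hadm.tau_pos.le hk) (velocityConst_nonneg d))

end StepBounds

theorem IsAdmissible.exists_uniformBounds [NeZero d] (hadm : P.IsAdmissible S ε τ) (k : ℕ)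
    (hk : k * τ ≤ S) : ∃ g, P.UniformBounds S ε τ k g :=
  (hadm.exists_stepBounds k hk).imp fun _ h => h.uniformBounds hadm hk

end InitialPatch

lemma eventually_nhdsGT_zero_mul_le (c : ℝ) {b : ℝ} (hb : 0 < b) :
    ∀ᶠ τ in 𝓝[>] (0 : ℝ), τ * c ≤ b := by
  have h : Tendsto (fun τ : ℝ => τ * c) (𝓝 0) (𝓝 0) :=
    (continuous_id.mul continuous_const).tendsto' 0 0 (zero_mul c)
  exact (h.mono_left nhdsWithin_le_nhds).eventually_le_const hb

lemma eventually_nhdsGT_zero_mul_rpow_le {γ : ℝ} (hγ : 0 < γ) (c : ℝ) {b : ℝ} (hb : 0 < b) :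
    ∀ᶠ ε in 𝓝[>] (0 : ℝ), c * ε ^ γ ≤ b := by
  have h : Tendsto (fun ε : ℝ => c * ε ^ γ) (𝓝 0) (𝓝 0) :=
    (continuous_const.mul (Real.continuous_rpow_const hγ.le)).tendsto' 0 0 (by simp [hγ.ne'])
  exact (h.mono_left nhdsWithin_le_nhds).eventually_le_const hb

namespace InitialPatch

variable {γ : ℝ} (P : InitialPatch d γ)

lemma eventually_isAdmissible {S : ℝ} (hS : 0 ≤ S) :
    ∀ᶠ ε in 𝓝[>] (0 : ℝ), ∀ᶠ τ in 𝓝[>] (0 : ℝ), P.IsAdmissible S ε τ := by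
  filter_upwards [eventually_nhdsGT_zero_mul_rpow_le P.exponent_pos (P.holderBound S)
      (P.gradMinBound_pos S),
    eventually_nhdsGT_zero_mul_le
      (Real.exp (2 * mollifyConst d * S) * (1 + S * mollifyConst d * P.gradBound S)) P.width_pos,
    self_mem_nhdsWithin] with ε hholder hdrift hε
  filter_upwards [eventually_nhdsGT_zero_mul_le (P.strainBound S) one_half_pos,
    eventually_nhdsGT_zero_mul_le (velocityGradHolderConst d γ (P.supportRadius S) ε) one_pos,
    eventually_nhdsGT_zero_mul_le (mollifyConst d) one_half_pos,
    eventually_nhdsGT_zero_mul_le (P.growthRate S * (1 + P.growth S)) one_pos,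
    self_mem_nhdsWithin] with τ hstrain hvel hmol hrate hτ
  exact ⟨hS, hε, hτ, hholder, (by linarith), hstrain, hvel, hmol, hrate⟩

/-- A sequence of regularisations and time steps tending to zero which is eventually admissible
on each bounded time interval. -/
structure IsVanishing (ε τ : ℕ → ℝ) : Prop where
  tendsto_eps : Tendsto ε atTop (𝓝 0)
  tendsto_tau : Tendsto τ atTop (𝓝 0)
  isAdmissible : ∀ S n : ℕ, S ≤ n → P.IsAdmissible S (ε n) (τ n)

theorem exists_isVanishing : ∃ ε τ, P.IsVanishing ε τ := by
  have hsmall (n : ℕ) : ∀ᶠ r in 𝓝[>] (0 : ℝ), r ≤ 1 / ((n : ℝ) + 1) := by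
    simpa using eventually_nhdsGT_zero_mul_le 1 (b := 1 / ((n : ℝ) + 1)) (by positivity)
  have hexists (n : ℕ) : ∃ ε τ : ℝ, ε ≤ 1 / ((n : ℝ) + 1) ∧ τ ≤ 1 / ((n : ℝ) + 1) ∧
      ∀ S ∈ Finset.range (n + 1), P.IsAdmissible S ε τ := by
    obtain ⟨ε, hadm, hε⟩ := (((Finset.range (n + 1)).eventually_all.2 fun S _ =>
      P.eventually_isAdmissible S.cast_nonneg).and (hsmall n)).exists
    obtain ⟨τ, hadm', hτ⟩ :=
      (((Finset.range (n + 1)).eventually_all.2 hadm).and (hsmall n)).exists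
    exact ⟨ε, τ, hε, hτ, hadm'⟩
  choose ε τ hε hτ hadm using hexists
  have hadm0 (n : ℕ) := hadm n 0 (by simp)
  exact ⟨ε, τ,
    squeeze_zero (fun n => (hadm0 n).eps_pos.le) hε tendsto_one_div_add_atTop_nhds_zero_nat,
    squeeze_zero (fun n => (hadm0 n).tau_pos.le) hτ tendsto_one_div_add_atTop_nhds_zero_nat,
    fun S n hS => hadm n S (Finset.mem_range.2 (by omega))⟩

variable {P} {ε τ : ℕ → ℝ}

lemma IsVanishing.eps_pos (h : P.IsVanishing ε τ) (n : ℕ) : 0 < ε n :=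
  (h.isAdmissible 0 n n.zero_le).eps_pos

lemma IsVanishing.tau_pos (h : P.IsVanishing ε τ) (n : ℕ) : 0 < τ n :=
  (h.isAdmissible 0 n n.zero_le).tau_pos

end InitialPatch

/-! ### Passage to the limit -/

section DiagonalExtraction

variable {Z E : Type*} [PseudoMetricSpace E]

lemma exists_strictMono_forall_tendsto {u : ℕ → ℕ → E} {K : ℕ → Set E}
    (hK : ∀ i, IsCompact (K i)) (hu : ∀ i, ∀ᶠ n in atTop, u n i ∈ K i) :
    ∃ φ : ℕ → ℕ, StrictMono φ ∧ ∀ i, ∃ a, Tendsto (fun n => u (φ n) i) atTop (𝓝 a) := by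
  classical
  choose N hN using fun i => (hu i).exists
  let v : ℕ → ℕ → E := fun n i => if u n i ∈ K i then u n i else u (N i) i
  have hv : ∀ n, v n ∈ univ.pi K := fun n i _ => by
    by_cases h : u n i ∈ K i
    · simpa only [v, if_pos h]
    · simpa only [v, if_neg h] using hN i
  obtain ⟨a, -, φ, hφ, ha⟩ := (isCompact_univ_pi hK).tendsto_subseq hv
  refine ⟨φ, hφ, fun i => ⟨a i, (tendsto_pi_nhds.1 ha i).congr' ?_⟩⟩
  filter_upwards [hφ.tendsto_atTop.eventually (hu i)] with n hn
  exact if_pos hn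

variable [TopologicalSpace Z]

lemma cauchySeq_of_dense {u : ℕ → Z → E} {D : Set Z} (hD : Dense D)
    (hu : ∀ w ∈ D, CauchySeq fun n => u n w) {z : Z}
    (hz : Tendsto (fun p : ℕ × Z => dist (u p.1 p.2) (u p.1 z)) (atTop ×ˢ 𝓝 z) (𝓝 0)) :
    CauchySeq fun n => u n z := by
  refine Metric.cauchySeq_iff'.2 fun η hη => ?_
  obtain ⟨p, hp, q, hq, hpq⟩ :=
    eventually_prod_iff.1 (hz.eventually_lt_const (show 0 < η / 3 by linarith))
  obtain ⟨w, hw, hwD⟩ := mem_closure_iff_nhds.1 (hD z) _ hq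
  obtain ⟨N₁, hN₁⟩ := eventually_atTop.1 hp
  obtain ⟨N₂, hN₂⟩ := Metric.cauchySeq_iff.1 (hu w hwD) (η / 3) (by linarith)
  refine ⟨max N₁ N₂, fun n hn => ?_⟩
  have hn' := hpq (hN₁ n (le_of_max_le_left hn)) hw
  have hN' := hpq (hN₁ (max N₁ N₂) (le_max_left _ _)) hw
  have hw' := hN₂ n (le_of_max_le_right hn) (max N₁ N₂) (le_max_right _ _)
  rw [dist_comm] at hn'
  calc
    _ ≤ dist (u n z) (u n w) + dist (u n w) (u (max N₁ N₂) w) +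
        dist (u (max N₁ N₂) w) (u (max N₁ N₂) z) := dist_triangle4 _ _ _ _
    _ < η := by linarith

theorem exists_strictMono_tendsto_prod [TopologicalSpace.SeparableSpace Z] [CompleteSpace E]
    {u : ℕ → Z → E} {K : Z → Set E} (hK : ∀ z, IsCompact (K z))
    (hu : ∀ z, ∀ᶠ n in atTop, u n z ∈ K z)
    (heq : ∀ z, Tendsto (fun p : ℕ × Z => dist (u p.1 p.2) (u p.1 z)) (atTop ×ˢ 𝓝 z) (𝓝 0)) :
    ∃ φ : ℕ → ℕ, StrictMono φ ∧ ∃ U : Z → E, ∀ z,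
      Tendsto (fun p : ℕ × Z => u (φ p.1) p.2) (atTop ×ˢ 𝓝 z) (𝓝 (U z)) := by
  rcases isEmpty_or_nonempty Z with hZ | hZ
  · exact ⟨id, strictMono_id, hZ.elim, hZ.elim⟩
  obtain ⟨φ, hφ, hconv⟩ := exists_strictMono_forall_tendsto
    (fun i => hK (TopologicalSpace.denseSeq Z i)) fun i => hu (TopologicalSpace.denseSeq Z i)
  have heqφ (z : Z) : Tendsto (fun p : ℕ × Z => dist (u (φ p.1) p.2) (u (φ p.1) z))
      (atTop ×ˢ 𝓝 z) (𝓝 0) := (heq z).comp (hφ.tendsto_atTop.prodMap tendsto_id)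
  choose U hU using fun z => cauchySeq_tendsto_of_complete <|
    cauchySeq_of_dense (TopologicalSpace.denseRange_denseSeq Z)
      (forall_mem_range.2 fun i => (hconv i).choose_spec.cauchySeq) (heqφ z)
  refine ⟨φ, hφ, U, fun z => ((hU z).comp tendsto_fst).congr_dist ?_⟩
  simpa only [Function.comp_apply, dist_comm] using heqφ z

end DiagonalExtraction

section StepIndex

variable {τ s s' : ℝ}

lemma natFloor_div_mul_le (hτ : 0 < τ) : ⌊s / τ⌋₊ * τ ≤ max s 0 := by
  rcases le_total 0 s with h | h
  · exact ((le_div_iff₀ hτ).1 (Nat.floor_le (div_nonneg h hτ.le))).trans (le_max_left _ _)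
  · simp [Nat.floor_of_nonpos (div_nonpos_of_nonpos_of_nonneg h hτ.le)]

lemma lt_natFloor_div_add_one_mul (hτ : 0 < τ) : s < (⌊s / τ⌋₊ + 1) * τ :=
  (div_lt_iff₀ hτ).1 (Nat.lt_floor_add_one _)

lemma natFloor_div_le (hτ : 0 < τ) (h : s ≤ s') : ⌊s / τ⌋₊ ≤ ⌊s' / τ⌋₊ :=
  Nat.floor_mono (div_le_div_of_nonneg_right h hτ.le)

lemma natFloor_div_sub_mul_le (hτ : 0 < τ) (h : s ≤ s') :
    ((⌊s' / τ⌋₊ : ℝ) - ⌊s / τ⌋₊) * τ ≤ s' - s + τ := by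
  have hs : 0 ≤ (⌊s / τ⌋₊ : ℝ) * τ := by positivity
  rcases le_max_iff.1 (natFloor_div_mul_le (s := s') hτ) with hs' | hs' <;>
    linarith [lt_natFloor_div_add_one_mul (s := s) hτ]

end StepIndex

namespace InitialPatch

variable {γ : ℝ} {P : InitialPatch d γ}

lemma norm_flowMap_sub_add_smul_le {ε τ : ℝ} (hτ : 0 ≤ τ) {α w : ℝᵈ} {c : ℝ} {k l : ℕ}
    (hkl : k ≤ l)
    (hw : ∀ i, k ≤ i → i < l → ‖velocity ε (P.density ε τ i) (P.flowMap ε τ i α) - w‖ ≤ c) :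
    ‖P.flowMap ε τ l α - P.flowMap ε τ k α + (((l : ℝ) - k) * τ) • w‖ ≤ ((l : ℝ) - k) * τ * c := by
  induction l, hkl using Nat.le_induction with
  | base => simp
  | succ l hkl ih =>
    have hl := hw l hkl l.lt_succ_self
    rw [flowMap_succ, eulerMap]
    set v := velocity ε (P.density ε τ l) (P.flowMap ε τ l α)
    calc
      _ = ‖(P.flowMap ε τ l α - P.flowMap ε τ k α + (((l : ℝ) - k) * τ) • w) - τ • (v - w)‖ := by
        congr 1
        push_cast
        module
      _ ≤ ((l : ℝ) - k) * τ * c + τ * c := by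
        refine (norm_sub_le _ _).trans (add_le_add
          (ih fun i hi hil => hw i hi (hil.trans l.lt_succ_self)) ?_)
        rw [norm_smul, Real.norm_of_nonneg hτ]
        exact mul_le_mul_of_nonneg_left hl hτ
      _ = _ := by
        push_cast
        ring

namespace IsVanishing

variable {ε τ : ℕ → ℝ}

lemma exists_uniformBounds [NeZero d] (h : P.IsVanishing ε τ) {S n : ℕ} (hS : S ≤ n) {s : ℝ}
    (hs : s ≤ S) {k : ℕ} (hk : k ≤ ⌊s / τ n⌋₊) : ∃ g, P.UniformBounds S (ε n) (τ n) k g := by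
  refine (h.isAdmissible S n hS).exists_uniformBounds k ?_
  have hτ := h.tau_pos n
  calc
    (k : ℝ) * τ n ≤ ⌊s / τ n⌋₊ * τ n := by gcongr
    _ ≤ S := (natFloor_div_mul_le hτ).trans (max_le hs S.cast_nonneg)

lemma norm_flowMap_sub_le_of_le [NeZero d] (h : P.IsVanishing ε τ) {S n : ℕ} (hS : S ≤ n)
    {s s' : ℝ} (hs' : s' ≤ S) (hss' : s ≤ s') (α : ℝᵈ) :
    ‖P.flowMap (ε n) (τ n) ⌊s' / τ n⌋₊ α - P.flowMap (ε n) (τ n) ⌊s / τ n⌋₊ α‖ ≤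
      (s' - s + τ n) * P.speedBound S := by
  have hτ := h.tau_pos n
  have hstep := norm_flowMap_sub_add_smul_le (P := P) (ε := ε n) (α := α) (w := 0) hτ.le
    (natFloor_div_le hτ hss') (c := P.speedBound S) fun i _ hi => by
      obtain ⟨g, hg⟩ := h.exists_uniformBounds hS hs' hi.le
      simpa using hg.norm_velocity_le _
  rw [smul_zero, add_zero] at hstep
  exact hstep.trans (mul_le_mul_of_nonneg_right (natFloor_div_sub_mul_le hτ hss')
    (P.speedBound_nonneg S))

lemma norm_flowMap_sub_le [NeZero d] (h : P.IsVanishing ε τ) {S n : ℕ} (hS : S ≤ n) {s s' : ℝ}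
    (hs : s ≤ S) (hs' : s' ≤ S) (α α' : ℝᵈ) :
    ‖P.flowMap (ε n) (τ n) ⌊s' / τ n⌋₊ α' - P.flowMap (ε n) (τ n) ⌊s / τ n⌋₊ α‖ ≤
      P.lipBound S * ‖α' - α‖ + (|s' - s| + τ n) * P.speedBound S := by
  obtain ⟨g, hg⟩ := h.exists_uniformBounds hS hs' le_rfl
  refine (norm_sub_le_norm_sub_add_norm_sub _ (P.flowMap (ε n) (τ n) ⌊s' / τ n⌋₊ α) _).trans
    (add_le_add (hg.norm_flowMap_sub_le α' α) ?_)
  rcases le_total s s' with hss' | hss'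
  · rw [abs_of_nonneg (sub_nonneg.2 hss')]
    exact h.norm_flowMap_sub_le_of_le hS hs' hss' α
  · rw [norm_sub_rev, abs_sub_comm, abs_of_nonneg (sub_nonneg.2 hss')]
    exact h.norm_flowMap_sub_le_of_le hS hs hss' α

lemma eventually_flowMap_mem_closedBall [NeZero d] (h : P.IsVanishing ε τ) (α : ℝᵈ) (s : ℝ) :
    ∀ᶠ n in atTop, P.flowMap (ε n) (τ n) ⌊s / τ n⌋₊ α ∈
      closedBall α ((|s| + 1) * P.speedBound ⌈|s|⌉₊) := by
  filter_upwards [eventually_ge_atTop ⌈|s|⌉₊,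
    h.tendsto_tau.eventually_le_const one_pos] with n hn hτ
  have hflow := h.norm_flowMap_sub_le hn (Nat.cast_nonneg _) ((le_abs_self s).trans (Nat.le_ceil _))
    α α
  simp only [zero_div, Nat.floor_zero, flowMap, id, sub_self, norm_zero, mul_zero, zero_add,
    sub_zero] at hflow
  rw [mem_closedBall_iff_norm]
  exact hflow.trans (mul_le_mul_of_nonneg_right (by linarith) (P.speedBound_nonneg _))

lemma tendsto_dist_flowMap [NeZero d] (h : P.IsVanishing ε τ) (α : ℝᵈ) (s : ℝ) :
    Tendsto (fun p : ℕ × (ℝᵈ × ℝ) => dist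
      (P.flowMap (ε p.1) (τ p.1) ⌊p.2.2 / τ p.1⌋₊ p.2.1)
      (P.flowMap (ε p.1) (τ p.1) ⌊s / τ p.1⌋₊ α)) (atTop ×ˢ 𝓝 (α, s)) (𝓝 0) := by
  obtain ⟨S, hS⟩ := exists_nat_gt s
  have htime : Tendsto (fun p : ℕ × (ℝᵈ × ℝ) => p.2.2) (atTop ×ˢ 𝓝 (α, s)) (𝓝 s) :=
    (continuous_snd.tendsto (α, s)).comp tendsto_snd
  have hpoint : Tendsto (fun p : ℕ × (ℝᵈ × ℝ) => p.2.1) (atTop ×ˢ 𝓝 (α, s)) (𝓝 α) :=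
    (continuous_fst.tendsto (α, s)).comp tendsto_snd
  have hbound := ((hpoint.sub_const α).norm.const_mul (P.lipBound S)).add
    (((htime.sub_const s).abs.add (h.tendsto_tau.comp tendsto_fst)).mul_const (P.speedBound S))
  refine squeeze_zero' (.of_forall fun _ => dist_nonneg) ?_ (by simpa using hbound)
  filter_upwards [htime.eventually_lt_const hS,
    tendsto_fst.eventually (eventually_ge_atTop S)] with p hp hn
  rw [dist_eq_norm]
  exact h.norm_flowMap_sub_le hn hS.le hp.le _ _

end IsVanishing

variable (P) in
/-- `X` is a limit of the flows of the Euler schemes with parameters `ε n` and `τ n`, uniformly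
near each point of space-time. -/
structure IsLimitFlow (ε τ : ℕ → ℝ) (X : ℝᵈ → ℝ → ℝᵈ) : Prop extends P.IsVanishing ε τ where
  tendsto_flowMap : ∀ α s, Tendsto
    (fun p : ℕ × (ℝᵈ × ℝ) => P.flowMap (ε p.1) (τ p.1) ⌊p.2.2 / τ p.1⌋₊ p.2.1)
    (atTop ×ˢ 𝓝 (α, s)) (𝓝 (X α s))

theorem exists_isLimitFlow [NeZero d] (P : InitialPatch d γ) :
    ∃ ε τ X, P.IsLimitFlow ε τ X := by
  obtain ⟨ε, τ, h⟩ := P.exists_isVanishing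
  obtain ⟨φ, hφ, X, hX⟩ := exists_strictMono_tendsto_prod
    (u := fun n (z : ℝᵈ × ℝ) => P.flowMap (ε n) (τ n) ⌊z.2 / τ n⌋₊ z.1)
    (fun _ => isCompact_closedBall _ _)
    (fun z => h.eventually_flowMap_mem_closedBall z.1 z.2)
    (fun z => h.tendsto_dist_flowMap z.1 z.2)
  exact ⟨ε ∘ φ, τ ∘ φ, fun α s => X (α, s),
    ⟨h.tendsto_eps.comp hφ.tendsto_atTop, h.tendsto_tau.comp hφ.tendsto_atTop,
      fun S n hS => h.isAdmissible S (φ n) (hS.trans (hφ.id_le n))⟩, fun α s => hX (α, s)⟩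

end InitialPatch

lemma exists_tendsto_of_eventually_mem {ι V : Type*} [TopologicalSpace V] {l : Ultrafilter ι}
    {u : ι → V} {K : Set V} (hK : IsCompact K) (hu : ∀ᶠ i in l, u i ∈ K) :
    ∃ a, Tendsto u l (𝓝 a) :=
  (hK.ultrafilter_le_nhds' (l.map u) hu).imp fun _ => And.right

section HolderGradient

variable {E : Type*} [NormedAddCommGroup E] [InnerProductSpace ℝ E] {γ C : ℝ} {F : E → ℝ}
  {g : E → E}

/-- `F` is of class `C^{1+γ}`, with gradient `g` of `γ`-Hölder constant at most `C`. -/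
structure HasHolderGradient (γ C : ℝ) (F : E → ℝ) (g : E → E) : Prop where
  exponent_pos : 0 < γ
  nonneg : 0 ≤ C
  hasFDerivAt : ∀ x, HasFDerivAt F (innerSL ℝ (g x)) x
  holder : ∀ x x', ‖g x - g x'‖ ≤ C * ‖x - x'‖ ^ γ

lemma hasFDerivAt_of_abs_sub_sub_inner_le (hγ : 0 < γ) {x v : E}
    (h : ∀ y, |F y - F x - ⟪v, y - x⟫| ≤ C * ‖y - x‖ ^ γ * ‖y - x‖) :
    HasFDerivAt F (innerSL ℝ v) x := by
  refine hasFDerivAt_iff_isLittleO.2 (Asymptotics.isLittleO_iff.2 fun c hc => ?_)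
  have hcont : ContinuousAt (fun y => C * ‖y - x‖ ^ γ) x :=
    continuousAt_const.mul (ContinuousAt.rpow_const (by fun_prop) (Or.inr hγ.le))
  have hlt : (fun y => C * ‖y - x‖ ^ γ) x < c := by simpa [Real.zero_rpow hγ.ne'] using hc
  filter_upwards [hcont.eventually_lt_const hlt] with y hy
  exact (h y).trans (mul_le_mul_of_nonneg_right hy.le (norm_nonneg _))

namespace HasHolderGradient

lemma continuous_gradient (h : HasHolderGradient γ C F g) : Continuous g :=
  continuous_of_norm_sub_le_rpow h.exponent_pos h.holder

lemma continuous (h : HasHolderGradient γ C F g) : Continuous F :=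
  continuous_iff_continuousAt.2 fun x => (h.hasFDerivAt x).continuousAt

lemma gradient_eq [CompleteSpace E] (h : HasHolderGradient γ C F g) : gradient F = g :=
  funext fun x => (hasGradientAt_iff_hasFDerivAt.2 (h.hasFDerivAt x)).gradient

lemma contDiff (h : HasHolderGradient γ C F g) : ContDiff ℝ 1 F := by
  refine contDiff_one_iff_fderiv.2 ⟨fun x => (h.hasFDerivAt x).differentiableAt, ?_⟩
  rw [show fderiv ℝ F = fun x => innerSL ℝ (g x) from funext fun x => (h.hasFDerivAt x).fderiv]
  exact (innerSL ℝ).continuous.comp h.continuous_gradient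

lemma abs_sub_sub_inner_le (h : HasHolderGradient γ C F g) (x y : E) :
    |F y - F x - ⟪g x, y - x⟫| ≤ C * ‖y - x‖ ^ γ * ‖y - x‖ := by
  have hC := h.nonneg
  have hγ := h.exponent_pos
  have hmean := (convex_segment x y).norm_image_sub_le_of_norm_hasFDerivWithin_le'
    (fun z _ => (h.hasFDerivAt z).hasFDerivWithinAt) (φ := innerSL ℝ (g x))
    (C := C * ‖y - x‖ ^ γ) (fun z hz => ?_) (left_mem_segment ℝ x y) (right_mem_segment ℝ x y)
  · simpa using hmean
  · rw [← map_sub, innerSL_apply_norm]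
    refine (h.holder z x).trans ?_
    have := norm_sub_le_of_mem_segment hz
    gcongr

lemma norm_gradient_le (h : HasHolderGradient γ C F g) {u x : E} {M r : ℝ} (hM : ‖g u‖ ≤ M)
    (hr : ‖x - u‖ ≤ r) : ‖g x‖ ≤ M + C * r ^ γ := by
  have hγ := h.exponent_pos
  calc
    ‖g x‖ ≤ ‖g u‖ + ‖g x - g u‖ := norm_le_norm_add_norm_sub' _ _
    _ ≤ M + C * r ^ γ := by
      refine add_le_add hM ((h.holder x u).trans (mul_le_mul_of_nonneg_left ?_ h.nonneg))
      gcongr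

lemma abs_sub_le (h : HasHolderGradient γ C F g) {u x : E} {M r : ℝ} (hM : ‖g u‖ ≤ M)
    (hr : ‖x - u‖ ≤ r) : |F x - F u| ≤ (M + C * r ^ γ) * r := by
  have hC := h.nonneg
  have hγ := h.exponent_pos
  have hr0 : 0 ≤ r := (norm_nonneg _).trans hr
  have hM0 : 0 ≤ M := (norm_nonneg _).trans hM
  calc
    |F x - F u| ≤ |F x - F u - ⟪g u, x - u⟫| + |⟪g u, x - u⟫| := by
      simpa using abs_add_le (F x - F u - ⟪g u, x - u⟫) ⟪g u, x - u⟫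
    _ ≤ C * ‖x - u‖ ^ γ * ‖x - u‖ + ‖g u‖ * ‖x - u‖ :=
      add_le_add (h.abs_sub_sub_inner_le u x) (abs_real_inner_le_norm _ _)
    _ ≤ C * r ^ γ * r + M * r := by gcongr
    _ = _ := by ring

variable {ι : Type*} {l : Filter ι} {Fs : ι → E → ℝ} {gs : ι → E → E}

lemma of_tendsto [l.NeBot] (h : ∀ᶠ i in l, HasHolderGradient γ C (Fs i) (gs i))
    (hF : ∀ x, Tendsto (fun i => Fs i x) l (𝓝 (F x)))
    (hg : ∀ x, Tendsto (fun i => gs i x) l (𝓝 (g x))) : HasHolderGradient γ C F g where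
  exponent_pos := h.exists.choose_spec.exponent_pos
  nonneg := h.exists.choose_spec.nonneg
  hasFDerivAt x := hasFDerivAt_of_abs_sub_sub_inner_le h.exists.choose_spec.exponent_pos fun y =>
    le_of_tendsto (((hF y).sub (hF x)).sub ((hg x).inner tendsto_const_nhds)).abs
      (h.mono fun _ hi => hi.abs_sub_sub_inner_le x y)
  holder x x' := le_of_tendsto ((hg x).sub (hg x')).norm (h.mono fun _ hi => hi.holder x x')

lemma tendsto_gradient (h : ∀ᶠ i in l, HasHolderGradient γ C (Fs i) (gs i)) {x c : E}
    {v : ι → E} (hg : Tendsto (fun i => gs i x) l (𝓝 c)) (hv : Tendsto v l (𝓝 x)) :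
    Tendsto (fun i => gs i (v i)) l (𝓝 c) := by
  rcases l.eq_or_neBot with rfl | hl
  · exact tendsto_bot
  have hγ := h.exists.choose_spec.exponent_pos
  refine hg.congr_dist (squeeze_zero' (.of_forall fun _ => dist_nonneg)
    (h.mono fun i hi => (dist_eq_norm (gs i x) _).trans_le (hi.holder x (v i))) ?_)
  simpa [Real.zero_rpow hγ.ne'] using
    (((hv.const_sub x).norm).rpow_const (Or.inr hγ.le)).const_mul C

lemma tendsto_apply (h : ∀ᶠ i in l, HasHolderGradient γ C (Fs i) (gs i)) {x c : E} {b : ℝ}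
    {v : ι → E} (hF : Tendsto (fun i => Fs i x) l (𝓝 b))
    (hg : Tendsto (fun i => gs i x) l (𝓝 c)) (hv : Tendsto v l (𝓝 x)) :
    Tendsto (fun i => Fs i (v i)) l (𝓝 b) := by
  rcases l.eq_or_neBot with rfl | hl
  · exact tendsto_bot
  have hγ := h.exists.choose_spec.exponent_pos
  refine hF.congr_dist (squeeze_zero' (.of_forall fun _ => dist_nonneg)
    (h.mono fun i hi => (dist_comm (Fs i x) _).trans_le (hi.abs_sub_le le_rfl le_rfl)) ?_)
  have hdist : Tendsto (fun i => ‖v i - x‖) l (𝓝 0) := by simpa using (hv.sub_const x).norm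
  simpa using (hg.norm.add ((hdist.rpow_const (Or.inr hγ.le)).const_mul C)).mul hdist

theorem exists_ultrafilter_limit [ProperSpace E] {l : Ultrafilter ι} {A M r : ℝ}
    (h : ∀ᶠ i in l, HasHolderGradient γ C (Fs i) (gs i) ∧
      ∃ u ∈ closedBall (0 : E) r, |Fs i u| ≤ A ∧ ‖gs i u‖ ≤ M) :
    ∃ Ψ G, HasHolderGradient γ C Ψ G ∧ ∀ x v, Tendsto v l (𝓝 x) →
      Tendsto (fun i => Fs i (v i)) l (𝓝 (Ψ x)) ∧ Tendsto (fun i => gs i (v i)) l (𝓝 (G x)) := by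
  have hdist {x u : E} (hu : u ∈ closedBall (0 : E) r) : ‖x - u‖ ≤ ‖x‖ + r :=
    (norm_sub_le _ _).trans (add_le_add_right (mem_closedBall_zero_iff.1 hu) _)
  have hF (x : E) : ∃ b, Tendsto (fun i => Fs i x) l (𝓝 b) := by
    refine exists_tendsto_of_eventually_mem
      (isCompact_closedBall 0 (A + (M + C * (‖x‖ + r) ^ γ) * (‖x‖ + r))) ?_
    filter_upwards [h] with i ⟨hi, u, hu, hA, hM⟩
    have := hi.abs_sub_le hM (hdist (x := x) hu)
    rw [mem_closedBall_zero_iff, Real.norm_eq_abs]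
    linarith [abs_sub_abs_le_abs_sub (Fs i x) (Fs i u)]
  have hg (x : E) : ∃ c, Tendsto (fun i => gs i x) l (𝓝 c) := by
    refine exists_tendsto_of_eventually_mem
      (isCompact_closedBall 0 (M + C * (‖x‖ + r) ^ γ)) ?_
    filter_upwards [h] with i ⟨hi, u, hu, _, hM⟩
    exact mem_closedBall_zero_iff.2 (hi.norm_gradient_le hM (hdist hu))
  choose Ψ hΨ using hF
  choose G hG using hg
  have h' := h.mono fun _ => And.left
  exact ⟨Ψ, G, of_tendsto h' hΨ hG, fun x v hv =>
    ⟨tendsto_apply h' (hΨ x) (hG x) hv, tendsto_gradient h' (hG x) hv⟩⟩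

end HasHolderGradient

/- `x ↦ x + F x • e` agrees with the identity on `{F = 0}`, so its derivative is the identity at
almost every point of that set. -/
lemma volume_setOf_eq_zero_of_gradient_ne_zero [MeasurableSpace E] [BorelSpace E]
    [FiniteDimensional ℝ E] (hF : ∀ x, HasFDerivAt F (innerSL ℝ (g x)) x)
    (hg : ∀ x, F x = 0 → g x ≠ 0) : volume {x | F x = 0} = 0 := by
  rcases subsingleton_or_nontrivial E with hE | hE
  · exact measure_mono_null (fun x hx => hg x hx (Subsingleton.elim _ _)) measure_empty
  obtain ⟨e, he⟩ := exists_ne (0 : E)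
  have hmeas : MeasurableSet {x | F x = 0} := (isClosed_eq
    (continuous_iff_continuousAt.2 fun x => (hF x).continuousAt) continuous_const).measurableSet
  have hid : ApproximatesLinearOn (fun x => x + F x • e) (ContinuousLinearMap.id ℝ E)
      {x | F x = 0} 0 := fun x (hx : F x = 0) y (hy : F y = 0) => by simp [hx, hy]
  have hderiv := hid.norm_fderiv_sub_le volume hmeas
    (fun x => ContinuousLinearMap.id ℝ E + (innerSL ℝ (g x)).smulRight e)
    fun x _ => ((hasFDerivAt_id x).add ((hF x).smul_const e)).hasFDerivWithinAt
  rw [ae_restrict_iff' hmeas, ae_iff] at hderiv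
  refine measure_mono_null (fun x hx => ?_) hderiv
  intro hle
  refine hg x hx ?_
  have hzero := hle hx
  rw [add_sub_cancel_left, nonpos_iff_eq_zero, nnnorm_eq_zero] at hzero
  simpa [he] using DFunLike.congr_fun hzero (g x)

end HolderGradient

namespace InitialPatch

variable {γ : ℝ} {P : InitialPatch d γ}

lemma UniformBounds.hasHolderGradient {S ε τ : ℝ} {k : ℕ}
    {g : EuclideanSpace ℝ (Fin d) → EuclideanSpace ℝ (Fin d)}
    (h : P.UniformBounds S ε τ k g) :
    HasHolderGradient γ (P.holderBound S) (P.potential ε τ k) g where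
  exponent_pos := P.exponent_pos
  nonneg := (P.holderBound_pos S).le
  hasFDerivAt := h.hasFDerivAt
  holder := h.holder

namespace IsLimitFlow

variable {ε τ : ℕ → ℝ} {X : EuclideanSpace ℝ (Fin d) → ℝ → EuclideanSpace ℝ (Fin d)}

lemma tendsto (h : P.IsLimitFlow ε τ X) {ι : Type*} {l : Filter ι} {n : ι → ℕ} {a : ι → ℝᵈ}
    {σ : ι → ℝ} {α : ℝᵈ} {s : ℝ} (hn : Tendsto n l atTop) (ha : Tendsto a l (𝓝 α))
    (hσ : Tendsto σ l (𝓝 s)) :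
    Tendsto (fun i => P.flowMap (ε (n i)) (τ (n i)) ⌊σ i / τ (n i)⌋₊ (a i)) l (𝓝 (X α s)) :=
  (h.tendsto_flowMap α s).comp (hn.prodMk (ha.prodMk_nhds hσ))

lemma tendsto_atTop (h : P.IsLimitFlow ε τ X) (α : ℝᵈ) (s : ℝ) :
    Tendsto (fun n => P.flowMap (ε n) (τ n) ⌊s / τ n⌋₊ α) atTop (𝓝 (X α s)) :=
  h.tendsto tendsto_id tendsto_const_nhds tendsto_const_nhds

lemma apply_zero (h : P.IsLimitFlow ε τ X) (α : ℝᵈ) : X α 0 = α :=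
  tendsto_nhds_unique (h.tendsto_atTop α 0) (by simp [flowMap])

lemma exists_ultrafilter_limit_potential (h : P.IsLimitFlow ε τ X) {S : ℕ} {s : ℝ}
    {l : Ultrafilter ℕ} (hl : (l : Filter ℕ) ≤ atTop) {g : ℕ → ℝᵈ → ℝᵈ}
    (hg : ∀ᶠ n in l, P.UniformBounds S (ε n) (τ n) ⌊s / τ n⌋₊ (g n)) :
    ∃ Ψ G, HasHolderGradient γ (P.holderBound S) Ψ G ∧ ∀ α,
      Tendsto (fun n => P.potential (ε n) (τ n) ⌊s / τ n⌋₊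
        (P.flowMap (ε n) (τ n) ⌊s / τ n⌋₊ α)) l (𝓝 (Ψ (X α s))) ∧
      Tendsto (fun n => g n (P.flowMap (ε n) (τ n) ⌊s / τ n⌋₊ α)) l (𝓝 (G (X α s))) := by
  obtain ⟨α₀, hα₀⟩ := P.exists_nonpos
  have hdrift := ((h.tendsto_eps.const_mul (P.drift S)).const_add
    (retention d S * P.Φ α₀)).eventually_le_const (lt_add_one _)
  obtain ⟨Ψ, G, hΨ, hlim⟩ := HasHolderGradient.exists_ultrafilter_limit <|
    (hg.and (hdrift.filter_mono hl)).mono fun n ⟨hn, hle⟩ =>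
      have hmem := hn.flowMap_mem α₀ hα₀
      ⟨hn.hasHolderGradient, _, hmem,
        abs_le_max_abs_abs (hn.le_potential α₀) ((hn.potential_le α₀ hα₀).trans hle),
        hn.norm_grad_le _ hmem⟩
  exact ⟨Ψ, G, hΨ, fun α => hlim _ _ ((h.tendsto_atTop α s).mono_left hl)⟩

variable [NeZero d]

lemma norm_sub_le_mul (h : P.IsLimitFlow ε τ X) {S : ℕ} {s : ℝ} (hs : s ≤ S) (α β : ℝᵈ) :
    ‖α - β‖ ≤ P.lipBound S * ‖X α s - X β s‖ := by
  refine ge_of_tendsto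
    (((h.tendsto_atTop α s).sub (h.tendsto_atTop β s)).norm.const_mul (P.lipBound S)) ?_
  filter_upwards [eventually_ge_atTop S] with n hn
  obtain ⟨g, hg⟩ := h.exists_uniformBounds hn hs le_rfl
  exact hg.norm_sub_le_mul α β

lemma norm_apply_sub_le (h : P.IsLimitFlow ε τ X) {S : ℕ} {s : ℝ} (hs : s ≤ S) (α β : ℝᵈ) :
    ‖X α s - X β s‖ ≤ P.lipBound S * ‖α - β‖ := by
  refine le_of_tendsto ((h.tendsto_atTop α s).sub (h.tendsto_atTop β s)).norm ?_
  filter_upwards [eventually_ge_atTop S] with n hn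
  obtain ⟨g, hg⟩ := h.exists_uniformBounds hn hs le_rfl
  exact hg.norm_flowMap_sub_le α β

lemma lipschitzWith (h : P.IsLimitFlow ε τ X) {S : ℕ} {s : ℝ} (hs : s ≤ S) :
    LipschitzWith (P.lipBound S).toNNReal fun α => X α s :=
  .of_dist_le_mul fun α β => by
    simpa only [dist_eq_norm, Real.coe_toNNReal _ (P.lipBound_pos S).le] using
      h.norm_apply_sub_le hs α β

lemma antilipschitzWith (h : P.IsLimitFlow ε τ X) {S : ℕ} {s : ℝ} (hs : s ≤ S) :
    AntilipschitzWith (P.lipBound S).toNNReal fun α => X α s :=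
  .of_le_mul_dist fun α β => by
    simpa only [dist_eq_norm, Real.coe_toNNReal _ (P.lipBound_pos S).le] using
      h.norm_sub_le_mul hs α β

lemma exists_eventually_uniformBounds (h : P.IsLimitFlow ε τ X) {ι : Type*} {l : Filter ι}
    {n : ι → ℕ} {σ : ι → ℝ} {s : ℝ} (hn : Tendsto n l atTop) (hσ : Tendsto σ l (𝓝 s)) :
    ∃ S : ℕ, ∀ᶠ i in l, ∃ g, P.UniformBounds S (ε (n i)) (τ (n i)) ⌊σ i / τ (n i)⌋₊ g := by
  obtain ⟨S, hS⟩ := exists_nat_gt s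
  refine ⟨S, ?_⟩
  filter_upwards [hn.eventually (eventually_ge_atTop S), hσ.eventually_lt_const hS] with i hi hi'
  exact h.exists_uniformBounds hi hi'.le le_rfl

lemma exists_tendsto_preimage (h : P.IsLimitFlow ε τ X) {ι : Type*} {l : Filter ι} {n : ι → ℕ}
    {σ : ι → ℝ} {s : ℝ} (hn : Tendsto n l atTop) (hσ : Tendsto σ l (𝓝 s)) {y : ι → ℝᵈ} {β : ℝᵈ}
    (hy : Tendsto y l (𝓝 (X β s))) :
    ∃ a : ι → ℝᵈ, Tendsto a l (𝓝 β) ∧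
      ∀ᶠ i in l, P.flowMap (ε (n i)) (τ (n i)) ⌊σ i / τ (n i)⌋₊ (a i) = y i := by
  obtain ⟨S, hS⟩ := h.exists_eventually_uniformBounds hn hσ
  let a (i : ι) : ℝᵈ := Function.invFun (P.flowMap (ε (n i)) (τ (n i)) ⌊σ i / τ (n i)⌋₊) (y i)
  have ha : ∀ᶠ i in l, P.flowMap (ε (n i)) (τ (n i)) ⌊σ i / τ (n i)⌋₊ (a i) = y i :=
    hS.mono fun i ⟨_, hg⟩ => Function.rightInverse_invFun hg.bijective.2 (y i)
  refine ⟨a, tendsto_iff_norm_sub_tendsto_zero.2 ?_, ha⟩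
  have hlim : Tendsto (fun i => P.lipBound S *
      ‖y i - P.flowMap (ε (n i)) (τ (n i)) ⌊σ i / τ (n i)⌋₊ β‖) l (𝓝 0) := by
    simpa using ((hy.sub (h.tendsto hn (tendsto_const_nhds (x := β)) hσ)).norm).const_mul
      (P.lipBound S)
  refine squeeze_zero' (.of_forall fun _ => norm_nonneg _) ?_ hlim
  filter_upwards [hS, ha] with i ⟨g, hg⟩ hi
  rw [← hi]
  exact hg.norm_sub_le_mul (a i) β

lemma surjective (h : P.IsLimitFlow ε τ X) (s : ℝ) : Function.Surjective fun α => X α s := by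
  intro x
  obtain ⟨S, hS⟩ := h.exists_eventually_uniformBounds tendsto_id (tendsto_const_nhds (x := s))
  simp only [id] at hS
  let a (n : ℕ) : ℝᵈ := Function.invFun (P.flowMap (ε n) (τ n) ⌊s / τ n⌋₊) x
  have ha : ∀ᶠ n in atTop, P.flowMap (ε n) (τ n) ⌊s / τ n⌋₊ (a n) = x :=
    hS.mono fun n ⟨_, hg⟩ => Function.rightInverse_invFun hg.bijective.2 x
  have hbound : ∀ᶠ n in atTop, a n ∈ closedBall (0 : ℝᵈ) (P.lipBound S * ‖x - X 0 s‖ + 1) := by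
    filter_upwards [hS, ha, (((h.tendsto_atTop 0 s).const_sub x).norm.const_mul
      (P.lipBound S)).eventually_le_const (lt_add_one _)] with n ⟨g, hg⟩ hn hle
    rw [mem_closedBall_iff_norm]
    refine (hg.norm_sub_le_mul (a n) 0).trans ?_
    rwa [hn]
  obtain ⟨α, hα⟩ := exists_tendsto_of_eventually_mem (isCompact_closedBall _ _)
    (hbound.filter_mono Nat.hyperfilter_le_atTop)
  refine ⟨α, tendsto_nhds_unique
    (h.tendsto Nat.hyperfilter_le_atTop hα (tendsto_const_nhds (x := s))) ?_⟩
  exact tendsto_const_nhds.congr' ((ha.filter_mono Nat.hyperfilter_le_atTop).mono fun _ => Eq.symm)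

lemma isHomeomorph (h : P.IsLimitFlow ε τ X) (s : ℝ) : IsHomeomorph fun α => X α s := by
  obtain ⟨S, hS⟩ := exists_nat_ge s
  exact isHomeomorph_iff_isEmbedding_surjective.2 ⟨((h.antilipschitzWith hS).isClosedEmbedding
    (h.lipschitzWith hS).uniformContinuous).isEmbedding, h.surjective s⟩

theorem exists_limitPotential (h : P.IsLimitFlow ε τ X) (s : ℝ) :
    ∃ C Ψ G, HasHolderGradient γ C Ψ G ∧ (∀ x, Ψ x = 0 → G x ≠ 0) ∧
      ∀ α, SignType.sign (Ψ (X α s)) = SignType.sign (P.Φ α) := by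
  obtain ⟨S, hS⟩ := h.exists_eventually_uniformBounds tendsto_id (tendsto_const_nhds (x := s))
  obtain ⟨g, hg⟩ := hS.choice
  have hl := Nat.hyperfilter_le_atTop
  have hg' := hg.filter_mono hl
  obtain ⟨Ψ, G, hΨ, hlim⟩ := h.exists_ultrafilter_limit_potential hl hg'
  have hlower (α : ℝᵈ) : P.Φ α ≤ Ψ (X α s) :=
    ge_of_tendsto (hlim α).1 (hg'.mono fun _ hn => hn.le_potential α)
  have hupper {α : ℝᵈ} (hα : P.Φ α ≤ 0) : Ψ (X α s) ≤ retention d S * P.Φ α := by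
    have hdrift := ((h.tendsto_eps.const_mul (P.drift S)).const_add
      (retention d S * P.Φ α)).mono_left hl
    rw [mul_zero, add_zero] at hdrift
    exact le_of_tendsto_of_tendsto (hlim α).1 hdrift (hg'.mono fun _ hn => hn.potential_le α hα)
  have hsign (α : ℝᵈ) : SignType.sign (Ψ (X α s)) = SignType.sign (P.Φ α) := by
    rcases lt_trichotomy (P.Φ α) 0 with hα | hα | hα
    · rw [sign_neg hα, sign_neg ((hupper hα.le).trans_lt
        (mul_neg_of_pos_of_neg (retention_pos d S) hα))]
    · rw [le_antisymm ((hupper hα.le).trans_eq (by rw [hα, mul_zero])) (hα ▸ hlower α), hα]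
    · rw [sign_pos hα, sign_pos (hα.trans_le (hlower α))]
  refine ⟨_, Ψ, G, hΨ, fun x hx => ?_, hsign⟩
  obtain ⟨α, rfl⟩ := h.surjective s x
  have hα : P.Φ α = 0 := by rw [← sign_eq_zero_iff, ← hsign α, sign_eq_zero_iff, hx]
  exact norm_pos_iff.1 ((P.gradMinBound_pos S).trans_le (ge_of_tendsto (hlim α).2.norm
    (hg'.mono fun n hn => hn.gradMin_le α (by linarith [P.width_pos]) hα.le)))

end IsLimitFlow

end InitialPatch

section VelocityConvergence

lemma tendsto_regKernel_zero {E : Type*} [NormedAddCommGroup E] [InnerProductSpace ℝ E] (n : ℕ)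
    {z : E} (hz : z ≠ 0) : Tendsto (fun r => regKernel n r z) (𝓝 0) (𝓝 (regKernel n 0 z)) := by
  have hcont : Continuous fun r : ℝ => regNorm r z := by
    unfold regNorm
    fun_prop
  have hne : regNorm 0 z ^ n ≠ 0 := by
    rw [regNorm_zero]
    exact pow_ne_zero _ (norm_ne_zero_iff.2 hz)
  exact (((hcont.pow n).tendsto 0).inv₀ hne).smul_const z

lemma velocity_eq_integral_sub (r : ℝ) (ρ : ℝᵈ → ℝ) (x : ℝᵈ) :
    velocity r ρ x = ∫ z, ρ (x - z) • regKernel d r z := by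
  rw [velocity, ← integral_sub_left_eq_self _ volume x]
  simp only [sub_sub_cancel]

lemma velocity_indicator_one {D : Set ℝᵈ} (hD : MeasurableSet D) (r : ℝ) (x : ℝᵈ) :
    velocity r (D.indicator 1) x = ∫ y in D, regKernel d r (x - y) := by
  rw [velocity, ← integral_indicator hD]
  refine integral_congr_ae (.of_forall fun y => ?_)
  by_cases hy : y ∈ D <;> simp [hy]

lemma IsDensity.norm_smul_regKernel_le {R R' r : ℝ} {ρ : ℝᵈ → ℝ} (hρ : IsDensity R ρ)
    {x z : ℝᵈ} (hx : R + ‖x‖ ≤ R') (hz : z ≠ 0) :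
    ‖ρ (x - z) • regKernel d r z‖ ≤ (closedBall 0 R').indicator (fun z => ‖z‖ ^ (1 - d : ℝ)) z := by
  by_cases hmem : z ∈ closedBall 0 R'
  · rw [indicator_of_mem hmem, norm_smul, Real.norm_of_nonneg (hρ.nonneg _)]
    exact (mul_le_of_le_one_left (norm_nonneg _) (hρ.le_one _)).trans
      (norm_regKernel_le_rpow d r hz)
  · rw [indicator_of_notMem hmem, hρ.eq_zero, zero_smul, norm_zero]
    rw [mem_closedBall_zero_iff] at hmem ⊢
    linarith [norm_sub_norm_le z x, norm_sub_rev x z]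

variable [NeZero d]

lemma integrableOn_closedBall_norm_rpow_sub {b R : ℝ} (hb : 0 < b) (hR : 0 < R) :
    IntegrableOn (fun z : ℝᵈ => ‖z‖ ^ (b - d)) (closedBall 0 R) := by
  refine (((integrable_scaleWeight hb one_pos hR).const_mul (R ^ b)).integrableOn).congr_fun
    (fun z hz => ?_) measurableSet_closedBall
  beta_reduce
  rw [scaleWeight, radialProfile, if_pos (mem_closedBall_zero_iff.1 hz), mul_left_comm,
    ← Real.rpow_add hR, add_neg_cancel, Real.rpow_zero, mul_one]

lemma tendsto_velocity {ι : Type*} {l : Filter ι} [l.IsCountablyGenerated] {e : ι → ℝ}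
    {ρ : ι → ℝᵈ → ℝ} {ρ₀ : ℝᵈ → ℝ} {x : ι → ℝᵈ} {x₀ : ℝᵈ} {R : ℝ} (hR : 0 < R)
    (he : Tendsto e l (𝓝[>] 0)) (hρ : ∀ᶠ i in l, IsDensity R (ρ i)) (hx : Tendsto x l (𝓝 x₀))
    (hlim : ∀ᵐ y₀, ∀ y : ι → ℝᵈ, Tendsto y l (𝓝 y₀) →
      Tendsto (fun i => ρ i (y i)) l (𝓝 (ρ₀ y₀))) :
    Tendsto (fun i => velocity (e i) (ρ i) (x i)) l (𝓝 (velocity 0 ρ₀ x₀)) := by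
  simp only [velocity_eq_integral_sub]
  have hR' : 0 < R + (‖x₀‖ + 1) := by positivity
  refine tendsto_integral_filter_of_dominated_convergence _ ?_ ?_
    ((integrableOn_closedBall_norm_rpow_sub one_pos hR').integrable_indicator
      measurableSet_closedBall) ?_
  · filter_upwards [hρ, he self_mem_nhdsWithin] with i hi hei
    exact ((hi.continuous.comp (continuous_sub_left _)).smul
      (continuous_regKernel d hei)).aestronglyMeasurable
  · filter_upwards [hρ, hx.norm.eventually_le_const (lt_add_one _)] with i hi hxi
    filter_upwards [volume.ae_ne 0] with z hz
    exact hi.norm_smul_regKernel_le (by gcongr) hz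
  · filter_upwards [(Measure.measurePreserving_sub_left volume x₀).quasiMeasurePreserving.ae hlim,
      volume.ae_ne 0] with z hlim_z hz
    exact (hlim_z _ (hx.sub_const z)).smul
      ((tendsto_regKernel_zero d hz).comp (he.mono_right nhdsWithin_le_nhds))

end VelocityConvergence

namespace InitialPatch

variable {γ : ℝ} {P : InitialPatch d γ}

lemma continuous_Φ (P : InitialPatch d γ) : Continuous P.Φ :=
  continuous_iff_continuousAt.2 fun x => (P.hasFDerivAt x).continuousAt

namespace IsLimitFlow

variable [NeZero d] {ε τ : ℕ → ℝ} {X : EuclideanSpace ℝ (Fin d) → ℝ → EuclideanSpace ℝ (Fin d)}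

lemma eventually_density_eq_one (h : P.IsLimitFlow ε τ X) {ι : Type*} {l : Filter ι} {n : ι → ℕ}
    {σ : ι → ℝ} {s : ℝ} (hn : Tendsto n l atTop) (hσ : Tendsto σ l (𝓝 s)) {y : ι → ℝᵈ} {β : ℝᵈ}
    (hy : Tendsto y l (𝓝 (X β s))) (hβ : P.Φ β < 0) :
    ∀ᶠ i in l, P.density (ε (n i)) (τ (n i)) ⌊σ i / τ (n i)⌋₊ (y i) = 1 := by
  obtain ⟨S, hS⟩ := h.exists_eventually_uniformBounds hn hσ
  obtain ⟨a, ha, hay⟩ := h.exists_tendsto_preimage hn hσ hy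
  have hΦ := (P.continuous_Φ.tendsto β).comp ha
  have hε := h.tendsto_eps.comp hn
  have hupper := ((hΦ.const_mul (retention d S)).add (hε.const_mul (P.drift S))).add hε
  rw [mul_zero, add_zero, add_zero] at hupper
  filter_upwards [hS, hay, hΦ.eventually_lt_const hβ,
    hupper.eventually_lt_const (mul_neg_of_pos_of_neg (retention_pos d S) hβ)]
    with i ⟨g, hg⟩ hi hneg hlt
  simp only [Function.comp_apply] at hlt hneg
  rw [← hi]
  exact cutoff_of_le_neg (h.eps_pos _) (by linarith [hg.potential_le (a i) hneg.le])

lemma eventually_density_eq_zero (h : P.IsLimitFlow ε τ X) {ι : Type*} {l : Filter ι} {n : ι → ℕ}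
    {σ : ι → ℝ} {s : ℝ} (hn : Tendsto n l atTop) (hσ : Tendsto σ l (𝓝 s)) {y : ι → ℝᵈ} {β : ℝᵈ}
    (hy : Tendsto y l (𝓝 (X β s))) (hβ : 0 < P.Φ β) :
    ∀ᶠ i in l, P.density (ε (n i)) (τ (n i)) ⌊σ i / τ (n i)⌋₊ (y i) = 0 := by
  obtain ⟨S, hS⟩ := h.exists_eventually_uniformBounds hn hσ
  obtain ⟨a, ha, hay⟩ := h.exists_tendsto_preimage hn hσ hy
  filter_upwards [hS, hay, ((P.continuous_Φ.tendsto β).comp ha).eventually_const_lt hβ]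
    with i ⟨g, hg⟩ hi hpos
  rw [← hi]
  exact cutoff_of_nonneg (h.eps_pos _).le (hpos.le.trans (hg.le_potential (a i)))

lemma volume_image_boundary (h : P.IsLimitFlow ε τ X) (s : ℝ) :
    volume ((fun α => X α s) '' {α | P.Φ α = 0}) = 0 := by
  obtain ⟨C, Ψ, G, hΨ, hG, hsign⟩ := h.exists_limitPotential s
  refine measure_mono_null (image_subset_iff.2 fun α hα => ?_)
    (volume_setOf_eq_zero_of_gradient_ne_zero hΨ.hasFDerivAt hG)
  change P.Φ α = 0 at hα
  change Ψ (X α s) = 0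
  rw [← sign_eq_zero_iff, hsign, hα, sign_zero]

lemma tendsto_density (h : P.IsLimitFlow ε τ X) {ι : Type*} {l : Filter ι} {n : ι → ℕ}
    {σ : ι → ℝ} {s : ℝ} (hn : Tendsto n l atTop) (hσ : Tendsto σ l (𝓝 s)) :
    ∀ᵐ y₀, ∀ y : ι → ℝᵈ, Tendsto y l (𝓝 y₀) →
      Tendsto (fun i => P.density (ε (n i)) (τ (n i)) ⌊σ i / τ (n i)⌋₊ (y i)) l
        (𝓝 (((fun α => X α s) '' {α | P.Φ α < 0}).indicator 1 y₀)) := by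
  filter_upwards [compl_mem_ae_iff.2 (h.volume_image_boundary s)] with y₀ hy₀ y hy
  obtain ⟨β, rfl⟩ := h.surjective s y₀
  have hinj := (h.isHomeomorph s).injective
  rcases lt_trichotomy (P.Φ β) 0 with hβ | hβ | hβ
  · rw [indicator_of_mem (mem_image_of_mem (fun α => X α s) (show β ∈ {α | P.Φ α < 0} from hβ))]
    exact tendsto_const_nhds.congr'
      ((h.eventually_density_eq_one hn hσ hy hβ).mono fun _ => Eq.symm)
  · exact absurd ⟨β, hβ, rfl⟩ hy₀
  · rw [indicator_of_notMem fun hmem => hβ.not_gt (hinj.mem_set_image.1 hmem)]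
    exact tendsto_const_nhds.congr'
      ((h.eventually_density_eq_zero hn hσ hy hβ).mono fun _ => Eq.symm)

lemma tendsto_velocity (h : P.IsLimitFlow ε τ X) (α : ℝᵈ) (s : ℝ) :
    Tendsto (fun p : ℕ × ℝ => velocity (ε p.1) (P.density (ε p.1) (τ p.1) ⌊p.2 / τ p.1⌋₊)
        (P.flowMap (ε p.1) (τ p.1) ⌊p.2 / τ p.1⌋₊ α)) (atTop ×ˢ 𝓝 s)
      (𝓝 (∫ y in (fun α => X α s) '' {α | P.Φ α < 0}, regKernel d 0 (X α s - y))) := by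
  have hopen : IsOpen ((fun α => X α s) '' {α | P.Φ α < 0}) :=
    (h.isHomeomorph s).isOpenMap _ (isOpen_lt P.continuous_Φ continuous_const)
  rw [← velocity_indicator_one hopen.measurableSet]
  obtain ⟨S, hS⟩ := h.exists_eventually_uniformBounds (l := atTop ×ˢ 𝓝 s) tendsto_fst tendsto_snd
  refine AggregationPatch.tendsto_velocity (P.supportRadius_pos S) ?_
    (hS.mono fun p ⟨_, hg⟩ => hg.isDensity)
    (h.tendsto tendsto_fst tendsto_const_nhds tendsto_snd)
    (h.tendsto_density tendsto_fst tendsto_snd)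
  exact (tendsto_nhdsWithin_iff.2 ⟨h.tendsto_eps, .of_forall h.eps_pos⟩).comp tendsto_fst

end IsLimitFlow

end InitialPatch

lemma tendsto_natFloor_div_sub_mul {ι : Type*} {l : Filter ι} {τ : ι → ℝ} (hτ : ∀ i, 0 < τ i)
    (hlim : Tendsto τ l (𝓝 0)) {s s' : ℝ} (hs : 0 ≤ s) (hle : s ≤ s') :
    Tendsto (fun i => ((⌊s' / τ i⌋₊ : ℝ) - ⌊s / τ i⌋₊) * τ i) l (𝓝 (s' - s)) := by
  have hlower : Tendsto (fun i => s' - s - τ i) l (𝓝 (s' - s)) := by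
    simpa using hlim.const_sub (s' - s)
  have hupper : Tendsto (fun i => s' - s + τ i) l (𝓝 (s' - s)) := by
    simpa using hlim.const_add (s' - s)
  refine tendsto_of_tendsto_of_tendsto_of_le_of_le hlower hupper (fun i => ?_)
    fun i => natFloor_div_sub_mul_le (hτ i) hle
  have hfloor := natFloor_div_mul_le (s := s) (hτ i)
  rw [max_eq_left hs] at hfloor
  linarith [lt_natFloor_div_add_one_mul (s := s') (hτ i)]

namespace InitialPatch

variable {γ : ℝ} {P : InitialPatch d γ}

namespace IsLimitFlow

variable {ε τ : ℕ → ℝ} {X : EuclideanSpace ℝ (Fin d) → ℝ → EuclideanSpace ℝ (Fin d)}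

lemma norm_sub_add_smul_le (h : P.IsLimitFlow ε τ X) {α w : ℝᵈ} {a s s' η : ℝ} (hs : 0 ≤ s)
    (hle : s ≤ s') (ha : a < s) (hη : ∀ᶠ n in atTop, ∀ σ ∈ Icc a s',
      ‖velocity (ε n) (P.density (ε n) (τ n) ⌊σ / τ n⌋₊) (P.flowMap (ε n) (τ n) ⌊σ / τ n⌋₊ α) - w‖
        ≤ η) :
    ‖X α s' - X α s + (s' - s) • w‖ ≤ (s' - s) * η := by
  have hlen := tendsto_natFloor_div_sub_mul h.tau_pos h.tendsto_tau hs hle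
  refine le_of_tendsto_of_tendsto (((h.tendsto_atTop α s').sub (h.tendsto_atTop α s)).add
    (hlen.smul_const w)).norm (hlen.mul_const η) ?_
  filter_upwards [hη, h.tendsto_tau.eventually_lt_const (sub_pos.2 ha)] with n hn hτn
  have hτ := h.tau_pos n
  refine P.norm_flowMap_sub_add_smul_le hτ.le (natFloor_div_le hτ hle) fun i hsi his => ?_
  have hmem : i * τ n ∈ Icc a s' := by
    constructor
    · have : ((⌊s / τ n⌋₊ : ℝ) + 1) * τ n ≤ (i + 1) * τ n := by gcongr
      linarith [lt_natFloor_div_add_one_mul (s := s) hτ]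
    · calc i * τ n ≤ ⌊s' / τ n⌋₊ * τ n := by gcongr
        _ ≤ s' := (natFloor_div_mul_le hτ).trans_eq (max_eq_left (hs.trans hle))
  simpa only [mul_div_cancel_right₀ _ hτ.ne', Nat.floor_natCast] using hn _ hmem

lemma hasDerivWithinAt_of_tendsto_velocity (h : P.IsLimitFlow ε τ X) {α w : ℝᵈ} {s : ℝ}
    (hs : 0 ≤ s)
    (hw : Tendsto (fun p : ℕ × ℝ => velocity (ε p.1) (P.density (ε p.1) (τ p.1) ⌊p.2 / τ p.1⌋₊)
      (P.flowMap (ε p.1) (τ p.1) ⌊p.2 / τ p.1⌋₊ α)) (atTop ×ˢ 𝓝 s) (𝓝 w)) :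
    HasDerivWithinAt (X α) (-w) (Ici 0) s := by
  rw [hasDerivWithinAt_iff_isLittleO, Asymptotics.isLittleO_iff]
  intro η hη
  obtain ⟨p, hp, q, hq, hpq⟩ := eventually_prod_iff.1 (hw.eventually (closedBall_mem_nhds w hη))
  obtain ⟨δ, hδ, hball⟩ := eventually_nhds_iff_ball.1 hq
  have hclose {σ : ℝ} (hσ : σ < s + δ) : ∀ᶠ n in atTop, ∀ σ' ∈ Icc (s - δ / 2) σ,
      ‖velocity (ε n) (P.density (ε n) (τ n) ⌊σ' / τ n⌋₊)
        (P.flowMap (ε n) (τ n) ⌊σ' / τ n⌋₊ α) - w‖ ≤ η :=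
    hp.mono fun n hn σ' hσ' => mem_closedBall_iff_norm.1 (hpq hn (hball σ' (by
      rw [Real.ball_eq_Ioo]
      exact ⟨by linarith [hσ'.1], hσ'.2.trans_lt hσ⟩)))
  filter_upwards [self_mem_nhdsWithin,
    mem_nhdsWithin_of_mem_nhds (ball_mem_nhds s (half_pos hδ))] with σ hσ0 hσ
  rw [Real.ball_eq_Ioo] at hσ
  rcases le_total s σ with hle | hle
  · rw [Real.norm_of_nonneg (sub_nonneg.2 hle), mul_comm η]
    refine le_of_eq_of_le (congrArg norm ?_)
      (h.norm_sub_add_smul_le hs hle (by linarith) (hclose (by linarith [hσ.2])))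
    module
  · rw [Real.norm_of_nonpos (sub_nonpos.2 hle), mul_comm η, neg_sub, ← norm_neg]
    refine le_of_eq_of_le (congrArg norm ?_)
      (h.norm_sub_add_smul_le hσ0 hle hσ.1 (hclose (by linarith)))
    module

theorem hasDerivWithinAt [NeZero d] (h : P.IsLimitFlow ε τ X) (α : ℝᵈ) {s : ℝ} (hs : 0 ≤ s) :
    HasDerivWithinAt (X α)
      (-∫ y in (fun α => X α s) '' {α | P.Φ α < 0}, regKernel d 0 (X α s - y)) (Ici 0) s :=
  h.hasDerivWithinAt_of_tendsto_velocity hs (h.tendsto_velocity α s)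

end IsLimitFlow

end InitialPatch

/-! ### Boundary regularity -/

section DefiningFunctions

variable {γ C : ℝ} {D : Set (EuclideanSpace ℝ (Fin d))} {Φ : EuclideanSpace ℝ (Fin d) → ℝ}

lemma HasHolderGradient.frontier_setOf_neg {E : Type*} [NormedAddCommGroup E]
    [InnerProductSpace ℝ E] {F : E → ℝ} {g : E → E} (h : HasHolderGradient γ C F g)
    (hg : ∀ x, F x = 0 → g x ≠ 0) : frontier {x | F x < 0} = {x | F x = 0} := by
  refine (frontier_lt_subset_eq h.continuous continuous_const).antisymm fun x (hx : F x = 0) => ?_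
  rw [(isOpen_lt h.continuous continuous_const).frontier_eq]
  refine ⟨?_, fun hlt : F x < 0 => hlt.ne hx⟩
  by_contra hclosure
  have hmin : IsLocalMin F x := by
    filter_upwards [isClosed_closure.isOpen_compl.mem_nhds hclosure] with y hy
    rw [hx]
    exact not_lt.1 fun hlt => hy (subset_closure hlt)
  simpa [hg x hx] using DFunLike.congr_fun (hmin.hasFDerivAt_eq_zero (h.hasFDerivAt x)) (g x)

lemma HasHolderGradient.isC1Domain {g : ℝᵈ → ℝᵈ} (h : HasHolderGradient γ C Φ g)
    (hg : ∀ x, Φ x = 0 → g x ≠ 0) (hb : Bornology.IsBounded {x | Φ x < 0}) :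
    IsC1Domain d γ {x | Φ x < 0} := by
  have hfrontier := h.frontier_setOf_neg hg
  refine ⟨isOpen_lt h.continuous continuous_const, hb, Φ, h.contDiff, ⟨C, ?_⟩, rfl, hfrontier, ?_⟩
  · simpa only [h.gradient_eq] using h.holder
  · rw [hfrontier, h.gradient_eq]
    exact hg

lemma isCompact_setOf_nonpos_of_isDefining (hb : Bornology.IsBounded D)
    (hΦ : IsDefining d γ D Φ) : IsCompact {x | Φ x ≤ 0} := by
  obtain ⟨hC1, -, hD, hfrontier, -⟩ := hΦ
  refine hb.isCompact_closure.of_isClosed_subset (isClosed_le hC1.continuous continuous_const)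
    fun x (hx : Φ x ≤ 0) => ?_
  rcases hx.lt_or_eq with hlt | heq
  · exact subset_closure (hD ▸ hlt)
  · exact frontier_subset_closure (hfrontier ▸ heq)

lemma exists_forall_le_norm_gradient_of_isDefining (hb : Bornology.IsBounded D)
    (hΦ : IsDefining d γ D Φ) :
    ∃ c > 0, ∀ x, -c ≤ Φ x → Φ x ≤ 0 → c ≤ ‖gradient Φ x‖ := by
  have hcompact := isCompact_setOf_nonpos_of_isDefining hb hΦ
  obtain ⟨hC1, -, -, hfrontier, hne⟩ := hΦ
  have hcont : Continuous (gradient Φ) :=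
    (InnerProductSpace.toDual ℝ ℝᵈ).symm.continuous.comp (hC1.continuous_fderiv one_ne_zero)
  obtain ⟨c, hc, hmin⟩ := hcompact.exists_forall_le' (f := fun x => ‖gradient Φ x‖ + |Φ x|) (a := 0)
    (hcont.norm.add hC1.continuous.abs).continuousOn fun x _ => by
      by_cases hx : Φ x = 0
      · exact add_pos_of_pos_of_nonneg (norm_pos_iff.2 (hne x (hfrontier ▸ hx))) (abs_nonneg _)
      · exact add_pos_of_nonneg_of_pos (norm_nonneg _) (abs_pos.2 hx)
  refine ⟨c / 2, half_pos hc, fun x hx hx' => ?_⟩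
  have hle := hmin x hx'
  rw [abs_of_nonpos hx'] at hle
  linarith

lemma exists_initialPatch (hγ0 : 0 < γ) (hγ1 : γ < 1) (hb : Bornology.IsBounded D)
    (hne : D.Nonempty) (hΦ : IsDefining d γ D Φ) : ∃ P : InitialPatch d γ, P.Φ = Φ := by
  obtain ⟨R, hR⟩ :=
    (isCompact_setOf_nonpos_of_isDefining hb hΦ).isBounded.subset_closedBall (0 : ℝᵈ)
  obtain ⟨c, hc, hgrad⟩ := exists_forall_le_norm_gradient_of_isDefining hb hΦ
  obtain ⟨hC1, ⟨K, hK⟩, hD, -, -⟩ := hΦ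
  refine ⟨{
    Φ := Φ
    grad := gradient Φ
    holderConst := max K c
    gradMin := c
    width := c
    radius := max R 1
    exponent_pos := hγ0
    exponent_lt_one := hγ1
    hasFDerivAt x :=
      hasGradientAt_iff_hasFDerivAt.1 (hC1.differentiable one_ne_zero x).hasGradientAt
    holder x x' := (hK x x').trans (by gcongr; exact le_max_left _ _)
    gradMin_pos := hc
    gradMin_le := le_max_right _ _
    width_pos := hc
    radius_pos := by positivity
    norm_le x hx := (mem_closedBall_zero_iff.1 (hR hx)).trans (le_max_left _ _)
    gradMin_le_norm := hgrad
    exists_nonpos := hne.imp fun x hx => (hD ▸ hx : x ∈ {x | Φ x < 0}).le }, rfl⟩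

end DefiningFunctions

lemma InitialPatch.IsLimitFlow.isC1Domain_image [NeZero d] {γ : ℝ} {P : InitialPatch d γ}
    {ε τ : ℕ → ℝ} {X : ℝᵈ → ℝ → ℝᵈ} (h : P.IsLimitFlow ε τ X) (s : ℝ) :
    IsC1Domain d γ ((fun α => X α s) '' {α | P.Φ α < 0}) := by
  obtain ⟨S, hS⟩ := exists_nat_ge s
  obtain ⟨C, Ψ, G, hΨ, hG, hsign⟩ := h.exists_limitPotential s
  have himage : (fun α => X α s) '' {α | P.Φ α < 0} = {x | Ψ x < 0} := by
    rw [← image_preimage_eq {x | Ψ x < 0} (h.surjective s)]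
    congr! 1
    ext α
    change P.Φ α < 0 ↔ Ψ (X α s) < 0
    rw [← sign_eq_neg_one_iff, ← hsign, sign_eq_neg_one_iff]
  have hbounded : Bornology.IsBounded ((fun α => X α s) '' {α | P.Φ α < 0}) :=
    (h.lipschitzWith hS).isBounded_image ((isBounded_iff_forall_norm_le).2
      ⟨P.radius, fun α hα => P.norm_le α (le_of_lt hα)⟩)
  rw [himage] at hbounded ⊢
  exact hΨ.isC1Domain hG hbounded

theorem exists_flow_of_isC1Domain [NeZero d] {γ : ℝ} (hγ0 : 0 < γ) (hγ1 : γ < 1) {D₀ : Set ℝᵈ}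
    (hD₀ : IsC1Domain d γ D₀) :
    ∃ X : ℝᵈ → ℝ → ℝᵈ, (∀ α, X α 0 = α) ∧ (∀ s, IsHomeomorph fun α => X α s) ∧
      (∀ s, IsC1Domain d γ ((fun α => X α s) '' D₀)) ∧
      ∀ α, ∀ s, 0 ≤ s → HasDerivWithinAt (X α)
        (-∫ y in (fun α => X α s) '' D₀, regKernel d 0 (X α s - y)) (Ici 0) s := by
  rcases D₀.eq_empty_or_nonempty with rfl | hne
  · refine ⟨fun α _ => α, fun _ => rfl, fun _ => .id, fun _ => ?_, fun α s _ => ?_⟩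
    · rwa [image_empty]
    · simpa using hasDerivWithinAt_const s (Ici 0) α
  · obtain ⟨-, hb, Φ, hΦ⟩ := hD₀
    obtain ⟨P, rfl⟩ := exists_initialPatch hγ0 hγ1 hb hne hΦ
    obtain ⟨-, -, rfl, -, -⟩ := hΦ
    obtain ⟨ε, τ, X, h⟩ := P.exists_isLimitFlow
    exact ⟨X, h.apply_zero, h.isHomeomorph, h.isC1Domain_image,
      fun α s hs => h.hasDerivWithinAt α hs⟩

lemma gradN_eq_smul_regKernel (y : ℝᵈ) : gradN d y = (sphereVol d)⁻¹ • regKernel d 0 y := by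
  rw [gradN, regKernel, regNorm_zero, smul_smul, mul_inv]

section TimeChange

/-- The time change `-log (1 - t) / σ`, with `σ` the area of the unit sphere, which turns the flow
of the unnormalised kernel into the one of the aggregation equation. -/
noncomputable def rescaledTime (d : ℕ) (t : ℝ) : ℝ := -(sphereVol d)⁻¹ * Real.log (1 - t)

lemma rescaledTime_zero (d : ℕ) : rescaledTime d 0 = 0 := by simp [rescaledTime]

lemma rescaledTime_nonneg (d : ℕ) {t : ℝ} (ht : t ∈ Ico (0 : ℝ) 1) : 0 ≤ rescaledTime d t :=
  mul_nonneg_of_nonpos_of_nonpos (neg_nonpos.2 (inv_nonneg.2 (sphereVol_nonneg d)))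
    (Real.log_nonpos (by linarith [ht.2]) (by linarith [ht.1]))

lemma hasDerivAt_rescaledTime (d : ℕ) {t : ℝ} (ht : t < 1) :
    HasDerivAt (rescaledTime d) (1 / (1 - t) * (sphereVol d)⁻¹) t := by
  have hne : 1 - id t ≠ 0 := (sub_pos.2 ht).ne'
  refine ((((hasDerivAt_id t).const_sub 1).log hne).const_mul _).congr_deriv ?_
  simp only [id]
  ring

end TimeChange

end AggregationPatch

open AggregationPatch in
theorem aggregation_patch_boundary_regularity_general
    (d : ℕ) [NeZero d] (γ : ℝ) (hγ0 : 0 < γ) (hγ1 : γ < 1)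
    (D₀ : Set (EuclideanSpace ℝ (Fin d))) (hD₀ : IsC1Domain d γ D₀) :
    ∃ X : EuclideanSpace ℝ (Fin d) → ℝ → EuclideanSpace ℝ (Fin d),
      (∀ α, X α 0 = α) ∧
      (∀ t ∈ Set.Ico (0:ℝ) 1,
        (∃ h : EuclideanSpace ℝ (Fin d) ≃ₜ EuclideanSpace ℝ (Fin d),
            ∀ α, h α = X α t) ∧
        IsC1Domain d γ ((fun α => X α t) '' D₀)) ∧
      (∀ α : EuclideanSpace ℝ (Fin d), ∀ t ∈ Set.Ico (0:ℝ) 1,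
        HasDerivWithinAt (fun s => X α s)
          ((-(1 / (1 - t))) • ∫ y in (fun α => X α t) '' D₀, gradN d (X α t - y))
          (Set.Ico (0:ℝ) 1) t) := by
  obtain ⟨X, hX_zero, hX_homeo, hX_domain, hX_deriv⟩ := exists_flow_of_isC1Domain hγ0 hγ1 hD₀
  refine ⟨fun α t => X α (rescaledTime d t), fun α => ?_, fun t _ => ⟨?_, hX_domain _⟩,
    fun α t ht => ?_⟩
  · simp only [rescaledTime_zero, hX_zero]
  · exact ⟨(hX_homeo (rescaledTime d t)).homeomorph, fun _ => rfl⟩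
  · refine (HasDerivWithinAt.scomp t (hX_deriv α _ (rescaledTime_nonneg d ht))
      (hasDerivAt_rescaledTime d ht.2).hasDerivWithinAt
      fun _ => rescaledTime_nonneg d).congr_deriv ?_
    simp_rw [gradN_eq_smul_regKernel, integral_smul]
    rw [smul_neg, ← neg_smul, ← neg_mul, mul_smul]

/-- Theorem 1.1: boundary regularity of aggregation patches up to the blowup time. -/
theorem aggregation_patch_boundary_regularity
    (d : ℕ) (hd : 2 ≤ d) (γ : ℝ) (hγ0 : 0 < γ) (hγ1 : γ < 1)
    (D₀ : Set (EuclideanSpace ℝ (Fin d))) (hD₀ : IsC1Domain d γ D₀) :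
    ∃ X : EuclideanSpace ℝ (Fin d) → ℝ → EuclideanSpace ℝ (Fin d),
      (∀ α, X α 0 = α) ∧
      (∀ t ∈ Set.Ico (0:ℝ) 1,
        (∃ h : EuclideanSpace ℝ (Fin d) ≃ₜ EuclideanSpace ℝ (Fin d),
            ∀ α, h α = X α t) ∧
        IsC1Domain d γ ((fun α => X α t) '' D₀)) ∧
      (∀ α : EuclideanSpace ℝ (Fin d), ∀ t ∈ Set.Ico (0:ℝ) 1,
        HasDerivWithinAt (fun s => X α s)
          ((-(1 / (1 - t))) • ∫ y in (fun α => X α t) '' D₀, gradN d (X α t - y))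
          (Set.Ico (0:ℝ) 1) t) := by
  have : NeZero d := ⟨by lia⟩
  exact aggregation_patch_boundary_regularity_general d γ hγ0 hγ1 D₀ hD₀
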